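/- arXiv:2410.04532 — 2 statements merged into one kernel-verified Lean document; each statement's English description precedes it below -/
import Mathlib

section
/- Let d ≥ 1 be an integer, r > 2, α > 0, K ≥ 1, and s ≥ 1 real numbers. Let X̂ : ℝ^d → [0,1] be a continuously differentiable function with X̂(x) = 1 for |x| ≤ 1/2 and X̂(x) = 0 for |x| ≥ 2/3, and let X̃ : ℝ^d → [0,1] be continuous with X̃(x) = 0 for |x| ≤ 1/8 and X̃(x) = 1 for |x| ≥ 1/4. Let Ψ_p, S_p : ℝ^d → ℝ be continuously differentiable with |Ψ_p(y)| ≤ K⟨y⟩^{−(r−2)}, |∇Ψ_p(y)| ≤ K⟨y⟩^{−(r−1)}, and |S_p(y)| ≤ K⟨y⟩^{−(r−1)} for all y, where ⟨y⟩ = (1+|y|²)^{1/2}. Define E_Ψ(y) := |∇Ψ_p(y)|²( X̂(ye^{−s}) − X̂(ye^{−s})² ) + α S_p(y)²( X̂(ye^{−s}) − X̂(ye^{−s})² ) − Ψ_p(y)² |∇X̂(ye^{−s})|² e^{−2s} − α e^{−2(r−1)s} X̃(ye^{−s})² − 2Ψ_p(y) ( ∇Ψ_p(y)·∇X̂(ye^{−s})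 ) X̂(ye^{−s}) e^{−s} − 2α e^{−(r−1)s} X̃(ye^{−s}) S_p(y) X̂(ye^{−s}). Then there is a constant C, depending only on d, r, α, K and the supremum of |∇X̂|, such that for every y ∈ ℝ^d with |y| ≤ √d · e^{s}: |E_Ψ(y)| ≤ C · 1_{|y| ≥ e^{s}/8} · ⟨y⟩^{−2(r−1)}, where 1_{|y| ≥ e^{s}/8} equals 1 if |y| ≥ e^{s}/8 and 0 otherwise. -/
open scoped RealInnerProductSpace

noncomputable section

theorem aux_bound (α K M L P G a S g e2 X T p i q : ℝ) (hα : 0 < α) (hK : 1 ≤ K) (hM : 0 ≤ M)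
    (hL : 0 ≤ L) (hP : 0 ≤ P) (hG : 0 ≤ G) (ha0 : 0 ≤ a) (ha : a ≤ K * G) (hS : |S| ≤ K * G)
    (hg0 : 0 ≤ g) (hg : g ≤ M) (hX0 : 0 ≤ X) (hX1 : X ≤ 1) (hT0 : 0 ≤ T) (hT1 : T ≤ 1)
    (he : |p * e2| ≤ K * L * G) (hi : |i| ≤ a * g) (hq0 : 0 ≤ q) (hq : q ≤ P * G) :
    |a ^ 2 * (X - X ^ 2) + α * S ^ 2 * (X - X ^ 2) - p ^ 2 * g ^ 2 * e2 ^ 2 - α * q ^ 2 * T ^ 2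
      - 2 * p * i * X * e2 - 2 * α * q * T * S * X| ≤
    (K ^ 2 + α * K ^ 2 + K ^ 2 * L ^ 2 * M ^ 2 + α * P ^ 2 + 2 * K ^ 2 * L * M + 2 * α * P * K)
      * G ^ 2 := by
  have hK0 : 0 ≤ K := by linarith
  have hY0 : 0 ≤ X - X ^ 2 := by nlinarith
  have hY1 : X - X ^ 2 ≤ 1 := by nlinarith
  have h1 : |a ^ 2 * (X - X ^ 2)| ≤ (K * G) ^ 2 * 1 := by
    rw [abs_of_nonneg (by positivity)]; gcongr
  have hS2 : S ^ 2 ≤ (K * G) ^ 2 := by rw [← sq_abs]; gcongr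
  have h2 : |α * S ^ 2 * (X - X ^ 2)| ≤ α * (K * G) ^ 2 * 1 := by
    rw [abs_of_nonneg (by positivity)]; gcongr
  have hp2 : (p * e2) ^ 2 ≤ (K * L * G) ^ 2 := by rw [← sq_abs]; gcongr
  have h3 : |p ^ 2 * g ^ 2 * e2 ^ 2| ≤ (K * L * G) ^ 2 * M ^ 2 := by
    rw [abs_of_nonneg (by positivity), show p ^ 2 * g ^ 2 * e2 ^ 2 = (p * e2) ^ 2 * g ^ 2 by ring]
    gcongr
  have h4 : |α * q ^ 2 * T ^ 2| ≤ α * (P * G) ^ 2 * 1 ^ 2 := by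
    rw [abs_of_nonneg (by positivity)]; gcongr
  have hi' : |i| ≤ K * G * M := hi.trans (by gcongr)
  have h5 : |2 * p * i * X * e2| ≤ 2 * (K * L * G) * (K * G * M) * 1 := by
    rw [show 2 * p * i * X * e2 = 2 * (p * e2) * i * X by ring, abs_mul, abs_mul, abs_mul,
      abs_of_nonneg hX0, abs_two]
    gcongr
  have h6 : |2 * α * q * T * S * X| ≤ 2 * α * (P * G) * 1 * (K * G) * 1 := by
    rw [abs_mul, abs_mul, abs_of_nonneg hX0, abs_of_nonneg (show 0 ≤ 2 * α * q * T by positivity)]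
    gcongr
  rw [abs_le] at *
  constructor <;> nlinarith

/-- estimate for the error term `E_Ψ` produced by damping the self-similar
profile with the cut-offs `X̂, X̃`. The constant `C` depends only on `d, r, α, K` and the bound
`M` on `|∇X̂|`, and the estimate holds on `|y| ≤ √d e^s` with the factor `1_{|y| ≥ e^s/8}`. -/
theorem stmt3 (d : ℕ) (hd : 1 ≤ d) (r α K M : ℝ) (hr : 2 < r) (hα : 0 < α) (hK : 1 ≤ K)
    (hM : 0 ≤ M) :
    ∃ C : ℝ, 0 < C ∧ ∀ s : ℝ, 1 ≤ s →
      ∀ Xhat Xtil Ψp Sp : EuclideanSpace ℝ (Fin d) → ℝ,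
        ContDiff ℝ 1 Xhat →
        (∀ x, Xhat x ∈ Set.Icc (0 : ℝ) 1) →
        (∀ x : EuclideanSpace ℝ (Fin d), ‖x‖ ≤ 1 / 2 → Xhat x = 1) →
        (∀ x : EuclideanSpace ℝ (Fin d), 2 / 3 ≤ ‖x‖ → Xhat x = 0) →
        (∀ x, ‖gradient Xhat x‖ ≤ M) →
        Continuous Xtil →
        (∀ x, Xtil x ∈ Set.Icc (0 : ℝ) 1) →
        (∀ x : EuclideanSpace ℝ (Fin d), ‖x‖ ≤ 1 / 8 → Xtil x = 0) →
        (∀ x : EuclideanSpace ℝ (Fin d), 1 / 4 ≤ ‖x‖ → Xtil x = 1) →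
        ContDiff ℝ 1 Ψp → ContDiff ℝ 1 Sp →
        (∀ y : EuclideanSpace ℝ (Fin d),
          |Ψp y| ≤ K * Real.sqrt (1 + ‖y‖ ^ 2) ^ (-(r - 2))) →
        (∀ y : EuclideanSpace ℝ (Fin d),
          ‖gradient Ψp y‖ ≤ K * Real.sqrt (1 + ‖y‖ ^ 2) ^ (-(r - 1))) →
        (∀ y : EuclideanSpace ℝ (Fin d),
          |Sp y| ≤ K * Real.sqrt (1 + ‖y‖ ^ 2) ^ (-(r - 1))) →
        ∀ y : EuclideanSpace ℝ (Fin d), ‖y‖ ≤ Real.sqrt d * Real.exp s →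
          |‖gradient Ψp y‖ ^ 2 *
                (Xhat (Real.exp (-s) • y) - Xhat (Real.exp (-s) • y) ^ 2)
              + α * Sp y ^ 2 *
                (Xhat (Real.exp (-s) • y) - Xhat (Real.exp (-s) • y) ^ 2)
              - Ψp y ^ 2 * ‖gradient Xhat (Real.exp (-s) • y)‖ ^ 2 * Real.exp (-2 * s)
              - α * Real.exp (-2 * (r - 1) * s) * Xtil (Real.exp (-s) • y) ^ 2
              - 2 * Ψp y * ⟪gradient Ψp y, gradient Xhat (Real.exp (-s) • y)⟫ *
                  Xhat (Real.exp (-s) • y) * Real.exp (-s)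
              - 2 * α * Real.exp (-(r - 1) * s) * Xtil (Real.exp (-s) • y) * Sp y *
                  Xhat (Real.exp (-s) • y)|
            ≤ C * (if Real.exp s / 8 ≤ ‖y‖ then (1 : ℝ) else 0) *
                Real.sqrt (1 + ‖y‖ ^ 2) ^ (-(2 * (r - 1))) := by
  set L : ℝ := 1 + Real.sqrt d with hLdef
  have hL : 0 < L := by positivity
  set P : ℝ := L ^ (r - 1) with hPdef
  have hP : 0 < P := Real.rpow_pos_of_pos hL _
  refine ⟨K ^ 2 + α * K ^ 2 + K ^ 2 * L ^ 2 * M ^ 2 + α * P ^ 2 + 2 * K ^ 2 * L * M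
    + 2 * α * P * K, by positivity, ?_⟩
  intro s hs Xhat Xtil Ψp Sp _ hX hXone _ hgX _ hT hT0 _ _ _ hΨ hgΨ hS y hy
  have hnx : ‖Real.exp (-s) • y‖ = Real.exp (-s) * ‖y‖ := by
    rw [norm_smul, Real.norm_of_nonneg (Real.exp_pos _).le]
  have hee : Real.exp (-s) * Real.exp s = 1 := by rw [← Real.exp_add]; simp
  split_ifs with hcase
  · set J : ℝ := Real.sqrt (1 + ‖y‖ ^ 2) with hJ
    have hJ0 : 0 < J := by positivity
    have hJL : J ≤ L * Real.exp s := by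
      have h1 : J ≤ 1 + ‖y‖ := by
        rw [hJ]; apply Real.sqrt_le_iff.2
        constructor
        · positivity
        · nlinarith [norm_nonneg y]
      have h2 : 1 ≤ Real.exp s := Real.one_le_exp (by linarith)
      rw [hLdef]; linarith
    have hG0 : 0 < J ^ (-(r - 1)) := Real.rpow_pos_of_pos hJ0 _
    have hJG : J ^ (-(r - 2)) = J * J ^ (-(r - 1)) := by
      rw [show -(r - 2) = 1 + -(r - 1) by ring, Real.rpow_add hJ0, Real.rpow_one]
    have hG2 : J ^ (-(2 * (r - 1))) = (J ^ (-(r - 1))) ^ 2 := by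
      rw [← Real.rpow_natCast, ← Real.rpow_mul hJ0.le]; congr 1; push_cast; ring
    have he2 : Real.exp (-2 * s) = Real.exp (-s) ^ 2 := by
      rw [← Real.exp_nat_mul]; congr 1; push_cast; ring
    have hq2 : Real.exp (-2 * (r - 1) * s) = Real.exp (-(r - 1) * s) ^ 2 := by
      rw [← Real.exp_nat_mul]; congr 1; push_cast; ring
    have hq : Real.exp (-(r - 1) * s) ≤ P * J ^ (-(r - 1)) := by
      have h1 : J ^ (r - 1) ≤ P * Real.exp ((r - 1) * s) := by
        have := Real.rpow_le_rpow hJ0.le hJL (show 0 ≤ r - 1 by linarith)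
        rwa [Real.mul_rpow hL.le (Real.exp_pos _).le, ← Real.exp_mul, mul_comm s] at this
      rw [Real.rpow_neg hJ0.le, neg_mul, Real.exp_neg, ← div_eq_mul_inv,
        le_div_iff₀ (Real.rpow_pos_of_pos hJ0 _), inv_mul_le_iff₀ (Real.exp_pos _)]
      linarith
    have hp : |Ψp y * Real.exp (-s)| ≤ K * L * J ^ (-(r - 1)) := by
      have h1 := hΨ y
      rw [← hJ, hJG] at h1
      have h2 : Real.exp (-s) * J ≤ L := by
        calc Real.exp (-s) * J ≤ Real.exp (-s) * (L * Real.exp s) := by gcongr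
          _ = L * (Real.exp (-s) * Real.exp s) := by ring
          _ = L := by rw [hee, mul_one]
      rw [abs_mul, abs_of_pos (Real.exp_pos _)]
      calc |Ψp y| * Real.exp (-s) ≤ (K * (J * J ^ (-(r - 1)))) * Real.exp (-s) := by gcongr
        _ = K * (Real.exp (-s) * J) * J ^ (-(r - 1)) := by ring
        _ ≤ _ := by gcongr
    rw [hG2, he2, hq2, mul_one]
    exact aux_bound α K M L P (J ^ (-(r - 1))) _ _ _ _ _ _ _ _ _ hα hK hM hL.le hP.le hG0.le
      (norm_nonneg _) (hgΨ y) (hS y) (norm_nonneg _) (hgX _) (hX _).1 (hX _).2 (hT _).1 (hT _).2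
      hp (abs_real_inner_le_norm _ _) (Real.exp_pos _).le hq
  · have hx : ‖Real.exp (-s) • y‖ < 1 / 8 := by
      rw [hnx]
      have := mul_lt_mul_of_pos_left (not_le.1 hcase) (Real.exp_pos (-s))
      linarith
    have hg : gradient Xhat (Real.exp (-s) • y) = 0 := by
      have : Xhat =ᶠ[nhds (Real.exp (-s) • y)] fun _ => (1 : ℝ) := by
        filter_upwards [continuous_norm.continuousAt.eventually_lt_const hx] with z hz
        exact hXone z (by linarith)
      rw [gradient, this.fderiv_eq]; simp
    rw [hg, hXone _ (by linarith), hT0 _ hx.le]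
    simp
end
end

section
/- Let d ≥ 1 be an integer and let f : ℝ^d → ℝ be a smooth compactly supported function. Let 1 ≤ i ≤ m be integers, let p, q ∈ [1,∞], r̄ ∈ [1,∞), θ ∈ [i/m, 1), and suppose 1/r̄ = i/d + θ(1/q − m/d) + (1−θ)/p. Let I_{−1} = [0,1] and I_j = [2^{j}, 2^{j+1}] for j ≥ 0. Let φ, ψ : ℝ^d → [0,∞) be weights for which there exist values φ_j, ψ_j (j ≥ −1) and a constant C ≥ 1 with φ(x) ∈ [φ_j/C, Cφ_j] and ψ(x) ∈ [ψ_j/C, Cψ_j] whenever |x| ∈ I_j, and with φ_{−1} = ψ_{−1} = φ_0 = ψ_0 = 1. Assume moreover there is ε > 0 with ( φ(x)/(⟨x⟩ψ(x)) )^{mθ} ⟨x⟩^{dθ(1/q − 1/p)} ≤ C ⟨x⟩^{−ε} for all x, where ⟨x⟩ = (1+|x|²)^{1/2}. Then there exists a constant C′ depending only on d, p, q, i, m, θ, C, ε (and not on f, φ, ψ) such that ‖ ψ^{m(1−θ)} φ^{mθ} |∇^i f| ‖_{L^{r̄}(ℝ^d)} ≤ C′ ( ‖ψ^m f‖_{L^p(ℝ^d)}^{1−θ}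 ‖ φ^m |∇^m f| ‖_{L^q(ℝ^d)}^{θ} + ‖ψ^m f‖_{L^p(ℝ^d)} ). -/
open MeasureTheory
open scoped ENNReal

noncomputable section

theorem greedy_step (H F G : ℝ → ℝ → ℝ) (P Q r M Fm : ℝ)
    (hr : 1 ≤ r) (hPQ : r * (P + Q) = 2) (hP : 0 ≤ P) (hQ : 0 ≤ Q) (hQ1 : Q ≤ 1)
    (hF0 : ∀ x y, 0 ≤ F x y) (hG0 : ∀ x y, 0 ≤ G x y) (hM : 0 ≤ M)
    (hFc : ∀ x, Continuous (F x)) (hGc : ∀ x, Continuous (G x))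
    (hFm : ∀ x y, F x y ≤ Fm) (hGM : ∀ x y, x ≤ y → G x y ≤ M * (y - x) ^ Q)
    (hloc : ∀ x y, x < y → H x y ≤
      (y - x) * (6 * ((y - x) ^ (-1 - P) * F x y) + (y - x) ^ (1 - Q) * G x y) ^ r)
    (x l₀ δ : ℝ) (hl : 0 < l₀) (hδ : 0 < δ) (hsmall : l₀ * (7 * (M * l₀)) ^ r ≤ δ) :
    ∃ y, x + l₀ ≤ y ∧ H x y ≤ 7 ^ r * (F x y * G x y) ^ (r / 2) + δ := by
  have hr0 : 0 < r := by linarith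
  have hFm0 : 0 ≤ Fm := (hF0 0 0).trans (hFm 0 0)
  set A : ℝ → ℝ := fun l => l ^ (-1 - P) * F x (x + l) with hA
  set B : ℝ → ℝ := fun l => l ^ (1 - Q) * G x (x + l) with hB
  have hA0 : ∀ l, 0 < l → 0 ≤ A l := fun l h => mul_nonneg (Real.rpow_nonneg h.le _) (hF0 _ _)
  have hB0 : ∀ l, 0 < l → 0 ≤ B l := fun l h => mul_nonneg (Real.rpow_nonneg h.le _) (hG0 _ _)
  have hloc' : ∀ l, 0 < l → H x (x + l) ≤ l * (6 * A l + B l) ^ r := by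
    intro l h
    have := hloc x (x + l) (by linarith)
    simpa [hA, hB] using this
  have hprod0 : ∀ y, 0 ≤ 7 ^ r * (F x y * G x y) ^ (r / 2) := fun y =>
    mul_nonneg (by positivity) (Real.rpow_nonneg (mul_nonneg (hF0 _ _) (hG0 _ _)) _)
  by_cases h1 : A l₀ ≤ B l₀
  · refine ⟨x + l₀, le_rfl, ?_⟩
    have h2 : B l₀ ≤ M * l₀ := by
      have := hGM x (x + l₀) (by linarith)
      simp only [add_sub_cancel_left] at this
      calc B l₀ ≤ l₀ ^ (1 - Q) * (M * l₀ ^ Q) := by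
            simp only [hB]; gcongr
        _ = M * (l₀ ^ (1 - Q) * l₀ ^ Q) := by ring
        _ = M * l₀ := by rw [← Real.rpow_add hl]; simp
    have h3 : H x (x + l₀) ≤ l₀ * (7 * (M * l₀)) ^ r := by
      refine (hloc' l₀ hl).trans ?_
      have := hA0 l₀ hl
      have := hB0 l₀ hl
      gcongr
      linarith
    have := hprod0 (x + l₀)
    linarith
  push Not at h1
  by_cases h2 : ∃ l, l₀ ≤ l ∧ A l ≤ B l
  · obtain ⟨l1, hl1, hAB⟩ := h2
    have hcA : ContinuousOn A (Set.Icc l₀ l1) := by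
      intro l hlm
      have : l ≠ 0 := by have := hlm.1; linarith
      refine ContinuousAt.continuousWithinAt ?_
      exact (Real.continuousAt_rpow_const _ _ (Or.inl this)).mul
        ((hFc x).comp (continuous_const.add continuous_id)).continuousAt
    have hcB : ContinuousOn B (Set.Icc l₀ l1) := by
      intro l hlm
      have : l ≠ 0 := by have := hlm.1; linarith
      refine ContinuousAt.continuousWithinAt ?_
      exact (Real.continuousAt_rpow_const _ _ (Or.inl this)).mul
        ((hGc x).comp (continuous_const.add continuous_id)).continuousAt
    have hiv := intermediate_value_Icc hl1 (hcB.sub hcA)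
    obtain ⟨l, hlm, hle⟩ := hiv (show (0:ℝ) ∈ _ from ⟨by simp; linarith, by simp; linarith⟩)
    have hAB' : B l = A l := by simpa [sub_eq_zero] using hle
    have hlp : 0 < l := by have := hlm.1; linarith
    refine ⟨x + l, by have := hlm.1; linarith, ?_⟩
    have h3 : l * (6 * A l + B l) ^ r = 7 ^ r * (F x (x + l) * G x (x + l)) ^ (r / 2) := by
      have e1 : 6 * A l + B l = 7 * A l := by rw [hAB']; ring
      have e2 : A l ^ r = (A l * B l) ^ (r / 2) := by
        rw [hAB', ← sq, ← Real.rpow_natCast, ← Real.rpow_mul (hA0 l hlp)]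
        congr 1; push_cast; ring
      have e3 : A l * B l = l ^ (-(P + Q)) * (F x (x + l) * G x (x + l)) := by
        simp only [hA, hB]
        rw [show -(P + Q) = (-1 - P) + (1 - Q) by ring, Real.rpow_add hlp]; ring
      rw [e1, Real.mul_rpow (by norm_num) (hA0 l hlp), e2, e3,
        Real.mul_rpow (Real.rpow_nonneg hlp.le _) (mul_nonneg (hF0 _ _) (hG0 _ _)),
        ← Real.rpow_mul hlp.le, show -(P + Q) * (r / 2) = -1 by linarith, Real.rpow_neg_one]
      field_simp
    have := hloc' l hlp
    linarith
  · push Not at h2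
    have hexp : 0 < r + r * P - 1 := by nlinarith
    have htend : Filter.Tendsto (fun l : ℝ => (7 * Fm) ^ r * l ^ (-(r + r * P - 1)))
        Filter.atTop (nhds ((7 * Fm) ^ r * 0)) :=
      (tendsto_rpow_neg_atTop hexp).const_mul _
    rw [mul_zero] at htend
    obtain ⟨l, hlδ, hll⟩ := ((htend.eventually (gt_mem_nhds hδ)).and
      (Filter.eventually_ge_atTop l₀)).exists
    have hlp : 0 < l := by linarith
    refine ⟨x + l, by linarith, ?_⟩
    have h3 : H x (x + l) ≤ (7 * Fm) ^ r * l ^ (-(r + r * P - 1)) := by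
      refine (hloc' l hlp).trans ?_
      have hb := h2 l hll
      have := hA0 l hlp
      have := hB0 l hlp
      have hA1 : A l ≤ l ^ (-1 - P) * Fm := by
        simp only [hA]; gcongr; exact hFm _ _
      calc l * (6 * A l + B l) ^ r ≤ l * ((7 * Fm) * l ^ (-1 - P)) ^ r := by
            gcongr; linarith
        _ = (7 * Fm) ^ r * (l ^ (1:ℝ) * l ^ ((-1 - P) * r)) := by
            rw [Real.mul_rpow (by positivity) (by positivity), ← Real.rpow_mul hlp.le,
              Real.rpow_one]; ring
        _ = _ := by rw [← Real.rpow_add hlp]; congr 2; ring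
    have := hprod0 (x + l)
    linarith

theorem greedy (H F G : ℝ → ℝ → ℝ) (P Q r M Fm : ℝ)
    (hr : 1 ≤ r) (hPQ : r * (P + Q) = 2) (hP : 0 ≤ P) (hQ : 0 ≤ Q) (hQ1 : Q ≤ 1)
    (hF0 : ∀ x y, 0 ≤ F x y) (hG0 : ∀ x y, 0 ≤ G x y) (hM : 0 ≤ M)
    (hFc : ∀ x, Continuous (F x)) (hGc : ∀ x, Continuous (G x))
    (hFm : ∀ x y, F x y ≤ Fm) (hGM : ∀ x y, x ≤ y → G x y ≤ M * (y - x) ^ Q)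
    (hadd : ∀ x y z, H x y + H y z = H x z)
    (hloc : ∀ x y, x < y → H x y ≤
      (y - x) * (6 * ((y - x) ^ (-1 - P) * F x y) + (y - x) ^ (1 - Q) * G x y) ^ r)
    (hsup : ∀ x y z, x ≤ y → y ≤ z → (F x y * G x y) ^ (r / 2) + (F y z * G y z) ^ (r / 2)
      ≤ (F x z * G x z) ^ (r / 2))
    (x₀ L δ : ℝ) (hL : 0 < L) (hδ : 0 < δ) :
    ∃ y, x₀ + L ≤ y ∧ H x₀ y ≤ 7 ^ r * (F x₀ y * G x₀ y) ^ (r / 2) + δ := by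
  have hr0 : 0 < r := by linarith
  -- choose number of steps
  have htend : Filter.Tendsto (fun n : ℕ => L * (7 * (M * (L / (n:ℝ)))) ^ r)
      Filter.atTop (nhds (L * (7 * (M * 0)) ^ r)) := by
    have h0 : Filter.Tendsto (fun n : ℕ => L / (n:ℝ)) Filter.atTop (nhds 0) :=
      tendsto_const_div_atTop_nhds_zero_nat L
    exact (((h0.const_mul M).const_mul 7).rpow_const (Or.inr hr0.le)).const_mul L
  have e0 : L * (7 * (M * 0)) ^ r = 0 := by simp [Real.zero_rpow hr0.ne']
  rw [e0] at htend
  obtain ⟨n, hn, hn1⟩ := ((htend.eventually (gt_mem_nhds hδ)).and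
      (Filter.eventually_ge_atTop 1)).exists
  have hn0 : (0:ℝ) < n := by exact_mod_cast hn1
  have key : ∀ k : ℕ, ∃ y, x₀ + k * (L / n) ≤ y ∧ x₀ ≤ y ∧
      H x₀ y ≤ 7 ^ r * (F x₀ y * G x₀ y) ^ (r / 2) + k * (δ / n) := by
    intro k
    induction k with
    | zero =>
      refine ⟨x₀, by simp, le_rfl, ?_⟩
      have h1 := hadd x₀ x₀ x₀
      have : 0 ≤ 7 ^ r * (F x₀ x₀ * G x₀ x₀) ^ (r / 2) :=
        mul_nonneg (by positivity) (Real.rpow_nonneg (mul_nonneg (hF0 _ _) (hG0 _ _)) _)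
      simp; linarith
    | succ k ih =>
      obtain ⟨y, hy1, hy0, hy2⟩ := ih
      obtain ⟨z, hz1, hz2⟩ := greedy_step H F G P Q r M Fm hr hPQ hP hQ hQ1 hF0 hG0 hM hFc hGc
        hFm hGM hloc y (L / n) (δ / n) (by positivity) (by positivity) (by
          rw [div_mul_eq_mul_div]; gcongr)
      have hpos : 0 < L / n := by positivity
      refine ⟨z, by push_cast; linarith, by linarith, ?_⟩
      have h7 : (0:ℝ) < 7 ^ r := by positivity
      have := mul_le_mul_of_nonneg_left (hsup x₀ y z hy0 (by linarith)) h7.le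
      rw [mul_add] at this
      rw [← hadd x₀ y z]
      push_cast
      linarith
  obtain ⟨y, hy1, _, hy2⟩ := key n
  refine ⟨y, ?_, ?_⟩
  · rw [mul_div_cancel₀ _ hn0.ne'] at hy1; exact hy1
  · rw [mul_div_cancel₀ _ hn0.ne'] at hy2; exact hy2

theorem loc1 (u : ℝ → ℝ) (hu : ContDiff ℝ 2 u) (x y t : ℝ) (hxy : x < y)
    (ht : t ∈ Set.Icc x y) :
    |deriv u t| ≤ 6 / (y - x) ^ 2 * (∫ s in x..y, |u s|) + ∫ s in x..y, |deriv (deriv u) s| := by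
  have hl : 0 < y - x := by linarith
  have hu1 : ContDiff ℝ 1 (deriv u) := by
    have : ContDiff ℝ (1 + 1) u := by simpa [one_add_one_eq_two] using hu
    exact (contDiff_succ_iff_deriv.1 this).2.2
  have hcu : Continuous u := hu.continuous
  have hcu1 : Continuous (deriv u) := hu1.continuous
  have hcu2 : Continuous (deriv (deriv u)) := hu1.continuous_deriv le_rfl
  set w : ℝ → ℝ := fun s => 6 * ((s - x) * (y - s)) / (y - x) ^ 3 with hw
  set w' : ℝ → ℝ := fun s => 6 * (x + y - 2 * s) / (y - x) ^ 3 with hw'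
  have hwd : ∀ s, HasDerivAt w (w' s) s := by
    intro s
    have h1 : HasDerivAt (fun s => (s - x) * (y - s)) (1 * (y - s) + (s - x) * (-1)) s :=
      ((hasDerivAt_id s).sub_const x).mul ((hasDerivAt_id s).const_sub y)
    have h2 := (h1.const_mul 6).div_const ((y - x) ^ 3)
    exact h2.congr_deriv (by simp only [hw']; ring)
  have hcw : Continuous w := by simp only [hw]; fun_prop
  have hcw' : Continuous w' := by simp only [hw']; fun_prop
  have hw1 : ∫ s in x..y, w s = 1 := by
    have hd : ∀ s ∈ Set.uIcc x y, HasDerivAt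
        (fun s => (3 * (y - x) * (s - x) ^ 2 - 2 * (s - x) ^ 3) / (y - x) ^ 3) (w s) s := by
      intro s _
      have h0 := (hasDerivAt_id s).sub_const x
      have h1 := (((h0.pow 2).const_mul (3 * (y - x))).sub ((h0.pow 3).const_mul 2)).div_const
        ((y - x) ^ 3)
      exact h1.congr_deriv (by simp only [hw]; simp; ring)
    rw [intervalIntegral.integral_eq_sub_of_hasDerivAt hd (hcw.intervalIntegrable _ _)]
    field_simp; ring
  have hib : ∫ s in x..y, w s * deriv u s = - ∫ s in x..y, w' s * u s := by
    rw [intervalIntegral.integral_mul_deriv_eq_deriv_mul (u := w) (u' := w') (v := u)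
      (v' := deriv u) (fun s _ => hwd s)
      (fun s _ => ((hu.differentiable (by norm_num)) s).hasDerivAt) (hcw'.intervalIntegrable _ _)
      (hcu1.intervalIntegrable _ _)]
    simp [hw]
  set S := ∫ s in x..y, |deriv (deriv u) s| with hS
  have hdiff : ∀ s ∈ Set.Icc x y, |deriv u t - deriv u s| ≤ S := by
    intro s hs
    have : deriv u t - deriv u s = ∫ z in s..t, deriv (deriv u) z := by
      rw [intervalIntegral.integral_deriv_eq_sub (fun z _ => (hu1.differentiable (by norm_num)) z)
        (hcu2.intervalIntegrable _ _)]
    rw [this]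
    have h1 : |∫ z in s..t, deriv (deriv u) z| ≤ ∫ z in Set.uIoc s t, |deriv (deriv u) z| := by
      simpa using intervalIntegral.norm_integral_le_integral_norm_uIoc
        (f := deriv (deriv u)) (a := s) (b := t) (μ := volume)
    refine h1.trans ?_
    rw [hS, intervalIntegral.integral_of_le hxy.le]
    refine setIntegral_mono_set ?_ ?_ ?_
    · exact ((hcu2.abs.intervalIntegrable x y).1)
    · exact Filter.Eventually.of_forall fun z => abs_nonneg _
    · refine LE.le.eventuallyLE ?_
      intro z hz
      rcases Set.mem_uIoc.1 hz with h | h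
      · exact ⟨by linarith [hs.1, h.1], by linarith [ht.2, h.2]⟩
      · exact ⟨by linarith [ht.1, h.1], by linarith [hs.2, h.2]⟩
  have hdec : deriv u t = (∫ s in x..y, w s * (deriv u t - deriv u s))
      + ∫ s in x..y, w s * deriv u s := by
    rw [← intervalIntegral.integral_add]
    · have : ∀ s, w s * (deriv u t - deriv u s) + w s * deriv u s = w s * deriv u t := by
        intro s; ring
      simp_rw [this]
      rw [intervalIntegral.integral_mul_const, hw1, one_mul]
    · exact (hcw.mul (continuous_const.sub hcu1)).intervalIntegrable _ _
    · exact (hcw.mul hcu1).intervalIntegrable _ _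
  have hwnn : ∀ s ∈ Set.Icc x y, 0 ≤ w s := by
    intro s hs
    have := sub_nonneg.2 hs.1
    have := sub_nonneg.2 hs.2
    simp only [hw]; positivity
  have hb1 : |∫ s in x..y, w s * (deriv u t - deriv u s)| ≤ S := by
    calc |∫ s in x..y, w s * (deriv u t - deriv u s)|
        ≤ ∫ s in x..y, |w s * (deriv u t - deriv u s)| :=
          intervalIntegral.abs_integral_le_integral_abs hxy.le
      _ ≤ ∫ s in x..y, w s * S := by
          refine intervalIntegral.integral_mono_on hxy.le ?_ ?_ ?_
          · exact (hcw.mul (continuous_const.sub hcu1)).abs.intervalIntegrable _ _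
          · exact (hcw.mul continuous_const).intervalIntegrable _ _
          · intro s hs
            rw [abs_mul, abs_of_nonneg (hwnn s hs)]
            exact mul_le_mul_of_nonneg_left (hdiff s hs) (hwnn s hs)
      _ = S := by rw [intervalIntegral.integral_mul_const, hw1, one_mul]
  have hb2 : |∫ s in x..y, w' s * u s| ≤ 6 / (y - x) ^ 2 * ∫ s in x..y, |u s| := by
    calc |∫ s in x..y, w' s * u s| ≤ ∫ s in x..y, |w' s * u s| :=
          intervalIntegral.abs_integral_le_integral_abs hxy.le
      _ ≤ ∫ s in x..y, 6 / (y - x) ^ 2 * |u s| := by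
          refine intervalIntegral.integral_mono_on hxy.le ?_ ?_ ?_
          · exact (hcw'.mul hcu).abs.intervalIntegrable _ _
          · exact (continuous_const.mul hcu.abs).intervalIntegrable _ _
          · intro s hs
            rw [abs_mul]
            refine mul_le_mul_of_nonneg_right ?_ (abs_nonneg _)
            simp only [hw']
            rw [abs_div, abs_mul, abs_of_pos (by positivity : (0:ℝ) < (y - x) ^ 3),
              div_le_div_iff₀ (by positivity) (by positivity)]
            have : |x + y - 2 * s| ≤ y - x := by
              rw [abs_le]; constructor <;> linarith [hs.1, hs.2]
            have h6 : |(6:ℝ)| = 6 := by norm_num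
            rw [h6]
            calc 6 * |x + y - 2 * s| * (y - x) ^ 2 ≤ 6 * (y - x) * (y - x) ^ 2 := by gcongr
              _ = 6 * (y - x) ^ 3 := by ring
      _ = _ := by rw [intervalIntegral.integral_const_mul]
  rw [hdec, hib]
  refine (abs_add_le _ _).trans ?_
  rw [abs_neg]
  linarith

theorem holder_int (v : ℝ → ℝ) (hv : Continuous v) (P c x y : ℝ) (hxy : x < y)
    (hP : 0 ≤ P) (hP1 : P ≤ 1) (h0 : P = 0 → ∀ t, |v t| ≤ c) (h1 : 0 < P → c = 1) :
    ∫ s in x..y, |v s| ≤ (y - x) ^ (1 - P) * (c * |∫ s in x..y, |v s| ^ (1 / P)| ^ P) := by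
  have hl : 0 < y - x := by linarith
  rcases hP.eq_or_lt with h | h
  · subst h
    simp only [sub_zero, Real.rpow_one, Real.rpow_zero, mul_one]
    calc ∫ s in x..y, |v s| ≤ ∫ s in x..y, c := by
          refine intervalIntegral.integral_mono_on hxy.le (hv.abs.intervalIntegrable _ _)
            (by simp) ?_
          intro s _; exact h0 rfl s
      _ = _ := by simp
  · rw [h1 h, one_mul]
    have hPinv : 1 ≤ 1 / P := by rw [le_div_iff₀ h]; linarith
    have hcont : Continuous fun s => |v s| ^ (1 / P) :=
      hv.abs.rpow_const (fun _ => Or.inr (by positivity))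
    have hj := (convexOn_rpow hPinv).map_set_average_le (μ := volume) (t := Set.Ioc x y)
      (f := fun s => |v s|) (g := fun z : ℝ => z ^ (1 / P)) ?_ isClosed_Ici
      (by simp [hxy]) (by simp) ?_ ?_ ?_
    rotate_left
    · exact (continuous_id.rpow_const (fun _ => Or.inr (by positivity))).continuousOn
    · exact Filter.Eventually.of_forall fun s => Set.mem_Ici.2 (abs_nonneg _)
    · exact (hv.abs.intervalIntegrable x y).1
    · exact (hcont.intervalIntegrable x y).1
    rw [setAverage_eq, setAverage_eq] at hj
    simp only [Function.comp_def, ← intervalIntegral.integral_of_le hxy.le, smul_eq_mul] at hj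
    have hvol : volume.real (Set.Ioc x y) = y - x := by simp [Measure.real, hl.le]
    rw [hvol] at hj
    have hA0 : 0 ≤ ∫ s in x..y, |v s| :=
      intervalIntegral.integral_nonneg hxy.le fun s _ => abs_nonneg _
    have hB0 : 0 ≤ ∫ s in x..y, |v s| ^ (1 / P) :=
      intervalIntegral.integral_nonneg hxy.le fun s _ => by positivity
    rw [abs_of_nonneg hB0]
    have hj2 := Real.rpow_le_rpow (by positivity) hj hP
    rw [← Real.rpow_mul (by positivity), one_div_mul_cancel h.ne', Real.rpow_one,
      Real.mul_rpow (by positivity) hB0, Real.inv_rpow hl.le] at hj2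
    have : (y - x) ^ (1 - P) = (y - x) * ((y - x) ^ P)⁻¹ := by
      rw [Real.rpow_sub hl, Real.rpow_one]; rfl
    rw [this, mul_assoc]
    rwa [inv_mul_le_iff₀ hl] at hj2

theorem two_holder (a₁ a₂ b₁ b₂ α β : ℝ) (ha₁ : 0 ≤ a₁) (ha₂ : 0 ≤ a₂) (hb₁ : 0 ≤ b₁)
    (hb₂ : 0 ≤ b₂) (hα : 0 ≤ α) (hβ : 0 ≤ β) (h : α + β = 1) :
    a₁ ^ α * b₁ ^ β + a₂ ^ α * b₂ ^ β ≤ (a₁ + a₂) ^ α * (b₁ + b₂) ^ β := by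
  rcases (add_nonneg ha₁ ha₂).eq_or_lt with hA | hA
  · have e1 : a₁ = 0 := by linarith
    have e2 : a₂ = 0 := by linarith
    subst e1 e2
    rcases hα.eq_or_lt with h0 | h0
    · have : β = 1 := by linarith
      subst this; subst h0; simp
    · simp [Real.zero_rpow h0.ne']
  rcases (add_nonneg hb₁ hb₂).eq_or_lt with hB | hB
  · have e1 : b₁ = 0 := by linarith
    have e2 : b₂ = 0 := by linarith
    subst e1 e2
    rcases hβ.eq_or_lt with h0 | h0
    · have : α = 1 := by linarith
      subst this; subst h0; simp
    · simp [Real.zero_rpow h0.ne']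
  set A := a₁ + a₂
  set B := b₁ + b₂
  have g1 := Real.geom_mean_le_arith_mean2_weighted hα hβ (div_nonneg ha₁ hA.le)
    (div_nonneg hb₁ hB.le) h
  have g2 := Real.geom_mean_le_arith_mean2_weighted hα hβ (div_nonneg ha₂ hA.le)
    (div_nonneg hb₂ hB.le) h
  rw [Real.div_rpow ha₁ hA.le, Real.div_rpow hb₁ hB.le] at g1
  rw [Real.div_rpow ha₂ hA.le, Real.div_rpow hb₂ hB.le] at g2
  have hAα : 0 < A ^ α := Real.rpow_pos_of_pos hA _
  have hBβ : 0 < B ^ β := Real.rpow_pos_of_pos hB _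
  have hs : α * (a₁ / A) + β * (b₁ / B) + (α * (a₂ / A) + β * (b₂ / B)) = 1 := by
    have : a₁ / A + a₂ / A = 1 := by rw [← add_div, div_self hA.ne']
    have : b₁ / B + b₂ / B = 1 := by rw [← add_div, div_self hB.ne']
    calc _ = α * (a₁ / A + a₂ / A) + β * (b₁ / B + b₂ / B) := by ring
      _ = 1 := by simp [*]
  have g3 : (a₁ ^ α * b₁ ^ β + a₂ ^ α * b₂ ^ β) / (A ^ α * B ^ β) ≤ 1 := by
    have : (a₁ ^ α * b₁ ^ β + a₂ ^ α * b₂ ^ β) / (A ^ α * B ^ β)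
      = a₁ ^ α / A ^ α * (b₁ ^ β / B ^ β) + a₂ ^ α / A ^ α * (b₂ ^ β / B ^ β) := by
      field_simp
    linarith
  rwa [div_le_one (by positivity)] at g3

theorem bound_prim (v : ℝ → ℝ) (hv : Continuous v) (hs : HasCompactSupport v) (P : ℝ)
    (hP : 0 ≤ P) (x y : ℝ) :
    |∫ s in x..y, |v s| ^ (1 / P)| ^ P ≤ (∫ s, |v s| ^ (1 / P)) ^ P := by
  rcases hP.eq_or_lt with h | h
  · subst h; simp
  · refine Real.rpow_le_rpow (abs_nonneg _) ?_ hP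
    have hcont : Continuous fun s => |v s| ^ (1 / P) :=
      hv.abs.rpow_const (fun _ => Or.inr (by positivity))
    have hcs : HasCompactSupport fun s => |v s| ^ (1 / P) :=
      hs.comp_left (g := fun z : ℝ => |z| ^ (1 / P)) (by simp [Real.zero_rpow (inv_pos.2 h).ne'])
    have hInt1 : Integrable (fun s => |v s| ^ (1 / P)) := hcont.integrable_of_hasCompactSupport hcs
    have h1 : |∫ s in x..y, |v s| ^ (1 / P)| ≤ ∫ s in Set.uIoc x y, ‖|v s| ^ (1 / P)‖ := by
      simpa using intervalIntegral.norm_integral_le_integral_norm_uIoc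
        (f := fun s => |v s| ^ (1 / P)) (a := x) (b := y) (μ := volume)
    refine h1.trans ?_
    have h2 : ∀ s, ‖|v s| ^ (1 / P)‖ = |v s| ^ (1 / P) := fun s =>
      Real.norm_of_nonneg (by positivity)
    simp_rw [h2]
    exact setIntegral_le_integral hInt1 (Filter.Eventually.of_forall fun s => by positivity)

theorem ofReal_prim_le (v : ℝ → ℝ) (hv : Continuous v) (e x y : ℝ) (he : 0 ≤ e) (hxy : x ≤ y) :
    ENNReal.ofReal |∫ s in x..y, |v s| ^ e| ≤ ∫⁻ s, ‖v s‖ₑ ^ e := by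
  have hcont : Continuous fun s => |v s| ^ e :=
    hv.abs.rpow_const (fun _ => Or.inr he)
  rw [abs_of_nonneg (intervalIntegral.integral_nonneg hxy fun s _ => by positivity),
    intervalIntegral.integral_of_le hxy,
    ofReal_integral_eq_lintegral_ofReal (hcont.intervalIntegrable x y).1
      (Filter.Eventually.of_forall fun s => by positivity)]
  refine (setLIntegral_le_lintegral _ _).trans (le_of_eq ?_)
  congr 1; ext s
  rw [Real.enorm_eq_ofReal_abs, ENNReal.ofReal_rpow_of_nonneg (abs_nonneg _) he]

theorem gn1d (u : ℝ → ℝ) (hu : ContDiff ℝ 2 u) (hs : HasCompactSupport u) (P Q r cP cQ : ℝ)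
    (hr : 1 ≤ r) (hPQ : r * (P + Q) = 2) (hP : 0 ≤ P) (hQ : 0 ≤ Q) (hP1 : P ≤ 1) (hQ1 : Q ≤ 1)
    (hcP : 0 ≤ cP) (hcQ : 0 ≤ cQ)
    (hPz : P = 0 → ∀ t, |u t| ≤ cP) (hPp : 0 < P → cP = 1)
    (hQz : Q = 0 → ∀ t, |deriv (deriv u) t| ≤ cQ) (hQp : 0 < Q → cQ = 1) :
    ∫⁻ t, ‖deriv u t‖ₑ ^ r ≤ ENNReal.ofReal (7 ^ r * (cP * cQ) ^ (r / 2)) *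
      ((∫⁻ t, ‖u t‖ₑ ^ (1 / P)) ^ (r * P / 2) *
        (∫⁻ t, ‖deriv (deriv u) t‖ₑ ^ (1 / Q)) ^ (r * Q / 2)) := by
  have hr0 : 0 < r := by linarith
  have hu1 : ContDiff ℝ 1 (deriv u) := by
    have : ContDiff ℝ (1 + 1) u := by simpa [one_add_one_eq_two] using hu
    exact (contDiff_succ_iff_deriv.1 this).2.2
  have hcu : Continuous u := hu.continuous
  have hcu1 : Continuous (deriv u) := hu1.continuous
  have hcu2 : Continuous (deriv (deriv u)) := hu1.continuous_deriv le_rfl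
  have hs1 : HasCompactSupport (deriv u) := hs.deriv
  have hs2 : HasCompactSupport (deriv (deriv u)) := hs1.deriv
  obtain ⟨B, hB⟩ := hs2.exists_bound_of_continuous hcu2
  simp only [Real.norm_eq_abs] at hB
  have hB0 : 0 ≤ B := (abs_nonneg _).trans (hB 0)
  have hPi : 0 ≤ 1 / P := by positivity
  have hQi : 0 ≤ 1 / Q := by positivity
  have hcP' : Continuous fun s => |u s| ^ (1 / P) := hcu.abs.rpow_const (fun _ => Or.inr hPi)
  have hcQ' : Continuous fun s => |deriv (deriv u) s| ^ (1 / Q) :=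
    hcu2.abs.rpow_const (fun _ => Or.inr hQi)
  have hcr : Continuous fun s => |deriv u s| ^ r := hcu1.abs.rpow_const (fun _ => Or.inr hr0.le)
  set a : ℝ → ℝ → ℝ := fun x y => ∫ s in x..y, |u s| ^ (1 / P) with ha
  set b : ℝ → ℝ → ℝ := fun x y => ∫ s in x..y, |deriv (deriv u) s| ^ (1 / Q) with hb
  set F : ℝ → ℝ → ℝ := fun x y => cP * |a x y| ^ P with hF
  set G : ℝ → ℝ → ℝ := fun x y => cQ * |b x y| ^ Q with hG
  set H : ℝ → ℝ → ℝ := fun x y => ∫ s in x..y, |deriv u s| ^ r with hH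
  have ha0 : ∀ x y, x ≤ y → 0 ≤ a x y := fun x y h =>
    intervalIntegral.integral_nonneg h fun s _ => by positivity
  have hb0 : ∀ x y, x ≤ y → 0 ≤ b x y := fun x y h =>
    intervalIntegral.integral_nonneg h fun s _ => by positivity
  have hFG : ∀ x y, (F x y * G x y) ^ (r / 2) =
      (cP * cQ) ^ (r / 2) * (|a x y| ^ (r * P / 2) * |b x y| ^ (r * Q / 2)) := by
    intro x y
    have : F x y * G x y = (cP * cQ) * (|a x y| ^ P * |b x y| ^ Q) := by simp only [hF, hG]; ring
    rw [this, Real.mul_rpow (by positivity) (by positivity),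
      Real.mul_rpow (x := |a x y| ^ P) (by positivity) (by positivity), ← Real.rpow_mul (abs_nonneg _),
      ← Real.rpow_mul (abs_nonneg _)]
    congr 3 <;> ring
  have key := greedy H F G P Q r (cQ * (B ^ (1 / Q)) ^ Q) (cP * (∫ s, |u s| ^ (1 / P)) ^ P)
    hr hPQ hP hQ hQ1 (fun x y => by positivity) (fun x y => by positivity) (by positivity)
    (fun x => continuous_const.mul
      ((intervalIntegral.continuous_primitive (fun _ _ => hcP'.intervalIntegrable _ _) x).abs.rpow_const
        (fun _ => Or.inr hP)))
    (fun x => continuous_const.mul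
      ((intervalIntegral.continuous_primitive (fun _ _ => hcQ'.intervalIntegrable _ _) x).abs.rpow_const
        (fun _ => Or.inr hQ)))
    (fun x y => mul_le_mul_of_nonneg_left (bound_prim u hcu hs P hP x y) hcP)
    (by
      intro x y hxy
      have h1 : b x y ≤ (y - x) * B ^ (1 / Q) := by
        calc b x y ≤ ∫ s in x..y, B ^ (1 / Q) := by
              refine intervalIntegral.integral_mono_on hxy (hcQ'.intervalIntegrable _ _)
                (by simp) ?_
              intro s _
              exact Real.rpow_le_rpow (abs_nonneg _) (hB s) hQi
          _ = _ := by simp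
      simp only [hG]
      rw [abs_of_nonneg (hb0 x y hxy), mul_assoc]
      refine mul_le_mul_of_nonneg_left ?_ hcQ
      rw [mul_comm, ← Real.mul_rpow (by linarith) (by positivity)]
      exact Real.rpow_le_rpow (hb0 x y hxy) h1 hQ)
    (fun x y z => intervalIntegral.integral_add_adjacent_intervals
      (hcr.intervalIntegrable _ _) (hcr.intervalIntegrable _ _))
    (by
      intro x y hxy
      have hl : 0 < y - x := by linarith
      have e1 := holder_int u hcu P cP x y hxy hP hP1 hPz hPp
      have e2 := holder_int _ hcu2 Q cQ x y hxy hQ hQ1 hQz hQp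
      have hpt : ∀ t ∈ Set.Icc x y, |deriv u t| ≤
          6 * ((y - x) ^ (-1 - P) * F x y) + (y - x) ^ (1 - Q) * G x y := by
        intro t ht
        refine (loc1 u hu x y t hxy ht).trans (add_le_add ?_ e2)
        calc 6 / (y - x) ^ 2 * ∫ s in x..y, |u s|
            ≤ 6 / (y - x) ^ 2 * ((y - x) ^ (1 - P) * F x y) := by
              refine mul_le_mul_of_nonneg_left e1 (by positivity)
          _ = _ := by
              rw [show (-1 - P) = (1 - P) - (2:ℕ) by push_cast; ring, Real.rpow_sub_natCast hl.ne']
              ring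
      calc H x y ≤ ∫ s in x..y, (6 * ((y - x) ^ (-1 - P) * F x y) + (y - x) ^ (1 - Q) * G x y) ^ r := by
            refine intervalIntegral.integral_mono_on hxy.le (hcr.intervalIntegrable _ _)
                (by simp) ?_
            intro s hs
            exact Real.rpow_le_rpow (abs_nonneg _) (hpt s hs) hr0.le
        _ = _ := by simp)
    (by
      intro x y z hxy hyz
      rw [hFG, hFG, hFG, ← mul_add]
      refine mul_le_mul_of_nonneg_left ?_ (by positivity)
      rw [abs_of_nonneg (ha0 _ _ hxy), abs_of_nonneg (ha0 _ _ hyz),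
        abs_of_nonneg (ha0 _ _ (hxy.trans hyz)), abs_of_nonneg (hb0 _ _ hxy),
        abs_of_nonneg (hb0 _ _ hyz), abs_of_nonneg (hb0 _ _ (hxy.trans hyz))]
      have ea : a x z = a x y + a y z := (intervalIntegral.integral_add_adjacent_intervals
        (hcP'.intervalIntegrable _ _) (hcP'.intervalIntegrable _ _)).symm
      have eb : b x z = b x y + b y z := (intervalIntegral.integral_add_adjacent_intervals
        (hcQ'.intervalIntegrable _ _) (hcQ'.intervalIntegrable _ _)).symm
      rw [ea, eb]
      exact two_holder _ _ _ _ _ _ (ha0 _ _ hxy) (ha0 _ _ hyz) (hb0 _ _ hxy) (hb0 _ _ hyz)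
        (by positivity) (by positivity) (by linarith))
  -- now conclude
  obtain ⟨R, hR⟩ := hs1.isBounded.subset_closedBall 0
  have hRsupp : ∀ t, t ∉ Set.Ioc (-(|R| + 1)) (|R| + 1) → deriv u t = 0 := by
    intro t ht
    by_contra hne
    have := hR (subset_tsupport _ hne)
    rw [mem_closedBall_zero_iff, Real.norm_eq_abs] at this
    have h2 := abs_le.1 (this.trans (le_abs_self R))
    exact ht ⟨by linarith [h2.1], by linarith [h2.2]⟩
  refine ENNReal.le_of_forall_pos_le_add fun δ hδ _ => ?_
  obtain ⟨y, hy, hHy⟩ := key (-(|R| + 1)) (2 * (|R| + 1)) δ (by positivity) hδ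
  set x := -(|R| + 1) with hx
  have hxy : x ≤ y := by have := abs_nonneg R; linarith
  have h1 : ∫⁻ t, ‖deriv u t‖ₑ ^ r = ENNReal.ofReal (H x y) := by
    simp only [hH]
    rw [intervalIntegral.integral_of_le hxy,
      ofReal_integral_eq_lintegral_ofReal (hcr.intervalIntegrable x y).1
      (Filter.Eventually.of_forall fun s => by positivity)]
    rw [← setLIntegral_eq_of_support_subset (s := Set.Ioc x y)]
    · congr 1; ext s
      rw [Real.enorm_eq_ofReal_abs, ENNReal.ofReal_rpow_of_nonneg (abs_nonneg _) hr0.le]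
    · intro t ht
      by_contra hn
      refine ht ?_
      have : deriv u t = 0 := hRsupp t fun h => hn ⟨h.1, by linarith [h.2]⟩
      simp [this, hr0]
  rw [h1]
  refine (ENNReal.ofReal_le_ofReal hHy).trans ?_
  rw [ENNReal.ofReal_add (by positivity) (by positivity), hFG, ← mul_assoc,
    ENNReal.ofReal_mul (by positivity), ENNReal.ofReal_mul (q := |b x y| ^ (r * Q / 2)) (by positivity),
    ← ENNReal.ofReal_rpow_of_nonneg (abs_nonneg _) (by positivity),
    ← ENNReal.ofReal_rpow_of_nonneg (abs_nonneg _) (by positivity)]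
  gcongr
  · exact ofReal_prim_le u hcu _ x y hPi hxy
  · exact ofReal_prim_le _ hcu2 _ x y hQi hxy
  · simp

/-- The Lebesgue exponent with reciprocal `P`. -/
def lpx (P : ℝ) : ℝ≥0∞ := (ENNReal.ofReal P)⁻¹

theorem lpx_zero : lpx 0 = ∞ := by simp [lpx]

theorem nm_pos {α F : Type*} [MeasurableSpace α] [NormedAddCommGroup F] {μ : Measure α}
    (f : α → F) {R : ℝ} (hR : 0 < R) :
    eLpNorm f (lpx R) μ = (∫⁻ x, ‖f x‖ₑ ^ (1 / R) ∂μ) ^ R := by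
  have h1 : lpx R ≠ 0 := by simp [lpx]
  have h2 : lpx R ≠ ∞ := by simp [lpx, hR]
  rw [eLpNorm_eq_lintegral_rpow_enorm_toReal h1 h2]
  have : (lpx R).toReal = 1 / R := by simp [lpx, ENNReal.toReal_inv, hR.le]
  rw [this, one_div_one_div]

theorem le_nm_top {d : ℕ} (f : EuclideanSpace ℝ (Fin d) → ℝ) (hf : Continuous f)
    (hfin : eLpNorm f ∞ volume ≠ ∞) (x) : |f x| ≤ (eLpNorm f ∞ volume).toReal := by
  by_contra hlt
  push Not at hlt
  have hopen : IsOpen {x | (eLpNorm f ∞ volume).toReal < |f x|} :=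
    isOpen_lt continuous_const hf.abs
  have h0 : volume {x | (eLpNorm f ∞ volume).toReal < |f x|} = 0 := by
    have := ae_le_eLpNormEssSup (f := f) (μ := volume)
    rw [← eLpNorm_exponent_top] at this
    refine measure_mono_null ?_ (ae_iff.1 this)
    intro y hy hle
    have hy' : (eLpNorm f ∞ volume).toReal < |f y| := hy
    rw [Real.enorm_eq_ofReal_abs, ENNReal.ofReal_le_iff_le_toReal hfin] at hle
    linarith
  have := hopen.eq_empty_of_measure_zero h0
  exact (Set.eq_empty_iff_forall_notMem.1 this) x hlt

theorem slice (n : ℕ) (j : Fin (n + 1)) :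
    ∃ b : (Fin n → ℝ) → EuclideanSpace ℝ (Fin (n + 1)), Continuous b ∧
      ∀ g : EuclideanSpace ℝ (Fin (n + 1)) → ℝ≥0∞, Measurable g →
        ∫⁻ x, g x = ∫⁻ y, ∫⁻ t : ℝ, g (b y + t • EuclideanSpace.single j (1:ℝ)) := by
  refine ⟨fun y => WithLp.toLp 2 (j.insertNth (0:ℝ) y), ?_, ?_⟩
  · refine (PiLp.continuous_toLp 2 _).comp ?_
    exact Continuous.finInsertNth (A := fun _ => ℝ) j continuous_const continuous_id
  · intro g hg
    rw [← (PiLp.volume_preserving_toLp (Fin (n + 1))).lintegral_comp hg]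
    rw [← ((volume_preserving_piFinSuccAbove (fun _ : Fin (n + 1) => ℝ) j).symm).lintegral_comp
      (f := fun a => g (WithLp.toLp 2 a)) (hg.comp (by fun_prop))]
    rw [Measure.volume_eq_prod, lintegral_prod_symm']
    · refine lintegral_congr fun y => lintegral_congr fun t => ?_
      have hrfl : (MeasurableEquiv.piFinSuccAbove (fun _ : Fin (n + 1) => ℝ) j).symm (t, y)
        = j.insertNth (α := fun _ => ℝ) t y := rfl
      rw [hrfl]
      congr 1
      ext k
      rcases eq_or_ne k j with h | h
      · subst h; simp
      · obtain ⟨l, rfl⟩ := Fin.exists_succAbove_eq h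
        simp
    · refine hg.comp ?_
      fun_prop

theorem nm_finite {d : ℕ} {F : Type*} [NormedAddCommGroup F] (f : EuclideanSpace ℝ (Fin d) → F)
    (hf : Continuous f) (hs : HasCompactSupport f) (e : ℝ≥0∞) : eLpNorm f e volume ≠ ∞ :=
  (hf.memLp_of_hasCompactSupport hs).2.ne

/-- partial derivative in the `j`-th coordinate direction -/
def pd {d : ℕ} (j : Fin d) (v : EuclideanSpace ℝ (Fin d) → ℝ) :
    EuclideanSpace ℝ (Fin d) → ℝ :=
  fun x => fderiv ℝ v x (EuclideanSpace.single j (1:ℝ))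

theorem pd_contDiff {d : ℕ} (j : Fin d) (v : EuclideanSpace ℝ (Fin d) → ℝ)
    (hv : ContDiff ℝ (⊤ : ℕ∞) v) : ContDiff ℝ (⊤ : ℕ∞) (pd j v) :=
  (hv.fderiv_right (m := (⊤ : ℕ∞)) (by simp)).clm_apply contDiff_const

theorem pd_compact {d : ℕ} (j : Fin d) (v : EuclideanSpace ℝ (Fin d) → ℝ)
    (hs : HasCompactSupport v) : HasCompactSupport (pd j v) :=
  (hs.fderiv (𝕜 := ℝ)).comp_left (g := fun T : EuclideanSpace ℝ (Fin d) →L[ℝ] ℝ =>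
    T (EuclideanSpace.single j (1:ℝ))) (by simp)

theorem deriv_slice {d : ℕ} (j : Fin d) (v : EuclideanSpace ℝ (Fin d) → ℝ)
    (hv : Differentiable ℝ v) (a : EuclideanSpace ℝ (Fin d)) :
    deriv (fun t : ℝ => v (a + t • EuclideanSpace.single j (1:ℝ))) =
      fun t : ℝ => pd j v (a + t • EuclideanSpace.single j (1:ℝ)) := by
  funext t
  have h1 : HasDerivAt (fun t : ℝ => a + t • EuclideanSpace.single j (1:ℝ))
      (EuclideanSpace.single j (1:ℝ)) t := by
    simpa using ((hasDerivAt_id t).smul_const (EuclideanSpace.single j (1:ℝ))).const_add a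
  exact ((hv _).hasFDerivAt.comp_hasDerivAt t h1).deriv

/-- constants used in the endpoint cases -/
theorem exists_cst {d : ℕ} (v : EuclideanSpace ℝ (Fin d) → ℝ) (hv : Continuous v)
    (hs : HasCompactSupport v) (P r : ℝ) (hP : 0 ≤ P) (hr : 0 < r) : ∃ c : ℝ, 0 ≤ c ∧
      (P = 0 → ∀ x, |v x| ≤ c) ∧ (0 < P → c = 1) ∧
      ENNReal.ofReal (c ^ (r / 2)) * (∫⁻ x, ‖v x‖ₑ ^ (1 / P)) ^ (r * P / 2) =
        (eLpNorm v (lpx P) volume) ^ (r / 2) := by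
  rcases hP.eq_or_lt with h | h
  · subst h
    have hfin := nm_finite v hv hs ∞
    refine ⟨(eLpNorm v ∞ volume).toReal, ENNReal.toReal_nonneg,
      fun _ => le_nm_top v hv hfin, fun h => absurd h (lt_irrefl _), ?_⟩
    rw [lpx_zero, ← ENNReal.ofReal_rpow_of_nonneg ENNReal.toReal_nonneg (by positivity),
      ENNReal.ofReal_toReal hfin]
    simp
  · refine ⟨1, zero_le_one, fun h' => absurd h' h.ne', fun _ => rfl, ?_⟩
    rw [nm_pos v h, ← ENNReal.rpow_mul]
    simp only [Real.one_rpow, ENNReal.ofReal_one, one_mul]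
    congr 1; ring

theorem step2 (d : ℕ) (j : Fin d) (v : EuclideanSpace ℝ (Fin d) → ℝ)
    (hv : ContDiff ℝ (⊤ : ℕ∞) v) (hs : HasCompactSupport v)
    (P Q R : ℝ) (hP : 0 ≤ P) (hQ : 0 ≤ Q) (hP1 : P ≤ 1) (hQ1 : Q ≤ 1) (hR : R = (P + Q) / 2)
    (hR0 : 0 < R) :
    eLpNorm (pd j v) (lpx R) volume ≤
      7 * ((eLpNorm v (lpx P) volume) ^ (1 / 2 : ℝ) *
        (eLpNorm (pd j (pd j v)) (lpx Q) volume) ^ (1 / 2 : ℝ)) := by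
  obtain ⟨n, rfl⟩ : ∃ n, d = n + 1 := ⟨d - 1, by have := j.pos; omega⟩
  set r := 1 / R with hrdef
  have hr0 : 0 < r := by positivity
  have hr : 1 ≤ r := by rw [hrdef, le_div_iff₀ hR0]; linarith
  have hrPQ : r * (P + Q) = 2 := by
    rw [hrdef]; field_simp; linarith
  have hv1 := pd_contDiff j v hv
  have hv2 := pd_contDiff j _ hv1
  have hs1 := pd_compact j v hs
  have hs2 := pd_compact j _ hs1
  obtain ⟨cP, hcP, hPz, hPp, hPe⟩ := exists_cst v hv.continuous hs P r hP hr0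
  obtain ⟨cQ, hcQ, hQz, hQp, hQe⟩ := exists_cst _ hv2.continuous hs2 Q r hQ hr0
  obtain ⟨b, hbc, hb⟩ := slice n j
  set e : EuclideanSpace ℝ (Fin (n+1)) := EuclideanSpace.single j (1:ℝ) with he
  have he1 : ‖e‖ = 1 := by simp [he]
  have hline : ∀ y, ∫⁻ t : ℝ, ‖pd j v (b y + t • e)‖ₑ ^ r ≤
      ENNReal.ofReal (7 ^ r * (cP * cQ) ^ (r / 2)) *
      ((∫⁻ t : ℝ, ‖v (b y + t • e)‖ₑ ^ (1 / P)) ^ (r * P / 2) *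
        (∫⁻ t : ℝ, ‖pd j (pd j v) (b y + t • e)‖ₑ ^ (1 / Q)) ^ (r * Q / 2)) := by
    intro y
    set u : ℝ → ℝ := fun t => v (b y + t • e) with hu
    have hd1 : deriv u = fun t => pd j v (b y + t • e) :=
      deriv_slice j v (hv.differentiable (by simp)) (b y)
    have hd2 : deriv (deriv u) = fun t => pd j (pd j v) (b y + t • e) := by
      rw [hd1]
      exact deriv_slice j (pd j v) (hv1.differentiable (by simp)) (b y)
    have huc : ContDiff ℝ 2 u := by
      refine (contDiff_infty.1 hv 2).comp ?_
      fun_prop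
    have hemb : Topology.IsClosedEmbedding (fun t : ℝ => b y + t • e) := by
      refine Isometry.isClosedEmbedding (Isometry.of_dist_eq fun s t => ?_)
      rw [dist_add_left, dist_eq_norm, ← sub_smul, norm_smul, he1, mul_one, Real.dist_eq,
        Real.norm_eq_abs]
    have hus : HasCompactSupport u := hs.comp_isClosedEmbedding hemb
    have := gn1d u huc hus P Q r cP cQ hr hrPQ hP hQ hP1 hQ1 hcP hcQ
      (fun h t => hPz h _) hPp (fun h t => by rw [hd2]; exact hQz h _) hQp
    rw [hd2, hd1] at this
    exact this
  have hmeas : ∀ (w : EuclideanSpace ℝ (Fin (n+1)) → ℝ) (a : ℝ), Continuous w →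
      Measurable fun x => ‖w x‖ₑ ^ a := fun w a hw => (hw.measurable.enorm).pow_const _
  have hmeas2 : ∀ (w : EuclideanSpace ℝ (Fin (n+1)) → ℝ) (a : ℝ), Continuous w →
      Measurable fun y => ∫⁻ t : ℝ, ‖w (b y + t • e)‖ₑ ^ a := by
    intro w a hw
    refine Measurable.lintegral_prod_right (f := fun y t => ‖w (b y + t • e)‖ₑ ^ a) ?_
    refine (hmeas w a hw).comp (Continuous.measurable ?_)
    fun_prop
  have hmain : ∫⁻ x, ‖pd j v x‖ₑ ^ r ≤ ENNReal.ofReal (7 ^ r) *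
      ((eLpNorm v (lpx P) volume) ^ (r / 2) *
        (eLpNorm (pd j (pd j v)) (lpx Q) volume) ^ (r / 2)) := by
    rw [hb _ (hmeas _ _ hv1.continuous)]
    calc _ ≤ ∫⁻ y, ENNReal.ofReal (7 ^ r * (cP * cQ) ^ (r / 2)) *
      ((∫⁻ t : ℝ, ‖v (b y + t • e)‖ₑ ^ (1 / P)) ^ (r * P / 2) *
        (∫⁻ t : ℝ, ‖pd j (pd j v) (b y + t • e)‖ₑ ^ (1 / Q)) ^ (r * Q / 2)) :=
          lintegral_mono hline
      _ = ENNReal.ofReal (7 ^ r * (cP * cQ) ^ (r / 2)) * ∫⁻ y,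
      ((∫⁻ t : ℝ, ‖v (b y + t • e)‖ₑ ^ (1 / P)) ^ (r * P / 2) *
        (∫⁻ t : ℝ, ‖pd j (pd j v) (b y + t • e)‖ₑ ^ (1 / Q)) ^ (r * Q / 2)) := by
          rw [lintegral_const_mul' _ _ ENNReal.ofReal_ne_top]
      _ ≤ ENNReal.ofReal (7 ^ r * (cP * cQ) ^ (r / 2)) *
          ((∫⁻ y, ∫⁻ t : ℝ, ‖v (b y + t • e)‖ₑ ^ (1 / P)) ^ (r * P / 2) *
          (∫⁻ y, ∫⁻ t : ℝ, ‖pd j (pd j v) (b y + t • e)‖ₑ ^ (1 / Q)) ^ (r * Q / 2)) := by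
          gcongr
          exact ENNReal.lintegral_mul_norm_pow_le (hmeas2 _ _ hv.continuous).aemeasurable
            (hmeas2 _ _ hv2.continuous).aemeasurable (by positivity) (by positivity) (by linarith)
      _ = _ := by
          rw [← hb _ (hmeas _ _ hv.continuous), ← hb _ (hmeas _ _ hv2.continuous), ← hPe, ← hQe,
            Real.mul_rpow hcP hcQ, ENNReal.ofReal_mul (by positivity),
            ENNReal.ofReal_mul (by positivity)]
          ring
  rw [nm_pos _ hR0]
  refine (ENNReal.rpow_le_rpow hmain hR0.le).trans (le_of_eq ?_)
  rw [ENNReal.mul_rpow_of_nonneg _ _ hR0.le, ENNReal.mul_rpow_of_nonneg _ _ hR0.le,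
    ← ENNReal.rpow_mul, ← ENNReal.rpow_mul, ENNReal.ofReal_rpow_of_nonneg (by positivity) hR0.le,
    ← Real.rpow_mul (by norm_num)]
  have e1 : r * R = 1 := by rw [hrdef]; field_simp
  have e2 : r / 2 * R = 1 / 2 := by linarith
  rw [e1, e2]
  norm_num

theorem logconv_up (C : ℝ) (hC : 1 ≤ C) (m : ℕ) (a : ℕ → ℝ) (ha : ∀ k, 0 ≤ a k)
    (h : ∀ k, 1 ≤ k → k < m → a k ≤ C * (a (k-1) ^ (1/2:ℝ) * a (k+1) ^ (1/2:ℝ))) :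
    ∀ k, k < m → a k ≤ C ^ (2 * k) * (a 0 ^ (1 / (k+1:ℝ)) * a (k+1) ^ ((k:ℝ)/(k+1))) := by
  intro k
  induction k with
  | zero => intro _; simp
  | succ k ih =>
    intro hk
    have ih' := ih (by omega)
    have hh := h (k+1) (by omega) hk
    simp only [Nat.add_sub_cancel] at hh
    rcases (ha (k+1)).eq_or_lt with h0 | hpos
    · rw [← h0]; have := ha 0; have := ha (k+1+1); positivity
    have h0 := ha 0
    have h2 := ha (k+1+1)
    set x := a (k+1)
    set y := a (k+1+1)
    set z := a 0
    have hk0 : (0:ℝ) < k + 1 := by positivity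
    have hk2 : (0:ℝ) < k + 2 := by positivity
    have e1 : a k ^ (1/2:ℝ) ≤ C ^ k * (z ^ (1 / (2*(k+1:ℝ))) * x ^ ((k:ℝ)/(2*(k+1)))) := by
      refine (Real.rpow_le_rpow (ha k) ih' (by norm_num)).trans (le_of_eq ?_)
      rw [Real.mul_rpow (by positivity) (by positivity), Real.mul_rpow (by positivity) (by positivity),
        ← Real.rpow_mul h0, ← Real.rpow_mul hpos.le, ← Real.rpow_natCast, ← Real.rpow_natCast,
        ← Real.rpow_mul (by positivity)]
      congr 2
      · push_cast; ring
      · congr 1; field_simp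
      · congr 1; field_simp
    have e2 : x ≤ C ^ (k+1) * z ^ (1 / (2*(k+1:ℝ))) * y ^ (1/2:ℝ) * x ^ ((k:ℝ)/(2*(k+1))) := by
      calc x ≤ _ := hh
        _ ≤ C * ((C ^ k * (z ^ (1 / (2*(k+1:ℝ))) * x ^ ((k:ℝ)/(2*(k+1))))) * y ^ (1/2:ℝ)) := by gcongr
        _ = _ := by ring
    have e3 : x ^ (((k:ℝ)+2)/(2*(k+1))) ≤ C ^ (k+1) * z ^ (1 / (2*(k+1:ℝ))) * y ^ (1/2:ℝ) := by
      have hxx : x = x ^ (((k:ℝ)+2)/(2*(k+1))) * x ^ ((k:ℝ)/(2*(k+1))) := by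
        rw [← Real.rpow_add hpos]
        have : ((k:ℝ)+2)/(2*(k+1)) + (k:ℝ)/(2*(k+1)) = 1 := by field_simp; ring
        rw [this, Real.rpow_one]
      have hxp : 0 < x ^ ((k:ℝ)/(2*(k+1))) := by positivity
      rw [hxx] at e2
      refine le_of_mul_le_mul_right ?_ hxp
      rw [← hxx] at e2 
      rw [← hxx]; exact e2
    have e4 := Real.rpow_le_rpow (by positivity) e3 (z := 2*((k:ℝ)+1)/(k+2)) (by positivity)
    rw [← Real.rpow_mul hpos.le] at e4
    have : ((k:ℝ)+2)/(2*(k+1)) * (2*((k:ℝ)+1)/(k+2)) = 1 := by field_simp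
    rw [this, Real.rpow_one] at e4
    refine e4.trans ?_
    rw [Real.mul_rpow (by positivity) (by positivity), Real.mul_rpow (by positivity) (by positivity),
        ← Real.rpow_mul h0, ← Real.rpow_mul h2, ← Real.rpow_natCast, ← Real.rpow_mul (by positivity),
        mul_assoc]
    have c1 : C ^ (((k+1:ℕ):ℝ) * (2*((k:ℝ)+1)/(k+2))) ≤ C ^ (2*(k+1)) := by
      rw [← Real.rpow_natCast C (2*(k+1))]
      refine Real.rpow_le_rpow_of_exponent_le hC ?_
      push_cast
      rw [← mul_div_assoc, div_le_iff₀ hk2]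
      nlinarith
    have c2 : 1 / (2*(k+1:ℝ)) * (2*((k:ℝ)+1)/(k+2)) = 1 / (((k+1:ℕ):ℝ)+1) := by
      push_cast; field_simp; ring
    have c3 : 1 / 2 * (2*((k:ℝ)+1)/(k+2)) = ((k+1:ℕ):ℝ) / (((k+1:ℕ):ℝ)+1) := by
      push_cast; field_simp; ring
    rw [c2, c3]
    gcongr

theorem logconv (C : ℝ) (hC : 1 ≤ C) (m : ℕ) (hm : 1 ≤ m) (a : ℕ → ℝ) (ha : ∀ k, 0 ≤ a k)
    (h : ∀ k, 1 ≤ k → k < m → a k ≤ C * (a (k-1) ^ (1/2:ℝ) * a (k+1) ^ (1/2:ℝ))) :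
    ∀ n k, k + n = m → 
      a k ≤ C ^ (2 * m * n) * (a 0 ^ (1 - (k:ℝ) / m) * a m ^ ((k:ℝ)/m)) := by
  have hup := logconv_up C hC m a ha h
  have hm0 : (0:ℝ) < m := by exact_mod_cast hm
  intro n
  induction n with
  | zero => 
    intro k hk
    obtain rfl : k = m := by omega
    rw [div_self hm0.ne']; simp
  | succ n ih =>
    intro k hk
    have h1 := hup k (by omega)
    have h2 := ih (k+1) (by omega)
    have h0 := ha 0
    have hmm := ha m
    have hkk : (0:ℝ) < k + 1 := by positivity
    rcases h0.eq_or_lt with hz | hz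
    · rcases Nat.eq_zero_or_pos k with hk0 | hk0
      · subst hk0; simp only [CharP.cast_eq_zero, zero_div, sub_zero, Real.rpow_one, Real.rpow_zero, mul_one]
        rw [← hz]; simp
      · rw [← hz, Real.zero_rpow (by positivity), zero_mul, mul_zero] at h1
        exact h1.trans (by positivity)
    have h3 := Real.rpow_le_rpow (ha (k+1)) h2 (z := (k:ℝ)/(k+1)) (by positivity)
    refine h1.trans ?_
    have hkm : (k:ℝ) + 1 ≤ m := by exact_mod_cast (by omega : k + 1 ≤ m)
    calc _ ≤ C ^ (2 * k) * (a 0 ^ (1 / (k+1:ℝ)) * (C ^ (2 * m * n) * (a 0 ^ (1 - ((k+1:ℕ):ℝ) / m) * a m ^ (((k+1:ℕ):ℝ)/m))) ^ ((k:ℝ)/(k+1))) := by gcongr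
      _ = C ^ (2 * k) * (C ^ (2 * m * n)) ^ ((k:ℝ)/(k+1)) * ((a 0 ^ (1 / (k+1:ℝ)) * a 0 ^ ((1 - ((k+1:ℕ):ℝ) / m) * ((k:ℝ)/(k+1)))) * a m ^ (((k+1:ℕ):ℝ)/m * ((k:ℝ)/(k+1)))) := by
        rw [Real.mul_rpow (by positivity) (by positivity), Real.mul_rpow (by positivity) (by positivity),
        ← Real.rpow_mul h0, ← Real.rpow_mul hmm]; ring
      _ = C ^ (2 * k) * (C ^ (2 * m * n)) ^ ((k:ℝ)/(k+1)) * (a 0 ^ (1 - (k:ℝ) / m) * a m ^ ((k:ℝ)/m)) := by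
        rw [← Real.rpow_add hz]
        congr 3
        · push_cast; field_simp; ring
        · push_cast; field_simp
      _ ≤ C ^ (2 * m * (n+1)) * (a 0 ^ (1 - (k:ℝ) / m) * a m ^ ((k:ℝ)/m)) := by
        gcongr
        calc _ ≤ C ^ (2 * m) * (C ^ (2 * m * n)) ^ (1:ℝ) := by
              gcongr ?_ * (_:ℝ) ^ ?_
              · exact pow_le_pow_right₀ hC (by omega)
              · exact one_le_pow₀ hC
              · rw [div_le_one hkk]; linarith
          _ = _ := by rw [Real.rpow_one]; ring

/-- partial derivatives indexed by words -/
def cp {d : ℕ} (f : EuclideanSpace ℝ (Fin d) → ℝ) {k : ℕ} (w : Fin k → Fin d) :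
    EuclideanSpace ℝ (Fin d) → ℝ :=
  fun x => iteratedFDeriv ℝ k f x (fun l => EuclideanSpace.single (w l) (1:ℝ))

theorem cp_le {d : ℕ} (f : EuclideanSpace ℝ (Fin d) → ℝ) {k : ℕ} (w : Fin k → Fin d) (x) :
    ‖cp f w x‖ ≤ ‖iteratedFDeriv ℝ k f x‖ := by
  refine ((iteratedFDeriv ℝ k f x).le_opNorm _).trans (le_of_eq ?_)
  simp

theorem norm_le_cp {d : ℕ} (f : EuclideanSpace ℝ (Fin d) → ℝ) (k : ℕ) (x) :
    ‖iteratedFDeriv ℝ k f x‖ ≤ ∑ w : Fin k → Fin d, ‖cp f w x‖ := by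
  refine ContinuousMultilinearMap.opNorm_le_bound (by positivity) fun v => ?_
  have hv : v = fun l => ∑ j, (v l j) • EuclideanSpace.single j (1:ℝ) := by
    funext l
    have := (EuclideanSpace.basisFun (Fin d) ℝ).sum_repr (v l)
    simpa using this.symm
  conv_lhs => rw [hv]
  rw [ContinuousMultilinearMap.map_sum]
  rw [Finset.sum_mul]
  refine (norm_sum_le _ _).trans (Finset.sum_le_sum fun w _ => ?_)
  rw [ContinuousMultilinearMap.map_smul_univ, norm_smul, mul_comm]
  refine mul_le_mul_of_nonneg_left ?_ (norm_nonneg _)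
  rw [norm_prod]
  exact Finset.prod_le_prod (fun _ _ => norm_nonneg _) fun l _ => PiLp.norm_apply_le (v l) (w l)

theorem cp_contDiff {d : ℕ} (f : EuclideanSpace ℝ (Fin d) → ℝ) (hf : ContDiff ℝ (⊤ : ℕ∞) f) {k : ℕ}
    (w : Fin k → Fin d) : ContDiff ℝ (⊤ : ℕ∞) (cp f w) := by
  have h1 : ContDiff ℝ (⊤ : ℕ∞) (iteratedFDeriv ℝ k f) :=
    hf.iteratedFDeriv_right (by exact_mod_cast le_top)
  exact ((ContinuousMultilinearMap.apply ℝ (fun _ : Fin k => EuclideanSpace ℝ (Fin d)) ℝ _).contDiff).comp h1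

theorem cp_compact {d : ℕ} (f : EuclideanSpace ℝ (Fin d) → ℝ) (hs : HasCompactSupport f) {k : ℕ}
    (w : Fin k → Fin d) : HasCompactSupport (cp f w) :=
  (hs.iteratedFDeriv (𝕜 := ℝ) k).comp_left
    (g := fun T : ContinuousMultilinearMap ℝ (fun _ : Fin k => EuclideanSpace ℝ (Fin d)) ℝ =>
     T (fun l => EuclideanSpace.single (w l) (1:ℝ))) (by simp)

theorem fderiv_cp {d : ℕ} (f : EuclideanSpace ℝ (Fin d) → ℝ) (hf : ContDiff ℝ (⊤ : ℕ∞) f) {k : ℕ}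
    (w : Fin k → Fin d) (x v) : fderiv ℝ (cp f w) x v =
      fderiv ℝ (iteratedFDeriv ℝ k f) x v (fun l => EuclideanSpace.single (w l) (1:ℝ)) := by
  have h1 : ContDiff ℝ (⊤ : ℕ∞) (iteratedFDeriv ℝ k f) :=
    hf.iteratedFDeriv_right (by exact_mod_cast le_top)
  have h2 := (h1.differentiable (by simp) x).hasFDerivAt
  have h3 := ((ContinuousMultilinearMap.apply ℝ (fun _ : Fin k => EuclideanSpace ℝ (Fin d)) ℝ
    (fun l => EuclideanSpace.single (w l) (1:ℝ))).hasFDerivAt (x := iteratedFDeriv ℝ k f x)).comp x h2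
  have := h3.fderiv
  have e : cp f w = (ContinuousMultilinearMap.apply ℝ (fun _ : Fin k => EuclideanSpace ℝ (Fin d)) ℝ
    (fun l => EuclideanSpace.single (w l) (1:ℝ))) ∘ iteratedFDeriv ℝ k f := rfl
  rw [e, this]; rfl

theorem pd_cp {d : ℕ} (f : EuclideanSpace ℝ (Fin d) → ℝ) (hf : ContDiff ℝ (⊤ : ℕ∞) f) {k : ℕ}
    (w : Fin k → Fin d) (j : Fin d) : pd j (cp f w) = cp f (Fin.cons j w : Fin (k+1) → Fin d) := by
  funext x
  rw [pd, fderiv_cp f hf, cp, iteratedFDeriv_succ_apply_left]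
  rfl

theorem norm_fderiv_cp_le {d : ℕ} (f : EuclideanSpace ℝ (Fin d) → ℝ) (hf : ContDiff ℝ (⊤ : ℕ∞) f)
    {k : ℕ} (w : Fin k → Fin d) (x) :
    ‖fderiv ℝ (cp f w) x‖ ≤ ‖iteratedFDeriv ℝ (k+1) f x‖ := by
  rw [← norm_fderiv_iteratedFDeriv]
  refine ContinuousLinearMap.opNorm_le_bound _ (by positivity) fun v => ?_
  rw [fderiv_cp f hf]
  refine ((fderiv ℝ (iteratedFDeriv ℝ k f) x v).le_opNorm _).trans ?_
  simpa using (fderiv ℝ (iteratedFDeriv ℝ k f) x).le_opNorm v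

theorem one_le_lpx {P : ℝ} (hP1 : P ≤ 1) : 1 ≤ lpx P := by
  rw [lpx, ENNReal.one_le_inv]
  simpa using hP1

theorem eLpNorm_iter_le {d : ℕ} (f : EuclideanSpace ℝ (Fin d) → ℝ) (hf : ContDiff ℝ (⊤ : ℕ∞) f)
    (k : ℕ) {R : ℝ} (hR : R ≤ 1) (B : ℝ≥0∞) (μ : Measure (EuclideanSpace ℝ (Fin d)))
    (h : ∀ w : Fin k → Fin d, eLpNorm (cp f w) (lpx R) μ ≤ B) :
    eLpNorm (iteratedFDeriv ℝ k f) (lpx R) μ ≤ (d:ℝ≥0∞) ^ k * B := by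
  calc eLpNorm (iteratedFDeriv ℝ k f) (lpx R) μ ≤
        eLpNorm (∑ w : Fin k → Fin d, fun x => ‖cp f w x‖) (lpx R) μ := by
          refine eLpNorm_mono_real fun x => ?_
          rw [Finset.sum_apply]; exact norm_le_cp f k x
    _ ≤ ∑ w : Fin k → Fin d, eLpNorm (fun x => ‖cp f w x‖) (lpx R) μ :=
        eLpNorm_sum_le (fun w _ => (cp_contDiff f hf w).continuous.norm.aestronglyMeasurable)
          (one_le_lpx hR)
    _ ≤ ∑ w : Fin k → Fin d, B := by
        refine Finset.sum_le_sum fun w _ => ?_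
        rw [eLpNorm_norm]; exact h w
    _ = _ := by simp

theorem endpoint_step (d : ℕ) (f : EuclideanSpace ℝ (Fin d) → ℝ)
    (hf : ContDiff ℝ (⊤ : ℕ∞) f) (hs : HasCompactSupport f) (k : ℕ)
    (P Q R : ℝ) (hP : 0 ≤ P) (hQ : 0 ≤ Q) (hP1 : P ≤ 1) (hQ1 : Q ≤ 1) (hR : R = (P + Q) / 2)
    (hR0 : 0 < R) :
    eLpNorm (iteratedFDeriv ℝ (k+1) f) (lpx R) volume ≤ (d:ℝ≥0∞) ^ (k+1) *
      (7 * ((eLpNorm (iteratedFDeriv ℝ k f) (lpx P) volume) ^ (1 / 2 : ℝ) *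
        (eLpNorm (iteratedFDeriv ℝ (k+2) f) (lpx Q) volume) ^ (1 / 2 : ℝ))) := by
  refine eLpNorm_iter_le f hf (k+1) (by linarith) _ _ fun w => ?_
  have e : cp f w = pd (w 0) (cp f (Fin.tail w)) := by
    rw [pd_cp f hf, Fin.cons_self_tail]
  rw [e]
  refine (step2 d (w 0) _ (cp_contDiff f hf _) (cp_compact f hs _) P Q R hP hQ hP1 hQ1 hR hR0).trans ?_
  rw [pd_cp f hf, pd_cp f hf]
  gcongr
  · exact eLpNorm_mono fun x => cp_le f _ x
  · exact eLpNorm_mono fun x => cp_le f _ x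

theorem endpoint (d : ℕ) (hd : 1 ≤ d) (m : ℕ) (hm : 1 ≤ m) (P Q : ℝ) (hP : 0 ≤ P) (hQ : 0 ≤ Q)
    (hP1 : P ≤ 1) (hQ1 : Q ≤ 1) (hPQ : 0 < P + Q) :
    ∃ C : ℝ, 0 < C ∧ ∀ f : EuclideanSpace ℝ (Fin d) → ℝ,
      ContDiff ℝ (⊤ : ℕ∞) f → HasCompactSupport f → ∀ k ≤ m,
      eLpNorm (iteratedFDeriv ℝ k f) (lpx ((1 - (k:ℝ)/m) * P + (k:ℝ)/m * Q)) volume ≤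
        ENNReal.ofReal C * ((eLpNorm f (lpx P) volume) ^ (1 - (k:ℝ)/m) *
          (eLpNorm (iteratedFDeriv ℝ m f) (lpx Q) volume) ^ ((k:ℝ)/m)) := by
  have hm0 : (0:ℝ) < m := by exact_mod_cast hm
  have hd1 : (1:ℝ) ≤ d := by exact_mod_cast hd
  set C : ℝ := d ^ m * 7 with hC
  have hC1 : 1 ≤ C := by have := one_le_pow₀ hd1 (n := m); linarith
  refine ⟨C ^ (2 * m * m), by positivity, fun f hf hs k hk => ?_⟩
  set X : ℕ → ℝ := fun k => (1 - (k:ℝ)/m) * P + (k:ℝ)/m * Q with hX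
  have hfr : ∀ k ≤ m, 0 ≤ (k:ℝ)/m ∧ (k:ℝ)/m ≤ 1 := fun k hk =>
    ⟨by positivity, by rw [div_le_one hm0]; exact_mod_cast hk⟩
  have hX0 : ∀ k ≤ m, 0 ≤ X k := fun k hk => by
    obtain ⟨h1, h2⟩ := hfr k hk
    have : 0 ≤ 1 - (k:ℝ)/m := by linarith
    simp only [hX]; positivity
  have hX1 : ∀ k ≤ m, X k ≤ 1 := fun k hk => by
    obtain ⟨h1, h2⟩ := hfr k hk
    simp only [hX]; nlinarith
  have hXp : ∀ k, 1 ≤ k → k < m → 0 < X k := fun k hk1 hk => by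
    have h1 : 0 < (k:ℝ)/m := div_pos (by exact_mod_cast hk1) hm0
    have h2 : 0 < 1 - (k:ℝ)/m := by
      have : (k:ℝ)/m < 1 := by rw [div_lt_one hm0]; exact_mod_cast hk
      linarith
    simp only [hX]
    rcases hP.eq_or_lt with h | h
    · have : 0 < Q := by linarith
      positivity
    · positivity
  set M : ℕ → ℝ≥0∞ := fun k => eLpNorm (iteratedFDeriv ℝ k f) (lpx (X k)) volume with hM
  have hMf : ∀ k, M k ≠ ∞ := fun k => nm_finite _
    (hf.continuous_iteratedFDeriv (by exact_mod_cast le_top)) (hs.iteratedFDeriv k) _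
  have hstep : ∀ k, 1 ≤ k → k < m → (M k).toReal ≤
      C * ((M (k-1)).toReal ^ (1/2:ℝ) * (M (k+1)).toReal ^ (1/2:ℝ)) := by
    intro k hk1 hk
    obtain ⟨l, rfl⟩ : ∃ l, k = l + 1 := ⟨k - 1, by omega⟩
    have := endpoint_step d f hf hs l (X l) (X (l+2)) (X (l+1)) (hX0 _ (by omega))
      (hX0 _ (by omega)) (hX1 _ (by omega)) (hX1 _ (by omega))
      (by simp only [hX]; push_cast; field_simp; ring) (hXp _ hk1 hk)
    have h2 := ENNReal.toReal_mono (by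
      refine ENNReal.mul_ne_top (by simp) (ENNReal.mul_ne_top (by simp) (ENNReal.mul_ne_top ?_ ?_))
      · exact ENNReal.rpow_ne_top_of_nonneg (by norm_num) (hMf l)
      · exact ENNReal.rpow_ne_top_of_nonneg (by norm_num) (hMf (l+2))) this
    simp only [ENNReal.toReal_mul, ENNReal.toReal_pow, ENNReal.toReal_natCast,
      ← ENNReal.toReal_rpow, ENNReal.toReal_ofNat] at h2
    refine h2.trans ?_
    rw [← mul_assoc, hC]
    gcongr ?_ * 7 * ?_
    · exact pow_le_pow_right₀ hd1 (by omega)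
    · exact le_rfl
  have hfin := logconv C hC1 m hm (fun k => (M k).toReal) (fun _ => ENNReal.toReal_nonneg) hstep
    (m - k) k (by omega)
  have hM0 : M 0 = eLpNorm f (lpx P) volume := by
    simp only [hM, hX]
    simp only [CharP.cast_eq_zero, zero_div, sub_zero, one_mul, zero_mul, add_zero]
    exact eLpNorm_congr_norm_ae (Filter.Eventually.of_forall fun x => by simp)
  have hMm : M m = eLpNorm (iteratedFDeriv ℝ m f) (lpx Q) volume := by
    simp only [hM, hX]
    rw [div_self hm0.ne']; simp
  rw [← hM0, ← hMm]
  change M k ≤ _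
  rw [← ENNReal.ofReal_toReal (hMf k)]
  conv_rhs => rw [← ENNReal.ofReal_toReal (hMf 0), ← ENNReal.ofReal_toReal (hMf m)]
  obtain ⟨h1, h2⟩ := hfr k hk
  rw [ENNReal.ofReal_rpow_of_nonneg ENNReal.toReal_nonneg (by linarith),
    ENNReal.ofReal_rpow_of_nonneg ENNReal.toReal_nonneg (by linarith),
    ← ENNReal.ofReal_mul (by positivity), ← ENNReal.ofReal_mul (by positivity)]
  refine ENNReal.ofReal_le_ofReal (hfin.trans ?_)
  gcongr
  omega

theorem lpx_holder {A B : ℝ} (hA : 0 ≤ A) (hB : 0 ≤ B) :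
    ENNReal.HolderTriple (lpx A) (lpx B) (lpx (A + B)) := by
  constructor
  simp only [lpx, inv_inv]
  rw [ENNReal.ofReal_add hA hB]

theorem eLpNorm_mul_holder {α : Type*} [MeasurableSpace α] {μ : Measure α} {A B : ℝ}
    (hA : 0 ≤ A) (hB : 0 ≤ B) (g h : α → ℝ) (hg : AEStronglyMeasurable g μ)
    (hh : AEStronglyMeasurable h μ) :
    eLpNorm (fun x => g x * h x) (lpx (A + B)) μ ≤ eLpNorm g (lpx A) μ * eLpNorm h (lpx B) μ := by
  have := lpx_holder hA hB
  have hmain := eLpNorm_smul_le_mul_eLpNorm (p := lpx A) (q := lpx B) (r := lpx (A + B)) hh hg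
  have e : (fun x => g x * h x) = g • h := by funext x; simp
  rw [e]
  exact hmain

theorem eLpNorm_rpow_lpx {α F : Type*} [MeasurableSpace α] {μ : Measure α} [NormedAddCommGroup F]
    (f : α → F) {A q : ℝ} (hA : 0 ≤ A) (hq : 0 < q) :
    eLpNorm (fun x => ‖f x‖ ^ q) (lpx A) μ = eLpNorm f (lpx (A / q)) μ ^ q := by
  rw [eLpNorm_norm_rpow f hq]
  congr 2
  rcases hA.eq_or_lt with h | h
  · subst h
    simp [lpx, ENNReal.top_mul, hq]
  · rw [lpx, lpx, ENNReal.ofReal_div_of_pos hq, ENNReal.inv_div]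
    · rw [div_eq_mul_inv, mul_comm]
    · simp
    · simp [hq]

theorem lyapunov {α F : Type*} [MeasurableSpace α] {μ : Measure α} [NormedAddCommGroup F]
    (f : α → F) (hf : AEStronglyMeasurable f μ) {A B t : ℝ} (hA : 0 ≤ A) (hB : 0 ≤ B)
    (ht : 0 < t) (ht1 : t < 1) :
    eLpNorm f (lpx ((1 - t) * A + t * B)) μ ≤
      eLpNorm f (lpx A) μ ^ (1 - t) * eLpNorm f (lpx B) μ ^ t := by
  have h1 : 0 < 1 - t := by linarith
  have hm : ∀ q : ℝ, 0 < q → AEStronglyMeasurable (fun x => ‖f x‖ ^ q) μ := fun q hq =>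
    (Real.continuous_rpow_const hq.le).comp_aestronglyMeasurable hf.norm
  have := eLpNorm_mul_holder (A := (1 - t) * A) (B := t * B) (by positivity) (by positivity)
    _ _ (hm (1 - t) h1) (hm t ht)
  rw [eLpNorm_rpow_lpx f (by positivity) h1, eLpNorm_rpow_lpx f (by positivity) ht,
    mul_div_cancel_left₀ _ h1.ne', mul_div_cancel_left₀ _ ht.ne'] at this
  refine le_trans (le_of_eq ?_) this
  rw [← eLpNorm_norm f]
  congr 1
  funext x
  rcases (norm_nonneg (f x)).eq_or_lt with h | h
  · rw [← h, Real.zero_rpow ht.ne', mul_zero]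
  · rw [← Real.rpow_add h]; simp

theorem sob_one (w : EuclideanSpace ℝ (Fin 1) → ℝ) (hw : ContDiff ℝ 1 w)
    (hs : HasCompactSupport w) :
    eLpNorm w ∞ volume ≤ eLpNorm (fderiv ℝ w) 1 volume := by
  obtain ⟨b, hbc, hb⟩ := slice 0 0
  have hc : Continuous (fderiv ℝ w) := hw.continuous_fderiv (by simp)
  set e : EuclideanSpace ℝ (Fin 1) := EuclideanSpace.single 0 (1:ℝ) with he
  have he1 : ‖e‖ = 1 := by simp [he]
  rw [eLpNorm_exponent_top, eLpNorm_one_eq_lintegral_enorm, hb _ hc.measurable.enorm]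
  refine essSup_le_of_ae_le _ (Filter.Eventually.of_forall fun x => ?_)
  rw [lintegral_unique]
  simp only [volume_pi, Measure.pi_univ, Finset.univ_eq_empty, Finset.prod_empty, mul_one]
  set y := (default : Fin 0 → ℝ)
  set u : ℝ → ℝ := fun t => w (b y + t • e)
  have hemb : Topology.IsClosedEmbedding (fun t : ℝ => b y + t • e) := by
      refine Isometry.isClosedEmbedding (Isometry.of_dist_eq fun s t => ?_)
      rw [dist_add_left, dist_eq_norm, ← sub_smul, norm_smul, he1, mul_one, Real.dist_eq,
        Real.norm_eq_abs]
  have hus : HasCompactSupport u := hs.comp_isClosedEmbedding hemb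
  have huc : ContDiff ℝ 1 u := hw.comp (by fun_prop)
  have hd := deriv_slice 0 w (hw.differentiable (by simp)) (b y)
  have h1 := hus.enorm_le_lintegral_Ici_deriv huc (x 0 - b y 0)
  have hx : w x = u (x 0 - b y 0) := by
    simp only [u]
    congr 1
    ext k
    obtain rfl : k = 0 := Subsingleton.elim _ _
    simp [he]
  rw [hx]
  refine h1.trans ((setLIntegral_le_lintegral _ _).trans (lintegral_mono fun t => ?_))
  rw [hd]
  refine enorm_le_iff_norm_le.2 ?_
  refine (ContinuousLinearMap.le_opNorm _ _).trans ?_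
  rw [← he, he1, mul_one]
  exact le_of_eq (congrArg (fun z => ‖fderiv ℝ w (b z + t • e)‖) (Subsingleton.elim _ _))

theorem lpx_nnreal {S : ℝ} (hS : 0 < S) : lpx S = ((S⁻¹.toNNReal : NNReal) : ℝ≥0∞) := by
  rw [lpx, ← ENNReal.ofReal_inv_of_pos hS]; rfl

theorem lpx_one : lpx 1 = 1 := by simp [lpx]

theorem sobF (d : ℕ) (hd : 1 ≤ d) (F : Type) [NormedAddCommGroup F] [NormedSpace ℝ F]
    [FiniteDimensional ℝ F] (S : ℝ) (hS1 : S ≤ 1) (hS : 1 / (d:ℝ) < S) :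
    ∃ C : ℝ, 0 < C ∧ ∀ w : EuclideanSpace ℝ (Fin d) → F, ContDiff ℝ 1 w → HasCompactSupport w →
      eLpNorm w (lpx (S - 1 / d)) volume ≤
        ENNReal.ofReal C * eLpNorm (fderiv ℝ w) (lpx S) volume := by
  have hd0 : (0:ℝ) < d := by exact_mod_cast hd
  have hS0 : 0 < S := lt_trans (by positivity) hS
  set K := SNormLESNormFDerivOfEqConst F (volume : Measure (EuclideanSpace ℝ (Fin d)))
    (S⁻¹.toNNReal : NNReal)
  refine ⟨K + 1, by positivity, fun w hw hs => ?_⟩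
  have := eLpNorm_le_eLpNorm_fderiv_of_eq (volume : Measure (EuclideanSpace ℝ (Fin d))) hw hs
    (p := S⁻¹.toNNReal) (p' := (S - 1/d)⁻¹.toNNReal)
    (by
      rw [← NNReal.coe_le_coe, Real.coe_toNNReal _ (by positivity)]
      exact (one_le_inv₀ hS0).2 hS1)
    (by simp; omega)
    (by
      rw [NNReal.coe_inv, Real.coe_toNNReal _ (by positivity),
        Real.coe_toNNReal _ (by rw [inv_nonneg]; linarith)]
      simp)
  rw [lpx_nnreal hS0, lpx_nnreal (by linarith)]
  refine this.trans ?_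
  gcongr
  rw [← ENNReal.ofReal_coe_nnreal]
  exact ENNReal.ofReal_le_ofReal (by linarith)

theorem sob (d : ℕ) (hd : 1 ≤ d) (S : ℝ) (hS1 : S ≤ 1) (hS : 1 / (d:ℝ) < S ∨ S = 1) :
    ∃ C : ℝ, 0 < C ∧ ∀ w : EuclideanSpace ℝ (Fin d) → ℝ, ContDiff ℝ 1 w → HasCompactSupport w →
      eLpNorm w (lpx (S - 1 / d)) volume ≤
        ENNReal.ofReal C * eLpNorm (fderiv ℝ w) (lpx S) volume := by
  by_cases h : 1 / (d:ℝ) < S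
  · exact sobF d hd ℝ S hS1 h
  · obtain rfl : S = 1 := by tauto
    obtain rfl : d = 1 := by
      by_contra hne
      apply h
      rw [div_lt_one (by positivity)]
      exact_mod_cast (by omega : 1 < d)
    refine ⟨1, one_pos, fun w hw hs => ?_⟩
    simpa [lpx_zero, lpx_one] using sob_one w hw hs

theorem interp_core (d : ℕ) (hd : 1 ≤ d) (A B S γ : ℝ) (hA : 0 ≤ A) (hB : 0 ≤ B) (hγ : 1 ≤ γ)
    (hS : S = B + (γ - 1) * A) (hS1 : S ≤ 1) (hSd : 1 / (d:ℝ) < S ∨ S = 1) :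
    ∃ C : ℝ, 0 < C ∧ ∀ u : EuclideanSpace ℝ (Fin d) → ℝ, ContDiff ℝ 1 u → HasCompactSupport u →
      eLpNorm u (lpx ((S - 1 / d) / γ)) volume ≤ ENNReal.ofReal C *
        (eLpNorm u (lpx A) volume ^ (1 - 1 / γ) *
          eLpNorm (fderiv ℝ u) (lpx B) volume ^ (1 / γ)) := by
  obtain ⟨C, hC, h⟩ := sob d hd S hS1 hSd
  have hγ0 : 0 < γ := by linarith
  rcases hγ.eq_or_lt with h1 | h1
  · subst h1
    refine ⟨C, hC, fun u hu hs => ?_⟩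
    have := h u hu hs
    obtain rfl : S = B := by linarith
    simpa using this
  refine ⟨(C * γ) ^ (1 / γ), by positivity, fun u hu hs => ?_⟩
  have hd0 : (0:ℝ) < d := by exact_mod_cast hd
  have hSd' : 0 ≤ S - 1 / d := by
    rcases hSd with h | h
    · linarith
    · rw [h, sub_nonneg, div_le_one hd0]; exact_mod_cast hd
  have hw := hu.norm_rpow h1
  have hws : HasCompactSupport (fun x => ‖u x‖ ^ γ) :=
    hs.comp_left (g := fun y : ℝ => ‖y‖ ^ γ) (by simp [hγ0.ne'])
  have key := h _ hw hws
  rw [eLpNorm_rpow_lpx u hSd' hγ0] at key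
  have hcf : Continuous (fderiv ℝ u) := hu.continuous_fderiv (by simp)
  have hγ1 : 0 < γ - 1 := by linarith
  have k2 : eLpNorm (fderiv ℝ fun x => ‖u x‖ ^ γ) (lpx S) volume ≤
      ENNReal.ofReal γ * (eLpNorm u (lpx A) volume ^ (γ - 1) *
        eLpNorm (fderiv ℝ u) (lpx B) volume) := by
    calc _ ≤ eLpNorm (fun x => γ * (‖u x‖ ^ (γ - 1) * ‖fderiv ℝ u x‖)) (lpx S) volume :=
          eLpNorm_mono_real fun x => by
            rw [← mul_assoc]; exact norm_fderiv_norm_rpow_le (hu.differentiable (by simp)) h1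
      _ = ENNReal.ofReal γ * eLpNorm (fun x => ‖u x‖ ^ (γ - 1) * ‖fderiv ℝ u x‖) (lpx S) volume := by
          have := eLpNorm_const_smul (μ := volume) (p := lpx S) γ
            (fun x => ‖u x‖ ^ (γ - 1) * ‖fderiv ℝ u x‖)
          rw [Real.enorm_eq_ofReal hγ0.le] at this
          exact this
      _ ≤ _ := by
          gcongr
          have := eLpNorm_mul_holder (μ := volume) (A := (γ - 1) * A) (B := B) (by positivity) hB
            (fun x => ‖u x‖ ^ (γ - 1)) (fun x => ‖fderiv ℝ u x‖)
            ((hu.continuous.norm.rpow_const fun x => Or.inr hγ1.le).aestronglyMeasurable)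
            hcf.norm.aestronglyMeasurable
          rw [eLpNorm_rpow_lpx u (by positivity) hγ1, mul_div_cancel_left₀ _ hγ1.ne',
            eLpNorm_norm, add_comm _ B, ← hS] at this
          exact this
  have k3 := ENNReal.rpow_le_rpow (key.trans (mul_le_mul_right k2 _)) (z := 1/γ) (by positivity)
  rw [← ENNReal.rpow_mul, mul_one_div_cancel hγ0.ne', ENNReal.rpow_one, ← mul_assoc,
    ← ENNReal.ofReal_mul hC.le, ENNReal.mul_rpow_of_nonneg _ _ (by positivity),
    ENNReal.mul_rpow_of_nonneg _ _ (by positivity), ← ENNReal.rpow_mul,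
    ENNReal.ofReal_rpow_of_pos (by positivity)] at k3
  have e : (γ - 1) * (1 / γ) = 1 - 1 / γ := by field_simp
  rw [e] at k3
  exact k3

theorem interp1 (d : ℕ) (hd : 1 ≤ d) (A B τ R : ℝ) (hA : 0 < A) (hB : 0 ≤ B) (hB1 : B ≤ 1)
    (hτ : 0 < τ) (hτ1 : τ < 1) (hR : R = (1 - τ) * A + τ * (B - 1 / d)) (hR0 : 0 < R) :
    ∃ C : ℝ, 0 < C ∧ ∀ u : EuclideanSpace ℝ (Fin d) → ℝ, ContDiff ℝ 1 u → HasCompactSupport u →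
      eLpNorm u (lpx R) volume ≤ ENNReal.ofReal C *
        (eLpNorm u (lpx A) volume ^ (1 - τ) * eLpNorm (fderiv ℝ u) (lpx B) volume ^ τ) := by
  by_cases hS : B + (1 / τ - 1) * A ≤ 1
  · obtain ⟨C, hC, h⟩ := interp_core d hd A B _ (1/τ) hA.le hB
      (by rw [le_div_iff₀ hτ]; linarith) rfl hS (Or.inl (by
        have : B + (1 / τ - 1) * A - 1 / d = R / τ := by rw [hR]; field_simp; ring
        have : 0 < R / τ := by positivity
        linarith))
    refine ⟨C, hC, fun u hu hs => ?_⟩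
    have := h u hu hs
    rw [one_div_one_div] at this
    have e : (B + (1 / τ - 1) * A - 1 / d) / (1 / τ) = R := by rw [hR]; field_simp; ring
    rwa [e] at this
  · push Not at hS
    set γ := 1 + (1 - B) / A with hγd
    have hγ : 1 ≤ γ := by
      have : 0 ≤ (1 - B) / A := div_nonneg (by linarith) hA.le
      linarith
    have hγ0 : 0 < γ := by linarith
    have hγA : (γ - 1) * A = 1 - B := by rw [hγd]; field_simp; ring
    obtain ⟨C, hC, h⟩ := interp_core d hd A B 1 γ hA.le hB hγ (by rw [hγA]; ring) le_rfl (Or.inr rfl)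
    have hlt : γ < 1 / τ := by
      have : (γ - 1) * A < (1/τ - 1) * A := by linarith
      have := lt_of_mul_lt_mul_right this hA.le
      linarith
    set t := τ * γ with ht
    have ht0 : 0 < t := by positivity
    have ht1 : t < 1 := by
      rw [lt_div_iff₀ hτ] at hlt; linarith
    have hd0 : (0:ℝ) < d := by exact_mod_cast hd
    have hd1 : 0 ≤ 1 - 1 / (d:ℝ) := by
      rw [sub_nonneg, div_le_one hd0]; exact_mod_cast hd
    refine ⟨C ^ t, by positivity, fun u hu hs => ?_⟩
    have h1 := h u hu hs
    have h2 := lyapunov u (hu.continuous.aestronglyMeasurable (μ := volume)) (A := A)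
      (B := (1 - 1 / d) / γ) hA.le (by positivity) ht0 ht1
    have e : (1 - t) * A + t * ((1 - 1 / d) / γ) = R := by
      rw [hR, ht]
      have : τ * γ * ((1 - 1 / d) / γ) = τ * (1 - 1 / d) := by field_simp
      rw [this]
      linear_combination (-τ) * hγA
    rw [e] at h2
    refine h2.trans ?_
    calc _ ≤ eLpNorm u (lpx A) volume ^ (1 - t) * (ENNReal.ofReal C *
        (eLpNorm u (lpx A) volume ^ (1 - 1 / γ) *
          eLpNorm (fderiv ℝ u) (lpx B) volume ^ (1 / γ))) ^ t := by gcongr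
      _ = _ := by
        have hg : 0 ≤ 1 - 1 / γ := by rw [sub_nonneg, div_le_one hγ0]; exact hγ
        rw [ENNReal.mul_rpow_of_nonneg _ _ ht0.le, ENNReal.mul_rpow_of_nonneg _ _ ht0.le,
          ← ENNReal.rpow_mul, ← ENNReal.rpow_mul, ENNReal.ofReal_rpow_of_pos hC]
        have e1 : 1 / γ * t = τ := by rw [ht]; field_simp
        have e2 : (1 - τ) = (1 - t) + (1 - 1 / γ) * t := by linear_combination e1
        rw [e1, e2, ENNReal.rpow_add_of_nonneg _ _ (by linarith) (by positivity)]
        ring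

theorem iter_cd {d : ℕ} (f : EuclideanSpace ℝ (Fin d) → ℝ) (hf : ContDiff ℝ (⊤ : ℕ∞) f) (k : ℕ) :
    ContDiff ℝ (⊤ : ℕ∞) (iteratedFDeriv ℝ k f) :=
  hf.iteratedFDeriv_right (by exact_mod_cast le_top)

theorem sob_chain (d : ℕ) (hd : 1 ≤ d) (n : ℕ) : ∀ (i : ℕ) (R : ℝ), 0 < R → R + n / d ≤ 1 →
    ∃ C : ℝ, 0 < C ∧ ∀ f : EuclideanSpace ℝ (Fin d) → ℝ,
      ContDiff ℝ (⊤ : ℕ∞) f → HasCompactSupport f →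
      eLpNorm (iteratedFDeriv ℝ i f) (lpx R) volume ≤ ENNReal.ofReal C *
        eLpNorm (iteratedFDeriv ℝ (i + n) f) (lpx (R + n / d)) volume := by
  have hd0 : (0:ℝ) < d := by exact_mod_cast hd
  induction n with
  | zero => intro i R _ _; exact ⟨1, one_pos, fun f _ _ => by simp⟩
  | succ n ih =>
    intro i R hR hR1
    have e : R + 1 / d + n / d = R + ((n+1:ℕ):ℝ) / d := by push_cast; ring
    have hn : 0 ≤ (n:ℝ)/d := by positivity
    have h1d : 0 ≤ 1/(d:ℝ) := by positivity
    obtain ⟨C1, hC1, h1⟩ := sob d hd (R + 1 / d) (by linarith) (Or.inl (by linarith))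
    obtain ⟨C2, hC2, h2⟩ := ih (i+1) (R + 1 / d) (by positivity) (by linarith)
    refine ⟨d ^ i * (C1 * C2), by positivity, fun f hf hs => ?_⟩
    have g2 := h2 f hf hs
    rw [e] at g2
    have e4 : i + (n + 1) = i + 1 + n := by omega
    rw [e4, ENNReal.ofReal_mul (by positivity), ENNReal.ofReal_pow (by positivity),
        ENNReal.ofReal_natCast, mul_assoc]
    refine eLpNorm_iter_le f hf i (by linarith) _ _ fun w => ?_
    have g1 := h1 _ ((cp_contDiff f hf w).of_le (by exact_mod_cast le_top)) (cp_compact f hs w)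
    rw [add_sub_cancel_right] at g1
    refine g1.trans ?_
    rw [ENNReal.ofReal_mul hC1.le, mul_assoc]
    gcongr
    exact (eLpNorm_mono fun x => norm_fderiv_cp_le f hf w x).trans g2

theorem globalGN (d : ℕ) (hd : 1 ≤ d) (i m : ℕ) (hi : 1 ≤ i) (hm : 1 ≤ m) (P Q R θ : ℝ)
    (hP : 0 ≤ P) (hQ : 0 ≤ Q) (hP1 : P ≤ 1) (hQ1 : Q ≤ 1) (hR0 : 0 < R)
    (hθl : (i:ℝ) / m ≤ θ) (hθu : θ < 1)
    (hR : R = (i:ℝ) / d + θ * (Q - (m:ℝ) / d) + (1 - θ) * P) :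
    ∃ C : ℝ, 0 < C ∧ ∀ f : EuclideanSpace ℝ (Fin d) → ℝ,
      ContDiff ℝ (⊤ : ℕ∞) f → HasCompactSupport f →
      eLpNorm (iteratedFDeriv ℝ i f) (lpx R) volume ≤ ENNReal.ofReal C *
        (eLpNorm f (lpx P) volume ^ (1 - θ) *
          eLpNorm (iteratedFDeriv ℝ m f) (lpx Q) volume ^ θ) := by
  have hd0 : (0:ℝ) < d := by exact_mod_cast hd
  have hm0 : (0:ℝ) < m := by exact_mod_cast hm
  have hi0 : (0:ℝ) < i := by exact_mod_cast hi
  have him : (i:ℝ) ≤ θ * m := by rwa [div_le_iff₀ hm0] at hθl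
  have hθ0 : 0 < θ := lt_of_lt_of_le (by positivity) hθl
  have hPQ : 0 < P + Q := by
    by_contra hneg
    have hP0 : P = 0 := by linarith
    have hQ0 : Q = 0 := by linarith
    subst hP0 hQ0
    have : R = (i - θ * m) / d := by rw [hR]; ring
    have : R ≤ 0 := by rw [this]; exact div_nonpos_of_nonpos_of_nonneg (by linarith) hd0.le
    linarith
  set k := ⌊θ * m⌋₊ with hk
  have hk1 : (k:ℝ) ≤ θ * m := Nat.floor_le (by positivity)
  have hk2 : θ * m < k + 1 := Nat.lt_floor_add_one _
  have hik : i ≤ k := Nat.le_floor him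
  have hkm : k < m := by
    have : (k:ℝ) < m := by nlinarith
    exact_mod_cast this
  set τ := θ * m - k with hτ
  obtain ⟨n, hn⟩ : ∃ n, k = i + n := ⟨k - i, by omega⟩
  have hnR : (k:ℝ) = i + n := by exact_mod_cast hn
  have hR1 : R + n / d = (1 - θ) * P + θ * Q - τ / d := by
    rw [hR, hτ, hnR]; ring
  have hτd : 0 ≤ τ / d := div_nonneg (by linarith) hd0.le
  obtain ⟨C1, hC1, h1⟩ := sob_chain d hd n i R hR0 (by rw [hR1]; nlinarith)
  obtain ⟨C2, hC2, h2⟩ := endpoint d hd m hm P Q hP hQ hP1 hQ1 hPQ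
  set X : ℕ → ℝ := fun k => (1 - (k:ℝ)/m) * P + (k:ℝ)/m * Q with hX
  have hk0 : 0 < (k:ℝ)/m := div_pos (by exact_mod_cast (by omega : 0 < k)) hm0
  have hkk : 0 < 1 - (k:ℝ)/m := by
    have : (k:ℝ)/m < 1 := by rw [div_lt_one hm0]; exact_mod_cast hkm
    linarith
  have hXk : 0 < X k := by
    simp only [hX]
    rcases hP.eq_or_lt with h | h
    · have : 0 < Q := by linarith
      positivity
    · positivity
  have hk3 : 0 < ((k+1:ℕ):ℝ)/m := by positivity
  have hk4 : 0 ≤ 1 - ((k+1:ℕ):ℝ)/m := by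
    rw [sub_nonneg, div_le_one hm0]; exact_mod_cast hkm
  have hXk1 : 0 ≤ X (k+1) := by
    simp only [hX]; positivity
  have hXk2 : X (k+1) ≤ 1 := by
    simp only [hX]; nlinarith
  have hτe : (1 - τ) * ((k:ℝ)/m) + τ * (((k+1:ℕ):ℝ)/m) = θ := by
    rw [hτ]; push_cast; field_simp; ring
  have hXe : (1 - τ) * X k + τ * X (k+1) = (1 - θ) * P + θ * Q := by
    simp only [hX]
    linear_combination (Q - P) * hτe
  have hmid : ∃ C3 : ℝ, 0 < C3 ∧ ∀ f : EuclideanSpace ℝ (Fin d) → ℝ,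
      ContDiff ℝ (⊤ : ℕ∞) f → HasCompactSupport f →
      eLpNorm (iteratedFDeriv ℝ k f) (lpx (R + n / d)) volume ≤ ENNReal.ofReal C3 *
        (eLpNorm (iteratedFDeriv ℝ k f) (lpx (X k)) volume ^ (1 - τ) *
          eLpNorm (iteratedFDeriv ℝ (k+1) f) (lpx (X (k+1))) volume ^ τ) := by
    rcases (by linarith : 0 ≤ τ).eq_or_lt with h | h
    · refine ⟨1, one_pos, fun f _ _ => ?_⟩
      have : R + n / d = X k := by rw [hR1, ← hXe, ← h]; ring
      rw [this, ← h]; simp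
    · have hnd : 0 ≤ (n:ℝ)/d := by positivity
      obtain ⟨C3, hC3, h3⟩ := interp1 d hd (X k) (X (k+1)) τ (R + n / d) hXk hXk1 hXk2 h
        (by linarith) (by rw [hR1, ← hXe]; ring) (by linarith)
      refine ⟨d ^ k * C3, by positivity, fun f hf hs => ?_⟩
      rw [ENNReal.ofReal_mul (by positivity), ENNReal.ofReal_pow (by positivity),
        ENNReal.ofReal_natCast, mul_assoc]
      refine eLpNorm_iter_le f hf k (by rw [hR1]; nlinarith) _ _ fun w => ?_
      refine (h3 _ ((cp_contDiff f hf w).of_le (by exact_mod_cast le_top)) (cp_compact f hs w)).trans ?_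
      gcongr
      · linarith
      · exact eLpNorm_mono fun x => cp_le f w x
      · exact eLpNorm_mono fun x => norm_fderiv_cp_le f hf w x
  obtain ⟨C3, hC3, h3⟩ := hmid
  refine ⟨C1 * C3 * C2, by positivity, fun f hf hs => ?_⟩
  have g1 := h1 f hf hs
  rw [← hn] at g1
  have g2 := h2 f hf hs k hkm.le
  have g3 := h2 f hf hs (k+1) hkm
  set N0 := eLpNorm f (lpx P) volume
  set Nm := eLpNorm (iteratedFDeriv ℝ m f) (lpx Q) volume
  have hτ1 : 0 ≤ 1 - τ := by linarith
  have hτ0 : 0 ≤ τ := by linarith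
  calc _ ≤ _ := g1
    _ ≤ ENNReal.ofReal C1 * (ENNReal.ofReal C3 *
        ((ENNReal.ofReal C2 * (N0 ^ (1 - (k:ℝ)/m) * Nm ^ ((k:ℝ)/m))) ^ (1 - τ) *
        (ENNReal.ofReal C2 * (N0 ^ (1 - ((k+1:ℕ):ℝ)/m) * Nm ^ (((k+1:ℕ):ℝ)/m))) ^ τ)) := by
      gcongr
      refine (h3 f hf hs).trans ?_
      gcongr
    _ = _ := by
      simp only [ENNReal.mul_rpow_of_nonneg _ _ hτ1, ENNReal.mul_rpow_of_nonneg _ _ hτ0,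
        ← ENNReal.rpow_mul]
      have eC : ENNReal.ofReal C2 = ENNReal.ofReal C2 ^ (1 - τ) * ENNReal.ofReal C2 ^ τ := by
        rw [← ENNReal.rpow_add_of_nonneg _ _ hτ1 hτ0]; simp
      have e0 : N0 ^ (1 - θ) = N0 ^ ((1 - (k:ℝ)/m) * (1 - τ)) * N0 ^ ((1 - ((k+1:ℕ):ℝ)/m) * τ) := by
        rw [← ENNReal.rpow_add_of_nonneg _ _ (by positivity) (by positivity)]
        congr 1; linear_combination hτe
      have e1 : Nm ^ θ = Nm ^ ((k:ℝ)/m * (1 - τ)) * Nm ^ (((k+1:ℕ):ℝ)/m * τ) := by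
        rw [← ENNReal.rpow_add_of_nonneg _ _ (by positivity) (by positivity)]
        congr 1; linear_combination -hτe
      rw [e0, e1, ENNReal.ofReal_mul (by positivity), ENNReal.ofReal_mul (by positivity)]
      conv_rhs => rw [eC]
      ring

/-- The Jensen inequality on a finite measure space. -/
theorem jensen_pow {α : Type*} [MeasurableSpace α] (ν : Measure α) (h : α → ℝ≥0∞)
    (hh : Measurable h) {q : ℝ} (hq : 1 ≤ q) :
    (∫⁻ x, h x ∂ν) ^ q ≤ (ν Set.univ) ^ (q - 1) * ∫⁻ x, h x ^ q ∂ν := by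
  have hq0 : 0 < q := by linarith
  have h1 : 0 ≤ 1 - 1 / q := by rw [sub_nonneg, div_le_one hq0]; exact hq
  have := ENNReal.lintegral_mul_norm_pow_le (μ := ν) (f := fun x => h x ^ q) (g := fun _ => 1)
    (hh.pow_const q).aemeasurable aemeasurable_const (p := 1 / q) (q := 1 - 1 / q)
    (by positivity) h1 (by ring)
  simp only [← ENNReal.rpow_mul, mul_one_div_cancel hq0.ne', ENNReal.rpow_one, ENNReal.one_rpow,
    mul_one, lintegral_const, one_mul] at this
  refine (ENNReal.rpow_le_rpow this hq0.le).trans (le_of_eq ?_)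
  rw [ENNReal.mul_rpow_of_nonneg _ _ hq0.le, ← ENNReal.rpow_mul, ← ENNReal.rpow_mul,
    one_div_mul_cancel hq0.ne', ENNReal.rpow_one, mul_comm]
  congr 2
  field_simp

theorem homothety {d : ℕ} (G : EuclideanSpace ℝ (Fin d) → ℝ≥0∞) (hG : Measurable G) (s : ℝ)
    (hs : 1 / 2 ≤ s) (a : EuclideanSpace ℝ (Fin d)) :
    ∫⁻ x, G (s • x + a) ≤ ENNReal.ofReal (2 ^ d) * ∫⁻ x, G x := by
  have hs0 : 0 < s := by linarith
  have h1 : ∫⁻ x, G (s • x + a) = ∫⁻ y, G (y + a) ∂(Measure.map (s • ·) volume) := by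
    have hg : Measurable fun y => G (y + a) := hG.comp (measurable_add_const a)
    rw [lintegral_map hg (measurable_const_smul s)]
  rw [h1, Measure.map_addHaar_smul _ hs0.ne', lintegral_smul_measure,
    lintegral_add_right_eq_self]
  simp only [finrank_euclideanSpace, Fintype.card_fin, smul_eq_mul]
  gcongr
  rw [abs_of_nonneg (by positivity), ← inv_pow]
  gcongr
  rw [inv_le_comm₀ hs0 (by norm_num)]
  linarith

theorem homothety_ball {d : ℕ} (G : EuclideanSpace ℝ (Fin d) → ℝ≥0∞) (hG : Measurable G)
    (B : Set (EuclideanSpace ℝ (Fin d))) (hB : MeasurableSet B) (hc : Convex ℝ B) (s : ℝ)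
    (hs : 1 / 2 ≤ s) (hs1 : s ≤ 1) (y : EuclideanSpace ℝ (Fin d)) (hy : y ∈ B) :
    ∫⁻ x in B, G (s • x + (1 - s) • y) ≤ ENNReal.ofReal (2 ^ d) * ∫⁻ x in B, G x := by
  rw [← lintegral_indicator hB, ← lintegral_indicator hB]
  refine le_trans (lintegral_mono fun x => ?_) (homothety _ (hG.indicator hB) s hs ((1 - s) • y))
  by_cases hx : x ∈ B
  · have : s • x + (1 - s) • y ∈ B := hc hx hy (by linarith) (by linarith) (by ring)
    rw [Set.indicator_of_mem hx, Set.indicator_of_mem this]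
  · rw [Set.indicator_of_notMem hx]; exact zero_le

theorem double_homothety {d : ℕ} (G : EuclideanSpace ℝ (Fin d) → ℝ≥0∞) (hG : Measurable G)
    (B : Set (EuclideanSpace ℝ (Fin d))) (hB : MeasurableSet B) (hc : Convex ℝ B) (t : ℝ)
    (ht : 0 ≤ t) (ht1 : t ≤ 1) :
    ∫⁻ x in B, ∫⁻ y in B, G ((1 - t) • x + t • y) ≤
      ENNReal.ofReal (2 ^ d) * volume B * ∫⁻ x in B, G x := by
  have aux : ∀ s : ℝ, 1 / 2 ≤ s → s ≤ 1 → ∫⁻ y in B, ∫⁻ x in B, G (s • x + (1 - s) • y) ≤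
      ENNReal.ofReal (2 ^ d) * volume B * ∫⁻ x in B, G x := by
    intro s hs hs1
    calc _ ≤ ∫⁻ y in B, ENNReal.ofReal (2 ^ d) * ∫⁻ x in B, G x :=
          setLIntegral_mono' hB fun y hy => homothety_ball G hG B hB hc s hs hs1 y hy
      _ = _ := by rw [setLIntegral_const]; ring
  rcases le_total t (1/2) with h | h
  · rw [lintegral_lintegral_swap]
    · have := aux (1 - t) (by linarith) (by linarith)
      rwa [sub_sub_cancel] at this
    · refine (hG.comp ?_).aemeasurable
      fun_prop
  · have := aux t h ht1
    simpa only [add_comm] using this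

theorem seg_bound {d : ℕ} (u : EuclideanSpace ℝ (Fin d) → ℝ) (hu : ContDiff ℝ 1 u)
    (x y : EuclideanSpace ℝ (Fin d)) :
    ‖u y - u x‖ₑ ≤ ∫⁻ t in Set.Icc (0:ℝ) 1, ‖fderiv ℝ u ((1 - t) • x + t • y)‖ₑ * ‖y - x‖ₑ := by
  set v : ℝ → ℝ := fun t => u ((1 - t) • x + t • y)
  have hv : ContDiff ℝ 1 v := hu.comp (by fun_prop)
  have := enorm_sub_le_lintegral_deriv_of_contDiffOn_Icc (hv.contDiffOn (s := Set.Icc 0 1)) zero_le_one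
  have e1 : v 1 = u y := by simp [v]
  have e0 : v 0 = u x := by simp [v]
  rw [e1, e0] at this
  refine this.trans (lintegral_mono fun t => ?_)
  have h1 : HasDerivAt (fun t : ℝ => (1 - t) • x + t • y) (y - x) t := by
    have a1 : HasDerivAt (fun t : ℝ => (1 - t) • x) ((-1:ℝ) • x) t := by
      simpa using ((hasDerivAt_id t).const_sub 1).smul_const x
    have a2 : HasDerivAt (fun t : ℝ => t • y) ((1:ℝ) • y) t := (hasDerivAt_id t).smul_const y
    have e : y - x = (-1:ℝ) • x + (1:ℝ) • y := by module
    rw [e]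
    exact a1.add a2
  have hd : deriv v t = fderiv ℝ u ((1 - t) • x + t • y) (y - x) :=
    ((hu.differentiable (by simp) _).hasFDerivAt.comp_hasDerivAt t h1).deriv
  rw [hd]
  exact ContinuousLinearMap.le_opENorm _ _

theorem double_osc {d : ℕ} (B : Set (EuclideanSpace ℝ (Fin d))) (hB : MeasurableSet B)
    (hc : Convex ℝ B) (D : ℝ) (hD : ∀ x ∈ B, ∀ y ∈ B, ‖y - x‖ ≤ D) (q : ℝ) (hq : 1 ≤ q)
    (u : EuclideanSpace ℝ (Fin d) → ℝ) (hu : ContDiff ℝ 1 u) :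
    ∫⁻ x in B, ∫⁻ y in B, ‖u y - u x‖ₑ ^ q ≤ ENNReal.ofReal D ^ q *
      (ENNReal.ofReal (2 ^ d) * volume B * ∫⁻ x in B, ‖fderiv ℝ u x‖ₑ ^ q) := by
  have hq0 : 0 < q := by linarith
  have hcf : Continuous (fderiv ℝ u) := hu.continuous_fderiv (by simp)
  set G : EuclideanSpace ℝ (Fin d) → ℝ≥0∞ := fun z => ‖fderiv ℝ u z‖ₑ ^ q
  have hG : Measurable G := hcf.measurable.enorm.pow_const q
  have hpt : ∀ x ∈ B, ∀ y ∈ B, ‖u y - u x‖ₑ ^ q ≤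
      ENNReal.ofReal D ^ q * ∫⁻ t in Set.Icc (0:ℝ) 1, G ((1 - t) • x + t • y) := by
    intro x hx y hy
    have hm : Measurable fun t : ℝ => ‖fderiv ℝ u ((1 - t) • x + t • y)‖ₑ :=
      (hcf.comp (by fun_prop : Continuous fun t : ℝ => (1 - t) • x + t • y)).measurable.enorm
    have h1 := seg_bound u hu x y
    rw [lintegral_mul_const _ hm] at h1
    have h2 := ENNReal.rpow_le_rpow h1 hq0.le
    rw [ENNReal.mul_rpow_of_nonneg _ _ hq0.le] at h2
    have h3 := jensen_pow (volume.restrict (Set.Icc (0:ℝ) 1)) _ hm hq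
    simp only [Measure.restrict_apply_univ, Real.volume_Icc, sub_zero, ENNReal.ofReal_one,
      ENNReal.one_rpow, one_mul] at h3
    refine h2.trans ?_
    rw [mul_comm]
    gcongr
    rw [← ofReal_norm]
    exact ENNReal.ofReal_le_ofReal (hD x hx y hy)
  calc _ ≤ ∫⁻ x in B, ∫⁻ y in B, ENNReal.ofReal D ^ q *
        ∫⁻ t in Set.Icc (0:ℝ) 1, G ((1 - t) • x + t • y) :=
        setLIntegral_mono' hB fun x hx => setLIntegral_mono' hB fun y hy => hpt x hx y hy
    _ = ENNReal.ofReal D ^ q * ∫⁻ x in B, ∫⁻ y in B,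
        ∫⁻ t in Set.Icc (0:ℝ) 1, G ((1 - t) • x + t • y) := by
        have hne : ENNReal.ofReal D ^ q ≠ ∞ := ENNReal.rpow_ne_top_of_nonneg hq0.le ENNReal.ofReal_ne_top
        rw [← lintegral_const_mul' _ _ hne]
        refine lintegral_congr fun x => ?_
        rw [lintegral_const_mul' _ _ hne]
    _ = ENNReal.ofReal D ^ q * ∫⁻ t in Set.Icc (0:ℝ) 1, ∫⁻ x in B, ∫⁻ y in B,
        G ((1 - t) • x + t • y) := by
        congr 1
        have hm3 : Measurable fun z : (EuclideanSpace ℝ (Fin d) × ℝ) × EuclideanSpace ℝ (Fin d) =>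
            G ((1 - z.1.2) • z.1.1 + z.1.2 • z.2) := hG.comp (by fun_prop)
        have e1 : ∀ x, ∫⁻ y in B, ∫⁻ t in Set.Icc (0:ℝ) 1, G ((1 - t) • x + t • y) =
            ∫⁻ t in Set.Icc (0:ℝ) 1, ∫⁻ y in B, G ((1 - t) • x + t • y) := fun x => by
          rw [lintegral_lintegral_swap]
          refine (hG.comp ?_).aemeasurable
          fun_prop
        simp only [e1]
        rw [lintegral_lintegral_swap]
        exact (Measurable.lintegral_prod_right' hm3).aemeasurable
    _ ≤ ENNReal.ofReal D ^ q * ∫⁻ t in Set.Icc (0:ℝ) 1,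
          (ENNReal.ofReal (2 ^ d) * volume B * ∫⁻ x in B, G x) := by
        refine mul_le_mul_right ?_ _
        exact setLIntegral_mono' measurableSet_Icc fun t ht =>
          double_homothety G hG B hB hc t ht.1 ht.2
    _ = _ := by simp

theorem ball_sup {d : ℕ} {F : Type*} [NormedAddCommGroup F] (B : Set (EuclideanSpace ℝ (Fin d)))
    (hB : IsOpen B) (f : EuclideanSpace ℝ (Fin d) → F) (hf : Continuous f) (x) (hx : x ∈ B) :
    ‖f x‖ₑ ≤ eLpNorm f ∞ (volume.restrict B) := by
  by_contra hlt
  push Not at hlt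
  set M := eLpNorm f ∞ (volume.restrict B) with hM
  have hopen : IsOpen {x | x ∈ B ∧ M < ‖f x‖ₑ} :=
    hB.inter (isOpen_lt continuous_const hf.enorm)
  have h0 : volume {x | x ∈ B ∧ M < ‖f x‖ₑ} = 0 := by
    have h1 : ∀ᵐ x ∂(volume.restrict B), ‖f x‖ₑ ≤ M := by
      rw [hM, eLpNorm_exponent_top]; exact enorm_ae_le_eLpNormEssSup f _
    rw [ae_restrict_iff' hB.measurableSet, ae_iff] at h1
    convert h1 using 3 with x
    simp
  rw [hopen.measure_eq_zero_iff volume] at h0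
  have : x ∈ {x | x ∈ B ∧ M < ‖f x‖ₑ} := ⟨hx, hlt⟩
  rw [h0] at this
  exact this

theorem osc_pt {d : ℕ} (B : Set (EuclideanSpace ℝ (Fin d))) (hB : MeasurableSet B)
    (η : EuclideanSpace ℝ (Fin d) → ℝ) (hη : Continuous η) (hηs : HasCompactSupport η)
    (hηB : ∀ x, x ∉ B → η x = 0) (K : ℝ) (hK : ∀ x, ‖η x‖ ≤ K) (h1 : ∫ x, η x = 1)
    (u : EuclideanSpace ℝ (Fin d) → ℝ) (hu : Continuous u) (x) :
    ‖u x - ∫ y, η y * u y‖ₑ ≤ ENNReal.ofReal K * ∫⁻ y in B, ‖u y - u x‖ₑ := by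
  have hi1 : Integrable η := hη.integrable_of_hasCompactSupport hηs
  have hi2 : Integrable (fun y => η y * u y) :=
    (hη.mul hu).integrable_of_hasCompactSupport hηs.mul_right
  have e : u x - ∫ y, η y * u y = ∫ y, η y * (u x - u y) := by
    simp_rw [mul_sub]
    rw [integral_sub (hi1.mul_const _) hi2, integral_mul_const, h1, one_mul]
  rw [e]
  refine (enorm_integral_le_lintegral_enorm _).trans ?_
  rw [← lintegral_const_mul' _ _ ENNReal.ofReal_ne_top, ← lintegral_indicator hB]
  refine lintegral_mono fun y => ?_
  by_cases hy : y ∈ B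
  · rw [Set.indicator_of_mem hy, enorm_mul, ← neg_sub (u y), enorm_neg]
    gcongr
    rw [← ofReal_norm]
    exact ENNReal.ofReal_le_ofReal (hK y)
  · rw [hηB y hy]; simp

theorem osc {d : ℕ} (Q : ℝ) (hQ : 0 ≤ Q) (hQ1 : Q ≤ 1)
    (η : EuclideanSpace ℝ (Fin d) → ℝ) (hη : Continuous η) (hηs : HasCompactSupport η)
    (hηB : ∀ x, x ∉ Metric.ball (0 : EuclideanSpace ℝ (Fin d)) 2 → η x = 0) (h1 : ∫ x, η x = 1) :
    ∃ C : ℝ≥0∞, C ≠ ∞ ∧ ∀ u : EuclideanSpace ℝ (Fin d) → ℝ, ContDiff ℝ 1 u →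
      eLpNorm (fun x => u x - ∫ y, η y * u y) (lpx Q)
        (volume.restrict (Metric.ball (0 : EuclideanSpace ℝ (Fin d)) 2)) ≤
      C * eLpNorm (fderiv ℝ u) (lpx Q)
        (volume.restrict (Metric.ball (0 : EuclideanSpace ℝ (Fin d)) 2)) := by
  set B := Metric.ball (0 : EuclideanSpace ℝ (Fin d)) 2 with hBdef
  have hBo : IsOpen B := Metric.isOpen_ball
  have hBm : MeasurableSet B := hBo.measurableSet
  have hBc : Convex ℝ B := convex_ball _ _
  have hBf : volume B ≠ ∞ := measure_ball_lt_top.ne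
  have hD : ∀ x ∈ B, ∀ y ∈ B, ‖y - x‖ ≤ 4 := by
    intro x hx y hy
    simp only [hBdef, mem_ball_zero_iff] at hx hy
    linarith [norm_sub_le y x]
  obtain ⟨K, hK⟩ := hη.bounded_above_of_compact_support hηs
  rcases hQ.eq_or_lt with h | h
  · subst h
    refine ⟨ENNReal.ofReal K * (volume B * ENNReal.ofReal 4), ?_, fun u hu => ?_⟩
    · finiteness
    rw [lpx_zero]
    have hcf : Continuous (fderiv ℝ u) := hu.continuous_fderiv (by simp)
    set M := eLpNorm (fderiv ℝ u) ∞ (volume.restrict B)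
    rw [eLpNorm_exponent_top]
    refine eLpNormEssSup_le_of_ae_enorm_bound ?_
    filter_upwards [ae_restrict_mem hBm] with x hx
    refine (osc_pt B hBm η hη hηs hηB K hK h1 u hu.continuous x).trans ?_
    have : ∀ y ∈ B, ‖u y - u x‖ₑ ≤ M * ENNReal.ofReal 4 := by
      intro y hy
      refine (seg_bound u hu x y).trans ?_
      refine (setLIntegral_mono' (g := fun _ => M * ENNReal.ofReal 4) measurableSet_Icc
        fun t ht => ?_).trans (by simp)
      have hz : (1 - t) • x + t • y ∈ B := hBc hx hy (by linarith [ht.2]) ht.1 (by ring)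
      gcongr
      · exact ball_sup B hBo _ hcf _ hz
      · rw [← ofReal_norm]; exact ENNReal.ofReal_le_ofReal (hD x hx y hy)
    refine (mul_le_mul_right (setLIntegral_mono' hBm this) _).trans ?_
    rw [setLIntegral_const]
    apply le_of_eq; ring
  · have hq : 1 ≤ 1 / Q := by rw [le_div_iff₀ h]; linarith
    have hq0 : 0 < 1 / Q := by positivity
    set A : ℝ≥0∞ := ENNReal.ofReal K ^ (1 / Q) * (volume B ^ (1 / Q - 1) *
      (ENNReal.ofReal 4 ^ (1 / Q) * (ENNReal.ofReal (2 ^ d) * volume B))) with hA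
    have hAt : A ≠ ∞ := by
      have h5 : 0 ≤ 1 / Q - 1 := by linarith
      rw [hA]
      refine ENNReal.mul_ne_top (ENNReal.rpow_ne_top_of_nonneg hq0.le ENNReal.ofReal_ne_top)
        (ENNReal.mul_ne_top (ENNReal.rpow_ne_top_of_nonneg h5 hBf) (ENNReal.mul_ne_top
          (ENNReal.rpow_ne_top_of_nonneg hq0.le ENNReal.ofReal_ne_top)
          (ENNReal.mul_ne_top ENNReal.ofReal_ne_top hBf)))
    refine ⟨A ^ Q, ENNReal.rpow_ne_top_of_nonneg h.le hAt, fun u hu => ?_⟩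
    rw [nm_pos _ h, nm_pos _ h, ← ENNReal.mul_rpow_of_nonneg _ _ h.le]
    refine ENNReal.rpow_le_rpow ?_ h.le
    have hpt : ∀ x, ‖u x - ∫ y, η y * u y‖ₑ ^ (1 / Q) ≤ ENNReal.ofReal K ^ (1 / Q) *
        (volume B ^ (1 / Q - 1) * ∫⁻ y in B, ‖u y - u x‖ₑ ^ (1 / Q)) := by
      intro x
      refine (ENNReal.rpow_le_rpow (osc_pt B hBm η hη hηs hηB K hK h1 u hu.continuous x)
        hq0.le).trans ?_
      rw [ENNReal.mul_rpow_of_nonneg _ _ hq0.le]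
      gcongr
      have hm : Measurable fun y => ‖u y - u x‖ₑ :=
        (hu.continuous.sub continuous_const).measurable.enorm
      have := jensen_pow (volume.restrict B) _ hm hq
      rwa [Measure.restrict_apply_univ] at this
    refine (lintegral_mono hpt).trans ?_
    have n1 : ENNReal.ofReal K ^ (1 / Q) ≠ ∞ :=
      ENNReal.rpow_ne_top_of_nonneg hq0.le ENNReal.ofReal_ne_top
    have n2 : volume B ^ (1 / Q - 1) ≠ ∞ :=
      ENNReal.rpow_ne_top_of_nonneg (by linarith) hBf
    rw [lintegral_const_mul' _ _ n1, lintegral_const_mul' _ _ n2]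
    have := double_osc B hBm hBc 4 hD (1 / Q) hq u hu
    refine (mul_le_mul_right (mul_le_mul_right this _) _).trans (le_of_eq ?_)
    rw [hA]; ring

/-- moving derivatives onto the test function -/
theorem ibp {d : ℕ} (k : ℕ) : ∀ (w : Fin k → Fin d) (η : EuclideanSpace ℝ (Fin d) → ℝ),
    ContDiff ℝ (⊤ : ℕ∞) η → HasCompactSupport η → 
    tsupport η ⊆ Metric.ball (0 : EuclideanSpace ℝ (Fin d)) 2 →
    ∃ η' : EuclideanSpace ℝ (Fin d) → ℝ, ContDiff ℝ (⊤ : ℕ∞) η' ∧ HasCompactSupport η' ∧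
      tsupport η' ⊆ Metric.ball (0 : EuclideanSpace ℝ (Fin d)) 2 ∧
      ∀ g : EuclideanSpace ℝ (Fin d) → ℝ, ContDiff ℝ (⊤ : ℕ∞) g →
        ∫ x, η x * cp g w x = ∫ x, η' x * g x := by
  induction k with
  | zero =>
    intro w η h1 h2 h3
    refine ⟨η, h1, h2, h3, fun g _ => ?_⟩
    simp [cp]
  | succ k ih =>
    intro w η h1 h2 h3
    have hcd : ContDiff ℝ (⊤ : ℕ∞) (fun x => - pd (w 0) η x) := (pd_contDiff (w 0) η h1).neg
    have hts : tsupport (fun x => - pd (w 0) η x) ⊆ tsupport η := by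
      have a1 : tsupport (fun x => - pd (w 0) η x) ⊆ tsupport (fderiv ℝ η) := by
        refine closure_mono fun x hx => ?_
        simp only [Function.mem_support, pd] at hx ⊢
        intro h; rw [h] at hx; simp at hx
      exact a1.trans (tsupport_fderiv_subset ℝ)
    have hcs : HasCompactSupport (fun x => - pd (w 0) η x) := (pd_compact (w 0) η h2).neg
    obtain ⟨η', a, b, c, e⟩ := ih (Fin.tail w) _ hcd hcs (hts.trans h3)
    refine ⟨η', a, b, c, fun g hg => ?_⟩
    rw [← e g hg]
    have hw : cp g w = pd (w 0) (cp g (Fin.tail w)) := by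
      rw [pd_cp g hg, Fin.cons_self_tail]
    rw [hw]
    have hcg := cp_contDiff g hg (Fin.tail w)
    have := integral_mul_fderiv_eq_neg_fderiv_mul_of_integrable (μ := volume) (f := η)
      (g := cp g (Fin.tail w)) (v := EuclideanSpace.single (w 0) (1:ℝ)) ?_ ?_ ?_
      (fun x _ => h1.differentiable (by simp) x)
      (fun x _ => hcg.differentiable (by simp) x)
    · simp only [pd, neg_mul, integral_neg] at this ⊢
      exact this
    · exact ((pd_contDiff (w 0) η h1).continuous.mul hcg.continuous).integrable_of_hasCompactSupport
        (pd_compact (w 0) η h2).mul_right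
    · exact (h1.continuous.mul (pd_contDiff (w 0) _ hcg).continuous).integrable_of_hasCompactSupport
        h2.mul_right
    · exact (h1.continuous.mul hcg.continuous).integrable_of_hasCompactSupport
        h2.mul_right

theorem bump_exists (d : ℕ) : ∃ η : EuclideanSpace ℝ (Fin d) → ℝ, ContDiff ℝ (⊤ : ℕ∞) η ∧
    HasCompactSupport η ∧ tsupport η ⊆ Metric.ball (0 : EuclideanSpace ℝ (Fin d)) 2 ∧
    ∫ x, η x = 1 := by
  let b : ContDiffBump (0 : EuclideanSpace ℝ (Fin d)) := ⟨1/2, 1, by norm_num, by norm_num⟩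
  refine ⟨b.normed volume, b.contDiff_normed, b.hasCompactSupport_normed, ?_, b.integral_normed⟩
  rw [b.tsupport_normed_eq]
  exact Metric.closedBall_subset_ball (by norm_num [b])

theorem lower_cp (d k : ℕ) (P Q : ℝ) (hP : 0 ≤ P) (hQ : 0 ≤ Q) (hP1 : P ≤ 1) (hQ1 : Q ≤ 1)
    (w : Fin k → Fin d) :
    ∃ C : ℝ≥0∞, C ≠ ∞ ∧ ∀ g : EuclideanSpace ℝ (Fin d) → ℝ, ContDiff ℝ (⊤ : ℕ∞) g →
      eLpNorm (cp g w) (lpx Q) (volume.restrict (Metric.ball 0 2)) ≤ C *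
        (eLpNorm g (lpx P) (volume.restrict (Metric.ball 0 2)) +
          eLpNorm (iteratedFDeriv ℝ (k + 1) g) (lpx Q) (volume.restrict (Metric.ball 0 2))) := by
  obtain ⟨η, h1, h2, h3, h4⟩ := bump_exists d
  obtain ⟨η', a, b, c, e⟩ := ibp k w η h1 h2 h3
  obtain ⟨C, hC, ho⟩ := osc Q hQ hQ1 η h1.continuous h2
    (fun x hx => image_eq_zero_of_notMem_tsupport fun h => hx (h3 h)) h4
  obtain ⟨K, hK⟩ := a.continuous.bounded_above_of_compact_support b
  set B := Metric.ball (0 : EuclideanSpace ℝ (Fin d)) 2 with hBdef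
  set ν := volume.restrict B with hν
  have hBm : MeasurableSet B := measurableSet_ball
  have hfin : IsFiniteMeasure ν := ⟨by
    rw [hν, Measure.restrict_apply_univ]; exact measure_ball_lt_top⟩
  set T := eLpNorm (fun _ : EuclideanSpace ℝ (Fin d) => (1:ℝ)) (lpx Q) ν with hT
  have hTf : T ≠ ∞ := (memLp_const (1:ℝ)).2.ne
  set S := (ν Set.univ) ^ (1 - P) with hS
  have hSf : S ≠ ∞ := ENNReal.rpow_ne_top_of_nonneg (by linarith) (measure_ne_top _ _)
  refine ⟨C + ENNReal.ofReal K * S * T, by finiteness, fun g hg => ?_⟩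
  have hcg := cp_contDiff g hg w
  set c0 := ∫ y, η y * cp g w y with hc0
  have hc0le : ‖c0‖ₑ ≤ ENNReal.ofReal K * S * eLpNorm g (lpx P) ν := by
    rw [hc0, e g hg]
    calc _ ≤ ∫⁻ x, ‖η' x * g x‖ₑ := enorm_integral_le_lintegral_enorm _
      _ ≤ ∫⁻ x in B, ENNReal.ofReal K * ‖g x‖ₑ := by
        rw [← lintegral_indicator hBm]
        refine lintegral_mono fun y => ?_
        by_cases hy : y ∈ B
        · rw [Set.indicator_of_mem hy, enorm_mul]
          gcongr
          rw [← ofReal_norm]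
          exact ENNReal.ofReal_le_ofReal (hK y)
        · rw [image_eq_zero_of_notMem_tsupport fun h => hy (c h)]; simp
      _ = ENNReal.ofReal K * eLpNorm g 1 ν := by
        rw [lintegral_const_mul' _ _ ENNReal.ofReal_ne_top, eLpNorm_one_eq_lintegral_enorm]
      _ ≤ ENNReal.ofReal K * (eLpNorm g (lpx P) ν * S) := by
        refine mul_le_mul_right ?_ _
        have := eLpNorm_le_eLpNorm_mul_rpow_measure_univ (μ := ν) (one_le_lpx hP1)
          (f := g) hg.continuous.aestronglyMeasurable
        convert this using 3
        simp [lpx, ENNReal.toReal_inv, hP]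
      _ = _ := by ring
  have hsplit : cp g w = (fun x => cp g w x - c0) + fun _ => c0 := by funext x; simp
  have hconst : eLpNorm (fun _ : EuclideanSpace ℝ (Fin d) => c0) (lpx Q) ν ≤ ‖c0‖ₑ * T := by
    have := eLpNorm_const_smul_le (c := c0) (f := fun _ : EuclideanSpace ℝ (Fin d) => (1:ℝ))
      (p := lpx Q) (μ := ν)
    convert this using 2
    funext x; simp
  rw [hsplit]
  refine (eLpNorm_add_le (hcg.continuous.sub continuous_const).aestronglyMeasurable
    aestronglyMeasurable_const (one_le_lpx hQ1)).trans ?_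
  have h5 : eLpNorm (fderiv ℝ (cp g w)) (lpx Q) ν ≤
      eLpNorm (iteratedFDeriv ℝ (k + 1) g) (lpx Q) ν :=
    eLpNorm_mono fun x => norm_fderiv_cp_le g hg w x
  have h6 := ho (cp g w) (hcg.of_le (by exact_mod_cast le_top))
  calc _ ≤ C * eLpNorm (iteratedFDeriv ℝ (k + 1) g) (lpx Q) ν +
        ENNReal.ofReal K * S * eLpNorm g (lpx P) ν * T :=
        add_le_add (h6.trans (mul_le_mul_right h5 _)) (hconst.trans (mul_le_mul_left hc0le _))
    _ ≤ _ := by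
      set X := eLpNorm (iteratedFDeriv ℝ (k + 1) g) (lpx Q) ν
      set Y := eLpNorm g (lpx P) ν
      calc C * X + ENNReal.ofReal K * S * Y * T ≤ (C * X + ENNReal.ofReal K * S * Y * T) +
            (C * Y + ENNReal.ofReal K * S * T * X) := le_self_add
        _ = _ := by ring

theorem lower_step (d k : ℕ) (P Q : ℝ) (hP : 0 ≤ P) (hQ : 0 ≤ Q) (hP1 : P ≤ 1) (hQ1 : Q ≤ 1) :
    ∃ C : ℝ≥0∞, C ≠ ∞ ∧ ∀ g : EuclideanSpace ℝ (Fin d) → ℝ, ContDiff ℝ (⊤ : ℕ∞) g →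
      eLpNorm (iteratedFDeriv ℝ k g) (lpx Q) (volume.restrict (Metric.ball 0 2)) ≤ C *
        (eLpNorm g (lpx P) (volume.restrict (Metric.ball 0 2)) +
          eLpNorm (iteratedFDeriv ℝ (k + 1) g) (lpx Q) (volume.restrict (Metric.ball 0 2))) := by
  choose C hC h using lower_cp d k P Q hP hQ hP1 hQ1
  refine ⟨(d:ℝ≥0∞) ^ k * ∑ w, C w, ENNReal.mul_ne_top (by finiteness)
    (ENNReal.sum_ne_top.2 fun w _ => hC w), fun g hg => ?_⟩
  rw [mul_assoc]
  refine eLpNorm_iter_le g hg k hQ1 _ _ fun w => (h w g hg).trans (mul_le_mul_left ?_ _)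
  exact Finset.single_le_sum (f := C) (fun _ _ => zero_le) (Finset.mem_univ w)

theorem lower (d : ℕ) (P Q : ℝ) (hP : 0 ≤ P) (hQ : 0 ≤ Q) (hP1 : P ≤ 1) (hQ1 : Q ≤ 1) (n : ℕ) :
    ∀ k : ℕ, ∃ C : ℝ≥0∞, C ≠ ∞ ∧ ∀ g : EuclideanSpace ℝ (Fin d) → ℝ, ContDiff ℝ (⊤ : ℕ∞) g →
      eLpNorm (iteratedFDeriv ℝ k g) (lpx Q) (volume.restrict (Metric.ball 0 2)) ≤ C *
        (eLpNorm g (lpx P) (volume.restrict (Metric.ball 0 2)) +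
          eLpNorm (iteratedFDeriv ℝ (k + n) g) (lpx Q) (volume.restrict (Metric.ball 0 2))) := by
  induction n with
  | zero =>
    intro k
    refine ⟨1, by simp, fun g hg => ?_⟩
    rw [one_mul]; exact le_add_self
  | succ n ih =>
    intro k
    obtain ⟨C1, hC1, h1⟩ := ih k
    obtain ⟨C2, hC2, h2⟩ := lower_step d (k + n) P Q hP hQ hP1 hQ1
    refine ⟨C1 * (1 + C2), by finiteness, fun g hg => (h1 g hg).trans ?_⟩
    rw [mul_assoc]
    refine mul_le_mul_right ?_ _
    refine (add_le_add_right (h2 g hg) _).trans ?_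
    rw [← add_assoc k n 1, add_mul, one_mul]
    exact add_le_add_left le_self_add _

theorem cutoff_exists (d : ℕ) : ∃ χ : EuclideanSpace ℝ (Fin d) → ℝ, ContDiff ℝ (⊤ : ℕ∞) χ ∧
    HasCompactSupport χ ∧ tsupport χ ⊆ Metric.ball (0 : EuclideanSpace ℝ (Fin d)) 2 ∧
    (∀ x ∈ Metric.ball (0 : EuclideanSpace ℝ (Fin d)) 1, χ x = 1) ∧ ∀ x, ‖χ x‖ ≤ 1 := by
  let b : ContDiffBump (0 : EuclideanSpace ℝ (Fin d)) := ⟨1, 3/2, by norm_num, by norm_num⟩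
  refine ⟨b, b.contDiff, b.hasCompactSupport, ?_, fun x hx => ?_, fun x => ?_⟩
  · rw [b.tsupport_eq]
    exact Metric.closedBall_subset_ball (by norm_num [b])
  · exact b.one_of_mem_closedBall (Metric.ball_subset_closedBall hx)
  · rw [Real.norm_of_nonneg b.nonneg]; exact b.le_one

theorem cut_m (d m : ℕ) (P Q : ℝ) (hP : 0 ≤ P) (hQ : 0 ≤ Q) (hP1 : P ≤ 1) (hQ1 : Q ≤ 1)
    (χ : EuclideanSpace ℝ (Fin d) → ℝ) (h1 : ContDiff ℝ (⊤ : ℕ∞) χ) (h2 : HasCompactSupport χ)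
    (h3 : tsupport χ ⊆ Metric.ball (0 : EuclideanSpace ℝ (Fin d)) 2) :
    ∃ C : ℝ≥0∞, C ≠ ∞ ∧ ∀ f : EuclideanSpace ℝ (Fin d) → ℝ, ContDiff ℝ (⊤ : ℕ∞) f →
      eLpNorm (iteratedFDeriv ℝ m (fun x => χ x * f x)) (lpx Q) volume ≤ C *
        (eLpNorm f (lpx P) (volume.restrict (Metric.ball 0 2)) +
          eLpNorm (iteratedFDeriv ℝ m f) (lpx Q) (volume.restrict (Metric.ball 0 2))) := by
  have hK : ∀ l : ℕ, ∃ K : ℝ, ∀ x, ‖iteratedFDeriv ℝ l χ x‖ ≤ K := fun l =>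
    (iter_cd χ h1 l).continuous.bounded_above_of_compact_support (h2.iteratedFDeriv l)
  choose K hK using hK
  choose C hC hlow using fun k => lower d P Q hP hQ hP1 hQ1 (m - k) k
  set B := Metric.ball (0 : EuclideanSpace ℝ (Fin d)) 2 with hBdef
  have hBm : MeasurableSet B := measurableSet_ball
  refine ⟨∑ l ∈ Finset.range (m + 1), ENNReal.ofReal (m.choose l * K l) * C (m - l),
    ENNReal.sum_ne_top.2 fun l _ => ENNReal.mul_ne_top ENNReal.ofReal_ne_top (hC _),
    fun f hf => ?_⟩
  set ν := volume.restrict B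
  set X := eLpNorm f (lpx P) ν + eLpNorm (iteratedFDeriv ℝ m f) (lpx Q) ν with hX
  set F : ℕ → EuclideanSpace ℝ (Fin d) → ℝ := fun l x =>
    (m.choose l * K l) * ‖iteratedFDeriv ℝ (m - l) f x‖ with hF
  have hFc : ∀ l, Continuous (F l) := fun l =>
    continuous_const.mul (iter_cd f hf (m - l)).continuous.norm
  have hpt : ∀ x, ‖iteratedFDeriv ℝ m (fun x => χ x * f x) x‖ ≤
      B.indicator (∑ l ∈ Finset.range (m + 1), F l) x := by
    intro x
    have hle := norm_iteratedFDeriv_mul_le h1 hf x (n := m) (by exact_mod_cast le_top)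
    refine hle.trans ?_
    by_cases hx : x ∈ B
    · rw [Set.indicator_of_mem hx, Finset.sum_apply]
      refine Finset.sum_le_sum fun l _ => ?_
      simp only [hF]
      gcongr
      exact hK l x
    · rw [Set.indicator_of_notMem hx]
      refine le_of_eq (Finset.sum_eq_zero fun l _ => ?_)
      have : iteratedFDeriv ℝ l χ x = 0 :=
        image_eq_zero_of_notMem_tsupport fun h => hx (h3 (tsupport_iteratedFDeriv_subset l h))
      rw [this]; simp
  calc _ ≤ eLpNorm (B.indicator (∑ l ∈ Finset.range (m + 1), F l)) (lpx Q) volume :=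
        eLpNorm_mono_real hpt
    _ = eLpNorm (∑ l ∈ Finset.range (m + 1), F l) (lpx Q) ν :=
        eLpNorm_indicator_eq_eLpNorm_restrict hBm
    _ ≤ ∑ l ∈ Finset.range (m + 1), eLpNorm (F l) (lpx Q) ν :=
        eLpNorm_sum_le (fun l _ => (hFc l).aestronglyMeasurable) (one_le_lpx hQ1)
    _ ≤ ∑ l ∈ Finset.range (m + 1), ENNReal.ofReal (m.choose l * K l) * C (m - l) * X := by
        refine Finset.sum_le_sum fun l hl => ?_
        have hl' : l ≤ m := by simpa [Nat.lt_succ_iff] using hl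
        have hKl : 0 ≤ K l := (norm_nonneg _).trans (hK l 0)
        have := eLpNorm_const_smul_le (c := (m.choose l * K l))
          (f := fun x => ‖iteratedFDeriv ℝ (m - l) f x‖) (p := lpx Q) (μ := ν)
        refine this.trans ?_
        rw [Real.enorm_of_nonneg (by positivity), eLpNorm_norm, mul_assoc]
        refine mul_le_mul_right ?_ _
        have h := hlow (m - l) f hf
        rwa [Nat.add_sub_of_le (Nat.sub_le m l)] at h
    _ = _ := by rw [Finset.sum_mul]

theorem localGN1 (d : ℕ) (hd : 1 ≤ d) (i m : ℕ) (hi : 1 ≤ i) (hm : 1 ≤ m) (P Q R θ : ℝ)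
    (hP : 0 ≤ P) (hQ : 0 ≤ Q) (hP1 : P ≤ 1) (hQ1 : Q ≤ 1) (hR0 : 0 < R)
    (hθl : (i:ℝ) / m ≤ θ) (hθu : θ < 1)
    (hR : R = (i:ℝ) / d + θ * (Q - (m:ℝ) / d) + (1 - θ) * P) :
    ∃ C : ℝ≥0∞, C ≠ ∞ ∧ ∀ f : EuclideanSpace ℝ (Fin d) → ℝ, ContDiff ℝ (⊤ : ℕ∞) f →
      eLpNorm (iteratedFDeriv ℝ i f) (lpx R) (volume.restrict (Metric.ball 0 1)) ≤ C *
        (eLpNorm f (lpx P) (volume.restrict (Metric.ball 0 2)) ^ (1 - θ) *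
          eLpNorm (iteratedFDeriv ℝ m f) (lpx Q) (volume.restrict (Metric.ball 0 2)) ^ θ +
          eLpNorm f (lpx P) (volume.restrict (Metric.ball 0 2))) := by
  have hθ0 : 0 < θ := lt_of_lt_of_le
    (div_pos (by exact_mod_cast hi) (by exact_mod_cast hm)) hθl
  obtain ⟨χ, h1, h2, h3, h4, h5⟩ := cutoff_exists d
  obtain ⟨C1, hC1, hg⟩ := globalGN d hd i m hi hm P Q R θ hP hQ hP1 hQ1 hR0 hθl hθu hR
  obtain ⟨C2, hC2, hc⟩ := cut_m d m P Q hP hQ hP1 hQ1 χ h1 h2 h3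
  refine ⟨ENNReal.ofReal C1 * C2 ^ θ, ENNReal.mul_ne_top ENNReal.ofReal_ne_top
    (ENNReal.rpow_ne_top_of_nonneg hθ0.le hC2), fun f hf => ?_⟩
  set B := Metric.ball (0 : EuclideanSpace ℝ (Fin d)) 2 with hBdef
  have hBm : MeasurableSet B := measurableSet_ball
  set ν := volume.restrict B
  set g : EuclideanSpace ℝ (Fin d) → ℝ := fun x => χ x * f x with hgdef
  set X := eLpNorm f (lpx P) ν
  set Y := eLpNorm (iteratedFDeriv ℝ m f) (lpx Q) ν
  have e1 : eLpNorm (iteratedFDeriv ℝ i f) (lpx R) (volume.restrict (Metric.ball 0 1)) ≤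
      eLpNorm (iteratedFDeriv ℝ i g) (lpx R) volume := by
    refine le_trans (le_of_eq ?_) (eLpNorm_mono_measure _ (Measure.restrict_le_self
      (s := Metric.ball (0 : EuclideanSpace ℝ (Fin d)) 1)))
    refine eLpNorm_congr_ae ?_
    filter_upwards [ae_restrict_mem measurableSet_ball] with x hx
    refine (Filter.EventuallyEq.iteratedFDeriv ℝ (f₁ := f) (f₂ := g) (x := x) ?_ i).eq_of_nhds
    filter_upwards [Metric.isOpen_ball.mem_nhds hx] with y hy
    simp [hgdef, h4 y hy]
  have e2 : eLpNorm g (lpx P) volume ≤ X := by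
    refine le_trans ?_ (eLpNorm_indicator_eq_eLpNorm_restrict hBm).le
    refine eLpNorm_mono fun x => ?_
    by_cases hx : x ∈ B
    · rw [Set.indicator_of_mem hx, hgdef, norm_mul]
      exact mul_le_of_le_one_left (norm_nonneg _) (h5 x)
    · rw [hgdef]
      simp [image_eq_zero_of_notMem_tsupport fun h => hx (h3 h)]
  refine e1.trans ((hg g (h1.mul hf) h2.mul_right).trans ?_)
  rw [mul_assoc]
  refine mul_le_mul_right ?_ _
  have h1θ : 0 ≤ 1 - θ := by linarith
  calc _ ≤ X ^ (1 - θ) * (C2 * (X + Y)) ^ θ := by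
        gcongr
        exact hc f hf
    _ = C2 ^ θ * (X ^ (1 - θ) * (X + Y) ^ θ) := by
        rw [ENNReal.mul_rpow_of_nonneg _ _ hθ0.le]; ring
    _ ≤ C2 ^ θ * (X ^ (1 - θ) * (X ^ θ + Y ^ θ)) := by
        gcongr
        exact ENNReal.rpow_add_le_add_rpow _ _ hθ0.le hθu.le
    _ = _ := by
        rw [mul_add, ← ENNReal.rpow_add_of_nonneg _ _ h1θ hθ0.le]
        simp [add_comm]

theorem scale_norm {d : ℕ} {F : Type*} [NormedAddCommGroup F] (h : EuclideanSpace ℝ (Fin d) → F)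
    (c : EuclideanSpace ℝ (Fin d)) (ρ s R : ℝ) (hρ : 0 < ρ) (hR : 0 ≤ R) :
    eLpNorm (fun x => h (c + ρ • x)) (lpx R) (volume.restrict (Metric.ball 0 s)) =
      ENNReal.ofReal (ρ ^ (-(d * R))) *
        eLpNorm h (lpx R) (volume.restrict (Metric.ball c (s * ρ))) := by
  set e : EuclideanSpace ℝ (Fin d) ≃ᵐ EuclideanSpace ℝ (Fin d) :=
    ((Homeomorph.smulOfNeZero ρ hρ.ne').trans (Homeomorph.addLeft c)).toMeasurableEquiv with he
  have hee : ∀ x, e x = c + ρ • x := fun x => rfl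
  have hfun : (e : EuclideanSpace ℝ (Fin d) → EuclideanSpace ℝ (Fin d)) =
    (fun x => c + x) ∘ fun x => ρ • x := by funext x; rfl
  have hvol : Measure.map e volume = ENNReal.ofReal (ρ ^ (-(d:ℝ))) • volume := by
    rw [hfun, ← Measure.map_map (measurable_const_add c) (measurable_const_smul ρ),
      Measure.map_addHaar_smul _ hρ.ne', Measure.map_smul, map_add_left_eq_self]
    congr 2
    rw [abs_of_nonneg (by positivity), Real.rpow_neg hρ.le]
    simp
  have hpre : e ⁻¹' (Metric.ball c (s * ρ)) = Metric.ball 0 s := by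
    ext x
    simp only [Set.mem_preimage, hee, Metric.mem_ball, dist_self_add_left, dist_zero_right,
      norm_smul, Real.norm_of_nonneg hρ.le]
    rw [mul_comm s ρ, mul_lt_mul_iff_right₀ hρ]
  have hmap : Measure.map e (volume.restrict (Metric.ball 0 s)) =
      ENNReal.ofReal (ρ ^ (-(d:ℝ))) • volume.restrict (Metric.ball c (s * ρ)) := by
    rw [← hpre, ← e.restrict_map, hvol, Measure.restrict_smul]
  have h1 := e.measurableEmbedding.eLpNorm_map_measure (g := h) (p := lpx R)
    (μ := volume.restrict (Metric.ball 0 s))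
  have h2 : (fun x => h (c + ρ • x)) = h ∘ e := by funext x; rfl
  rw [h2, ← h1, hmap, eLpNorm_smul_measure_of_ne_zero (ENNReal.ofReal_pos.2 (Real.rpow_pos_of_pos hρ _)).ne',
    smul_eq_mul]
  congr 1
  have : (1 / lpx R).toReal = R := by simp [lpx, hR]
  rw [this, ENNReal.ofReal_rpow_of_pos (Real.rpow_pos_of_pos hρ _), ← Real.rpow_mul hρ.le]
  ring_nf

theorem iter_scale {d : ℕ} (f : EuclideanSpace ℝ (Fin d) → ℝ) (hf : ContDiff ℝ (⊤ : ℕ∞) f) (k : ℕ)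
    (c : EuclideanSpace ℝ (Fin d)) (ρ s R : ℝ) (hρ : 0 < ρ) (hR : 0 ≤ R) :
    eLpNorm (iteratedFDeriv ℝ k (fun x => f (c + ρ • x))) (lpx R)
      (volume.restrict (Metric.ball 0 s)) = ENNReal.ofReal (ρ ^ ((k:ℝ) - d * R)) *
        eLpNorm (iteratedFDeriv ℝ k f) (lpx R) (volume.restrict (Metric.ball c (s * ρ))) := by
  have hk : ContDiff ℝ k (fun z => f (c + z)) :=
    (hf.comp (by fun_prop : ContDiff ℝ (⊤ : ℕ∞) (fun z : EuclideanSpace ℝ (Fin d) => c + z))).of_le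
      (by exact_mod_cast le_top)
  rw [iteratedFDeriv_comp_const_smul (f := fun z => f (c + z)) ρ hk]
  simp only [iteratedFDeriv_comp_add_left]
  have := scale_norm (iteratedFDeriv ℝ k f) c ρ s R hρ hR
  have h2 := eLpNorm_const_smul (ρ ^ k) (fun x => iteratedFDeriv ℝ k f (c + ρ • x)) (lpx R)
    (volume.restrict (Metric.ball (0 : EuclideanSpace ℝ (Fin d)) s))
  refine h2.trans ?_
  rw [this, ← mul_assoc, Real.enorm_of_nonneg (by positivity), ← ENNReal.ofReal_mul (by positivity),
    ← Real.rpow_natCast, ← Real.rpow_add hρ, sub_eq_add_neg]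

theorem localGN (d : ℕ) (hd : 1 ≤ d) (i m : ℕ) (hi : 1 ≤ i) (hm : 1 ≤ m) (P Q R θ : ℝ)
    (hP : 0 ≤ P) (hQ : 0 ≤ Q) (hP1 : P ≤ 1) (hQ1 : Q ≤ 1) (hR0 : 0 < R)
    (hθl : (i:ℝ) / m ≤ θ) (hθu : θ < 1)
    (hR : R = (i:ℝ) / d + θ * (Q - (m:ℝ) / d) + (1 - θ) * P) :
    ∃ C : ℝ≥0∞, C ≠ ∞ ∧ ∀ f : EuclideanSpace ℝ (Fin d) → ℝ, ContDiff ℝ (⊤ : ℕ∞) f →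
      ∀ (c : EuclideanSpace ℝ (Fin d)) (ρ : ℝ), 0 < ρ →
      eLpNorm (iteratedFDeriv ℝ i f) (lpx R) (volume.restrict (Metric.ball c ρ)) ≤ C *
        (eLpNorm f (lpx P) (volume.restrict (Metric.ball c (2 * ρ))) ^ (1 - θ) *
          eLpNorm (iteratedFDeriv ℝ m f) (lpx Q) (volume.restrict (Metric.ball c (2 * ρ))) ^ θ +
          ENNReal.ofReal (ρ ^ (-(m * θ - d * θ * (Q - P)))) *
            eLpNorm f (lpx P) (volume.restrict (Metric.ball c (2 * ρ)))) := by
  have hθ0 : 0 < θ := lt_of_lt_of_le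
    (div_pos (by exact_mod_cast hi) (by exact_mod_cast hm)) hθl
  have h1θ : 0 < 1 - θ := by linarith
  have hd0 : (0:ℝ) < d := by exact_mod_cast hd
  have hdR : d * R = i + θ * (d * Q - m) + (1 - θ) * (d * P) := by
    rw [hR]; field_simp
  obtain ⟨C, hC, h⟩ := localGN1 d hd i m hi hm P Q R θ hP hQ hP1 hQ1 hR0 hθl hθu hR
  refine ⟨C, hC, fun f hf c ρ hρ => ?_⟩
  have hfc : ContDiff ℝ (⊤ : ℕ∞) (fun x => f (c + ρ • x)) :=
    hf.comp (by fun_prop : ContDiff ℝ (⊤ : ℕ∞) (fun z : EuclideanSpace ℝ (Fin d) => c + ρ • z))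
  have := h _ hfc
  rw [iter_scale f hf i c ρ 1 R hρ hR0.le, iter_scale f hf m c ρ 2 Q hρ hQ,
    scale_norm f c ρ 2 P hρ hP, one_mul] at this
  set X := eLpNorm f (lpx P) (volume.restrict (Metric.ball c (2 * ρ)))
  set Y := eLpNorm (iteratedFDeriv ℝ m f) (lpx Q) (volume.restrict (Metric.ball c (2 * ρ)))
  set Z := eLpNorm (iteratedFDeriv ℝ i f) (lpx R) (volume.restrict (Metric.ball c ρ))
  have hpos : ∀ a : ℝ, 0 < ρ ^ a := fun a => Real.rpow_pos_of_pos hρ a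
  have e1 : Z = ENNReal.ofReal (ρ ^ (d * R - i)) * (ENNReal.ofReal (ρ ^ ((i:ℝ) - d * R)) * Z) := by
    rw [← mul_assoc, ← ENNReal.ofReal_mul (hpos _).le, ← Real.rpow_add hρ]
    simp
  rw [e1]
  refine (mul_le_mul_right this _).trans (le_of_eq ?_)
  rw [ENNReal.mul_rpow_of_nonneg _ _ h1θ.le, ENNReal.mul_rpow_of_nonneg _ _ hθ0.le,
    ENNReal.ofReal_rpow_of_pos (hpos _), ENNReal.ofReal_rpow_of_pos (hpos _),
    ← Real.rpow_mul hρ.le, ← Real.rpow_mul hρ.le]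
  have a1 : ENNReal.ofReal (ρ ^ (d * R - i)) * (ENNReal.ofReal (ρ ^ (-(d * P) * (1 - θ))) *
      ENNReal.ofReal (ρ ^ ((m - d * Q) * θ))) = 1 := by
    rw [← ENNReal.ofReal_mul (hpos _).le, ← ENNReal.ofReal_mul (hpos _).le,
      ← Real.rpow_add hρ, ← Real.rpow_add hρ, hdR]
    ring_nf
    simp
  have a2 : ENNReal.ofReal (ρ ^ (d * R - i)) * ENNReal.ofReal (ρ ^ (-(d * P))) =
      ENNReal.ofReal (ρ ^ (-(m * θ - d * θ * (Q - P)))) := by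
    rw [← ENNReal.ofReal_mul (hpos _).le, ← Real.rpow_add hρ, hdR]
    ring_nf
  rw [← a2]
  calc _ = C * ((ENNReal.ofReal (ρ ^ (d * R - i)) * (ENNReal.ofReal (ρ ^ (-(d * P) * (1 - θ))) *
      ENNReal.ofReal (ρ ^ ((m - d * Q) * θ)))) * (X ^ (1 - θ) * Y ^ θ) +
      (ENNReal.ofReal (ρ ^ (d * R - i)) * ENNReal.ofReal (ρ ^ (-(d * P)))) * X) := by ring
    _ = _ := by rw [a1, one_mul]

theorem sum_holder (x y : ℕ → ℝ≥0∞) (A B : ℝ) (hA : 0 ≤ A) (hB : 0 ≤ B) (hAB : 1 ≤ A + B) :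
    ∑' j, x j ^ A * y j ^ B ≤ (∑' j, x j) ^ A * (∑' j, y j) ^ B := by
  have hs : 0 < A + B := by linarith
  have h1 := ENNReal.lintegral_mul_norm_pow_le (μ := (Measure.count : Measure ℕ)) (f := x) (g := y)
    (measurable_of_countable _).aemeasurable (measurable_of_countable _).aemeasurable
    (p := A / (A + B)) (q := B / (A + B)) (by positivity) (by positivity) (by field_simp)
  simp only [lintegral_count] at h1
  set z : ℕ → ℝ≥0∞ := fun j => x j ^ (A / (A + B)) * y j ^ (B / (A + B)) with hz
  have h2 : ∀ j, x j ^ A * y j ^ B = z j ^ (A + B) := by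
    intro j
    rw [hz, ENNReal.mul_rpow_of_nonneg _ _ hs.le, ← ENNReal.rpow_mul, ← ENNReal.rpow_mul,
      div_mul_cancel₀ _ hs.ne', div_mul_cancel₀ _ hs.ne']
  simp only [h2]
  calc ∑' j, z j ^ (A + B) ≤ ∑' j, z j * (∑' l, z l) ^ (A + B - 1) := by
        refine ENNReal.tsum_le_tsum fun j => ?_
        have : z j ^ (A + B) = z j * z j ^ (A + B - 1) := by
          conv_rhs => rw [← ENNReal.rpow_one (z j), ← ENNReal.rpow_mul,
            ← ENNReal.rpow_add_of_nonneg _ _ zero_le_one (by linarith)]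
          congr 1; ring
        rw [this]
        refine mul_le_mul_right (ENNReal.rpow_le_rpow (ENNReal.le_tsum j) (by linarith)) _
    _ = (∑' l, z l) ^ (A + B) := by
        rw [ENNReal.tsum_mul_right]
        conv_lhs => rw [← ENNReal.rpow_one (∑' l, z l), ← ENNReal.rpow_mul,
            ← ENNReal.rpow_add_of_nonneg _ _ zero_le_one (by linarith)]
        congr 1; ring
    _ ≤ ((∑' j, x j) ^ (A / (A + B)) * (∑' j, y j) ^ (B / (A + B))) ^ (A + B) :=
        ENNReal.rpow_le_rpow h1 hs.le
    _ = _ := by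
        rw [ENNReal.mul_rpow_of_nonneg _ _ hs.le, ← ENNReal.rpow_mul, ← ENNReal.rpow_mul,
          div_mul_cancel₀ _ hs.ne', div_mul_cancel₀ _ hs.ne']

theorem split_norm {α F : Type*} [MeasurableSpace α] [NormedAddCommGroup F] (μ : Measure α)
    (h : α → F) (V : ℕ → Set α) (hV : ∀ j, MeasurableSet (V j))
    (hd : Pairwise (Function.onFun Disjoint V)) (P : ℝ) (hP : 0 ≤ P) :
    ∃ (Λ : ℝ≥0∞) (x : ℕ → ℝ≥0∞), (∀ j, eLpNorm h (lpx P) (μ.restrict (V j)) ≤ Λ * x j ^ P) ∧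
      Λ * (∑' j, x j) ^ P ≤ eLpNorm h (lpx P) μ := by
  rcases hP.eq_or_lt with h0 | h0
  · subst h0
    refine ⟨eLpNorm h (lpx 0) μ, fun _ => 0, fun j => ?_, ?_⟩
    · simpa using eLpNorm_mono_measure h Measure.restrict_le_self
    · simp
  · refine ⟨1, fun j => ∫⁻ x in V j, ‖h x‖ₑ ^ (1 / P) ∂μ, fun j => ?_, ?_⟩
    · rw [nm_pos _ h0, one_mul]
    · rw [nm_pos _ h0, one_mul, ← lintegral_iUnion hV hd]
      exact ENNReal.rpow_le_rpow (setLIntegral_le_lintegral _ _) h0.le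

theorem sum_cells {α F G : Type*} [MeasurableSpace α] [NormedAddCommGroup F] [NormedAddCommGroup G]
    (μ : Measure α) (h : α → F) (g : α → G) (V : ℕ → Set α) (hV : ∀ j, MeasurableSet (V j))
    (hd : Pairwise (Function.onFun Disjoint V)) (P Q r θ : ℝ) (hP : 0 ≤ P) (hQ : 0 ≤ Q)
    (hr : 0 < r) (hθ0 : 0 < θ) (hθ1 : θ < 1) (hs : 1 ≤ P * (1 - θ) * r + Q * θ * r) :
    ∑' j, (eLpNorm h (lpx P) (μ.restrict (V j)) ^ (1 - θ) *
        eLpNorm g (lpx Q) (μ.restrict (V j)) ^ θ) ^ r ≤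
      (eLpNorm h (lpx P) μ ^ (1 - θ) * eLpNorm g (lpx Q) μ ^ θ) ^ r := by
  have h1θ : 0 < 1 - θ := by linarith
  obtain ⟨Λ, x, hx, hx'⟩ := split_norm μ h V hV hd P hP
  obtain ⟨Γ, y, hy, hy'⟩ := split_norm μ g V hV hd Q hQ
  have key : ∀ a b : ℝ≥0∞, ((Λ * a ^ P) ^ (1 - θ) * (Γ * b ^ Q) ^ θ) ^ r =
      (Λ ^ (1 - θ) * Γ ^ θ) ^ r * (a ^ (P * (1 - θ) * r) * b ^ (Q * θ * r)) := by
    intro a b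
    rw [ENNReal.mul_rpow_of_nonneg _ _ h1θ.le, ENNReal.mul_rpow_of_nonneg _ _ hθ0.le,
      ENNReal.mul_rpow_of_nonneg _ _ hr.le, ENNReal.mul_rpow_of_nonneg _ _ hr.le,
      ENNReal.mul_rpow_of_nonneg _ _ hr.le, ENNReal.mul_rpow_of_nonneg _ _ hr.le]
    simp only [← ENNReal.rpow_mul]
    ring
  calc _ ≤ ∑' j, ((Λ * x j ^ P) ^ (1 - θ) * (Γ * y j ^ Q) ^ θ) ^ r := by
        refine ENNReal.tsum_le_tsum fun j => ?_
        gcongr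
        · exact hx j
        · exact hy j
    _ = (Λ ^ (1 - θ) * Γ ^ θ) ^ r * ∑' j, x j ^ (P * (1 - θ) * r) * y j ^ (Q * θ * r) := by
        simp only [key]; rw [ENNReal.tsum_mul_left]
    _ ≤ (Λ ^ (1 - θ) * Γ ^ θ) ^ r * ((∑' j, x j) ^ (P * (1 - θ) * r) *
          (∑' j, y j) ^ (Q * θ * r)) :=
        mul_le_mul_right (sum_holder x y _ _ (by positivity) (by positivity) hs) _
    _ = ((Λ * (∑' j, x j) ^ P) ^ (1 - θ) * (Γ * (∑' j, y j) ^ Q) ^ θ) ^ r := (key _ _).symm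
    _ ≤ _ := by gcongr

theorem cell {d : ℕ} (i m : ℕ) (P Q R θ K α β s t : ℝ) (C : ℝ≥0∞) (hθ0 : 0 < θ) (hθ1 : θ < 1)
    (hK : 1 ≤ K) (hα : 0 < α) (hβ : 0 < β) (hs : 0 ≤ s)
    (hst : s * (α / β) ^ (m * θ) ≤ t)
    (f φ ψ : EuclideanSpace ℝ (Fin d) → ℝ) (U V : Set (EuclideanSpace ℝ (Fin d)))
    (hU : MeasurableSet U) (hV : MeasurableSet V) (hUV : U ⊆ V)
    (hφ : ∀ x ∈ V, α / K ≤ φ x ∧ φ x ≤ K * α) (hψ : ∀ x ∈ V, β / K ≤ ψ x ∧ ψ x ≤ K * β)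
    (hloc : eLpNorm (iteratedFDeriv ℝ i f) (lpx R) (volume.restrict U) ≤ C *
        (eLpNorm f (lpx P) (volume.restrict V) ^ (1 - θ) *
          eLpNorm (iteratedFDeriv ℝ m f) (lpx Q) (volume.restrict V) ^ θ +
          ENNReal.ofReal s * eLpNorm f (lpx P) (volume.restrict V))) :
    eLpNorm (fun x => ψ x ^ ((m : ℝ) * (1 - θ)) * φ x ^ ((m : ℝ) * θ) *
            ‖iteratedFDeriv ℝ i f x‖) (lpx R) (volume.restrict U) ≤
      C * ENNReal.ofReal (K ^ (2 * m)) *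
        (eLpNorm (fun x => ψ x ^ m * f x) (lpx P) (volume.restrict V) ^ (1 - θ) *
          eLpNorm (fun x => φ x ^ m * ‖iteratedFDeriv ℝ m f x‖) (lpx Q) (volume.restrict V) ^ θ +
          ENNReal.ofReal t * eLpNorm (fun x => ψ x ^ m * f x) (lpx P) (volume.restrict V)) := by
  have h1θ : 0 < 1 - θ := by linarith
  have hK0 : 0 < K := by linarith
  set X := eLpNorm (fun x => ψ x ^ m * f x) (lpx P) (volume.restrict V)
  set Y := eLpNorm (fun x => φ x ^ m * ‖iteratedFDeriv ℝ m f x‖) (lpx Q) (volume.restrict V)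
  set W := (K * β) ^ ((m:ℝ) * (1 - θ)) * (K * α) ^ ((m:ℝ) * θ) with hW
  have hW0 : 0 ≤ W := by positivity
  have hinv : ∀ γ v : ℝ, 0 < γ → γ / K ≤ v → 1 ≤ (K / γ) ^ m * v ^ m := by
    intro γ v hγ hv
    rw [← mul_pow]
    refine one_le_pow₀ ?_
    rw [div_le_iff₀ hK0] at hv
    rw [div_mul_eq_mul_div, le_div_iff₀ hγ]
    linarith
  have hZ : eLpNorm (fun x => ψ x ^ ((m : ℝ) * (1 - θ)) * φ x ^ ((m : ℝ) * θ) *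
            ‖iteratedFDeriv ℝ i f x‖) (lpx R) (volume.restrict U) ≤ ENNReal.ofReal W *
      eLpNorm (iteratedFDeriv ℝ i f) (lpx R) (volume.restrict U) := by
    refine eLpNorm_le_mul_eLpNorm_of_ae_le_mul ?_ _
    filter_upwards [ae_restrict_mem hU] with x hx
    have a := hφ x (hUV hx)
    have b := hψ x (hUV hx)
    have a0 : 0 ≤ φ x := le_trans (by positivity) a.1
    have b0 : 0 ≤ ψ x := le_trans (by positivity) b.1
    rw [Real.norm_of_nonneg (by positivity), hW]
    gcongr
    · exact b.2
    · exact a.2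
  have hX : eLpNorm f (lpx P) (volume.restrict V) ≤ ENNReal.ofReal ((K / β) ^ m) * X := by
    refine eLpNorm_le_mul_eLpNorm_of_ae_le_mul ?_ _
    filter_upwards [ae_restrict_mem hV] with x hx
    have b := hψ x hx
    have b0 : 0 ≤ ψ x := le_trans (by positivity) b.1
    rw [norm_mul, Real.norm_of_nonneg (by positivity : 0 ≤ ψ x ^ m), ← mul_assoc]
    exact le_mul_of_one_le_left (norm_nonneg _) (hinv β _ hβ b.1)
  have hY : eLpNorm (iteratedFDeriv ℝ m f) (lpx Q) (volume.restrict V) ≤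
      ENNReal.ofReal ((K / α) ^ m) * Y := by
    refine eLpNorm_le_mul_eLpNorm_of_ae_le_mul ?_ _
    filter_upwards [ae_restrict_mem hV] with x hx
    have b := hφ x hx
    have b0 : 0 ≤ φ x := le_trans (by positivity) b.1
    rw [norm_mul, Real.norm_of_nonneg (by positivity : 0 ≤ φ x ^ m), ← mul_assoc, norm_norm]
    exact le_mul_of_one_le_left (norm_nonneg _) (hinv α _ hα b.1)
  have hKm : K ^ m = K ^ ((m:ℝ) * (1 - θ)) * K ^ ((m:ℝ) * θ) := by
    rw [← Real.rpow_add hK0, ← Real.rpow_natCast]; ring_nf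
  have hβm : β ^ m = β ^ ((m:ℝ) * (1 - θ)) * β ^ ((m:ℝ) * θ) := by
    rw [← Real.rpow_add hβ, ← Real.rpow_natCast]; ring_nf
  have p1 : ∀ a : ℝ, 0 < K ^ a := fun a => Real.rpow_pos_of_pos hK0 a
  have p2 : ∀ a : ℝ, 0 < α ^ a := fun a => Real.rpow_pos_of_pos hα a
  have p3 : ∀ a : ℝ, 0 < β ^ a := fun a => Real.rpow_pos_of_pos hβ a
  have hpow : ∀ γ e : ℝ, 0 < γ → ((K / γ) ^ m) ^ e = K ^ (m * e) / γ ^ (m * e) := by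
    intro γ e hγ
    rw [← Real.rpow_natCast, ← Real.rpow_mul (by positivity), Real.div_rpow hK0.le hγ.le]
  have id1 : W * (((K / β) ^ m) ^ (1 - θ) * ((K / α) ^ m) ^ θ) = K ^ (2 * m) := by
    rw [hpow β _ hβ, hpow α _ hα, hW, Real.mul_rpow hK0.le hβ.le, Real.mul_rpow hK0.le hα.le,
      two_mul, pow_add, hKm]
    have := p1 (m * (1 - θ)); have := p1 (m * θ); have := p2 (m * θ); have := p3 (m * (1 - θ))
    field_simp
  have id2 : W * (s * (K / β) ^ m) ≤ K ^ (2 * m) * t := by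
    calc W * (s * (K / β) ^ m) = K ^ (2 * m) * (s * (α / β) ^ (m * θ)) := by
          rw [hW, Real.mul_rpow hK0.le hβ.le, Real.mul_rpow hK0.le hα.le, Real.div_rpow hα.le hβ.le,
            div_pow, hβm, two_mul, pow_add, hKm]
          have := p3 (m * θ); have := p3 (m * (1 - θ))
          field_simp
      _ ≤ _ := by gcongr
  refine hZ.trans ((mul_le_mul_right hloc _).trans ?_)
  calc _ ≤ ENNReal.ofReal W * (C * ((ENNReal.ofReal ((K / β) ^ m) * X) ^ (1 - θ) *
        (ENNReal.ofReal ((K / α) ^ m) * Y) ^ θ +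
        ENNReal.ofReal s * (ENNReal.ofReal ((K / β) ^ m) * X))) := by gcongr
    _ = C * (ENNReal.ofReal (W * (((K / β) ^ m) ^ (1 - θ) * ((K / α) ^ m) ^ θ)) *
        (X ^ (1 - θ) * Y ^ θ) + ENNReal.ofReal (W * (s * (K / β) ^ m)) * X) := by
        rw [ENNReal.mul_rpow_of_nonneg _ _ h1θ.le, ENNReal.mul_rpow_of_nonneg _ _ hθ0.le,
          ENNReal.ofReal_rpow_of_pos (by positivity), ENNReal.ofReal_rpow_of_pos (by positivity),
          ENNReal.ofReal_mul hW0, ENNReal.ofReal_mul hW0,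
          ENNReal.ofReal_mul (by positivity : 0 ≤ ((K / β) ^ m) ^ (1 - θ)),
          ENNReal.ofReal_mul hs]
        ring
    _ ≤ C * (ENNReal.ofReal (K ^ (2 * m)) * (X ^ (1 - θ) * Y ^ θ) +
          ENNReal.ofReal (K ^ (2 * m) * t) * X) := by
        rw [id1]; gcongr
    _ = _ := by
        rw [ENNReal.ofReal_mul (by positivity)]; ring

theorem sphere_pt {d : ℕ} (hd : 1 ≤ d) (N : ℝ) (hN : 0 ≤ N) :
    ∃ x : EuclideanSpace ℝ (Fin d), ‖x‖ = N :=
  ⟨EuclideanSpace.single (⟨0, hd⟩ : Fin d) N, by simp [abs_of_nonneg hN]⟩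

theorem adj {d : ℕ} (hd : 1 ≤ d) (Cw : ℝ) (hCw : 1 ≤ Cw) (w : EuclideanSpace ℝ (Fin d) → ℝ)
    (a : ℕ → ℝ) (h0 : a 0 = 1) (h1 : a 1 = 1)
    (h : ∀ (j : ℕ) (x : EuclideanSpace ℝ (Fin d)), (2 : ℝ) ^ j ≤ ‖x‖ → ‖x‖ ≤ (2 : ℝ) ^ (j + 1) →
      w x ∈ Set.Icc (a (j + 1) / Cw) (Cw * a (j + 1))) (n : ℕ) :
    0 < a n ∧ a n ≤ Cw ^ 2 * a (n + 1) ∧ a (n + 1) ≤ Cw ^ 2 * a n := by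
  have hC0 : 0 < Cw := by linarith
  induction n with
  | zero =>
    rw [zero_add, h0, h1]
    have : 1 ≤ Cw ^ 2 := one_le_pow₀ hCw
    exact ⟨one_pos, by linarith, by linarith⟩
  | succ n ih =>
    have hpos : 0 < a (n + 1) := by
      have := ih.1.trans_le ih.2.1
      exact (pos_iff_pos_of_mul_pos this).1 (by positivity)
    obtain ⟨x, hx⟩ := sphere_pt hd ((2:ℝ) ^ (n + 1)) (by positivity)
    have e1 := h n x (by rw [hx]; gcongr <;> simp) hx.le
    have e2 := h (n + 1) x hx.ge (by rw [hx]; gcongr <;> simp)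
    refine ⟨hpos, ?_, ?_⟩
    · have := e1.1.trans e2.2
      rw [div_le_iff₀ hC0] at this
      linarith
    · have := e2.1.trans e1.2
      rw [div_le_iff₀ hC0] at this
      linarith

theorem range_wt {d : ℕ} (hd : 1 ≤ d) (Cw : ℝ) (hCw : 1 ≤ Cw) (w : EuclideanSpace ℝ (Fin d) → ℝ)
    (a : ℕ → ℝ) (h0 : a 0 = 1) (h1 : a 1 = 1)
    (hz : ∀ x : EuclideanSpace ℝ (Fin d), ‖x‖ ≤ 1 → w x ∈ Set.Icc (a 0 / Cw) (Cw * a 0))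
    (h : ∀ (j : ℕ) (x : EuclideanSpace ℝ (Fin d)), (2 : ℝ) ^ j ≤ ‖x‖ → ‖x‖ ≤ (2 : ℝ) ^ (j + 1) →
      w x ∈ Set.Icc (a (j + 1) / Cw) (Cw * a (j + 1))) (j : ℕ) (x : EuclideanSpace ℝ (Fin d))
    (hx1 : (2:ℝ) ^ j * (3/4) ≤ ‖x‖) (hx2 : ‖x‖ ≤ (2:ℝ) ^ j * (9/4)) :
    a (j + 1) / Cw ^ 3 ≤ w x ∧ w x ≤ Cw ^ 3 * a (j + 1) := by
  have hC0 : 0 < Cw := by linarith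
  have hadj := adj hd Cw hCw w a h0 h1 h
  have h2 : (0:ℝ) < 2 ^ j := by positivity
  have key : ∀ n, a n ≤ Cw ^ 2 * a (j + 1) → a (j + 1) ≤ Cw ^ 2 * a n →
      w x ∈ Set.Icc (a n / Cw) (Cw * a n) →
      a (j + 1) / Cw ^ 3 ≤ w x ∧ w x ≤ Cw ^ 3 * a (j + 1) := by
    intro n hn1 hn2 hw
    constructor
    · refine le_trans ?_ hw.1
      rw [div_le_div_iff₀ (by positivity) hC0]
      nlinarith
    · refine hw.2.trans ?_
      nlinarith
  have hself : ∀ n, a n ≤ Cw ^ 2 * a n := fun n => by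
    have := (hadj n).1
    have : 1 ≤ Cw ^ 2 := one_le_pow₀ hCw
    nlinarith
  rcases le_total ‖x‖ ((2:ℝ) ^ j) with hle | hle
  · refine key j (hadj j).2.1 (hadj j).2.2 ?_
    cases j with
    | zero => exact hz x (by simpa using hle)
    | succ j => exact h j x (by rw [pow_succ] at hx1; nlinarith [pow_pos (two_pos : (0:ℝ) < 2) j]) hle
  · rcases le_total ‖x‖ ((2:ℝ) ^ (j + 1)) with hle2 | hle2
    · exact key (j + 1) (hself _) (hself _) (h j x hle hle2)
    · refine key (j + 2) (hadj (j + 1)).2.2 (hadj (j + 1)).2.1 (h (j + 1) x hle2 ?_)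
      rw [pow_succ, pow_succ]; nlinarith

theorem decay_real (κ τ ε Cw N J u v α β : ℝ) (hκ : 0 ≤ κ) (hCw : 1 ≤ Cw) (hN : 0 < N)
    (hJ1 : N ≤ J) (hJ2 : J ≤ 2 * N) (hu : 0 ≤ u) (hv : 0 < v) (hα : 0 < α) (hβ : 0 < β)
    (hαu : α / Cw ≤ u) (hβv : v ≤ Cw * β)
    (h : (u / (J * v)) ^ κ * J ^ τ ≤ Cw * J ^ (-ε)) :
    (N * (1 / 8)) ^ (-(κ - τ)) * (α / β) ^ κ ≤
      ((1 / 8) ^ (-(κ - τ)) * ((Cw ^ 2) ^ κ * (Cw * 2 ^ |κ - τ - ε|))) * N ^ (-ε) := by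
  have hC0 : 0 < Cw := by linarith
  have hJ : 0 < J := hN.trans_le hJ1
  have h1 : α / β ≤ Cw ^ 2 * (u / v) := by
    rw [div_le_iff₀ hC0] at hαu
    rw [← mul_div_assoc, div_le_div_iff₀ hβ hv]
    calc α * v ≤ (u * Cw) * (Cw * β) := by gcongr
      _ = _ := by ring
  have h2 : (u / v) ^ κ ≤ Cw * J ^ (κ - τ - ε) := by
    have e1 : u / v = (u / (J * v)) * J := by field_simp
    rw [e1, Real.mul_rpow (by positivity) hJ.le]
    have e2 : J ^ (κ - τ - ε) = J ^ (-ε) * J ^ (κ - τ) := by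
      rw [← Real.rpow_add hJ]; ring_nf
    have e3 : J ^ κ = J ^ τ * J ^ (κ - τ) := by
      rw [← Real.rpow_add hJ]; ring_nf
    rw [e2, e3, ← mul_assoc, ← mul_assoc]
    gcongr
  have h3 : J ^ (κ - τ - ε) ≤ 2 ^ |κ - τ - ε| * (N ^ (κ - τ) * N ^ (-ε)) := by
    have e1 : J = (J / N) * N := by field_simp
    rw [← Real.rpow_add hN, ← sub_eq_add_neg]
    conv_lhs => rw [e1]
    rw [Real.mul_rpow (by positivity) hN.le]
    gcongr
    have g1 : 1 ≤ J / N := by rw [le_div_iff₀ hN]; linarith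
    have g2 : J / N ≤ 2 := by rw [div_le_iff₀ hN]; linarith
    calc (J / N) ^ (κ - τ - ε) ≤ (J / N) ^ |κ - τ - ε| :=
          Real.rpow_le_rpow_of_exponent_le g1 (le_abs_self _)
      _ ≤ _ := by gcongr
  have h4 : (α / β) ^ κ ≤ (Cw ^ 2) ^ κ * (Cw * (2 ^ |κ - τ - ε| * (N ^ (κ - τ) * N ^ (-ε)))) := by
    calc (α / β) ^ κ ≤ (Cw ^ 2 * (u / v)) ^ κ := by gcongr
      _ = (Cw ^ 2) ^ κ * (u / v) ^ κ := Real.mul_rpow (by positivity) (by positivity)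
      _ ≤ (Cw ^ 2) ^ κ * (Cw * J ^ (κ - τ - ε)) := by gcongr
      _ ≤ _ := by gcongr
  rw [Real.mul_rpow hN.le (by norm_num)]
  have h5 : N ^ (-(κ - τ)) * N ^ (κ - τ) = 1 := by
    rw [← Real.rpow_add hN]; simp
  calc _ ≤ N ^ (-(κ - τ)) * (1 / 8) ^ (-(κ - τ)) *
        ((Cw ^ 2) ^ κ * (Cw * (2 ^ |κ - τ - ε| * (N ^ (κ - τ) * N ^ (-ε))))) := by gcongr
    _ = (N ^ (-(κ - τ)) * N ^ (κ - τ)) * (((1 / 8) ^ (-(κ - τ)) *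
      ((Cw ^ 2) ^ κ * (Cw * 2 ^ |κ - τ - ε|))) * N ^ (-ε)) := by ring
    _ = _ := by rw [h5, one_mul]

theorem annulus_cover (d : ℕ) : ∃ t : Finset (EuclideanSpace ℝ (Fin d)),
    (∀ c ∈ t, 1 ≤ ‖c‖ ∧ ‖c‖ ≤ 2) ∧
    ∀ (j : ℕ) (x : EuclideanSpace ℝ (Fin d)), (2 : ℝ) ^ j ≤ ‖x‖ → ‖x‖ ≤ (2 : ℝ) ^ (j + 1) →
      ∃ c ∈ t, x ∈ Metric.ball ((2:ℝ) ^ j • c) ((2:ℝ) ^ j * (1 / 8)) := by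
  have hc : IsCompact {x : EuclideanSpace ℝ (Fin d) | 1 ≤ ‖x‖ ∧ ‖x‖ ≤ 2} := by
    refine (isCompact_closedBall (0 : EuclideanSpace ℝ (Fin d)) 2).of_isClosed_subset ?_ ?_
    · exact (isClosed_le continuous_const continuous_norm).inter
        (isClosed_le continuous_norm continuous_const)
    · intro x hx; simpa using hx.2
  obtain ⟨t, ht, hcov⟩ := hc.elim_nhds_subcover (fun x => Metric.ball x (1 / 8))
    (fun x _ => Metric.ball_mem_nhds x (by norm_num))
  refine ⟨t, ht, fun j x h1 h2 => ?_⟩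
  have hp : (0:ℝ) < 2 ^ j := by positivity
  have hn : ‖((2:ℝ) ^ j)⁻¹ • x‖ = ‖x‖ / 2 ^ j := by
    rw [norm_smul, Real.norm_of_nonneg (by positivity)]; field_simp
  have hmem : ((2:ℝ) ^ j)⁻¹ • x ∈ {x : EuclideanSpace ℝ (Fin d) | 1 ≤ ‖x‖ ∧ ‖x‖ ≤ 2} := by
    simp only [Set.mem_setOf_eq, hn]
    rw [le_div_iff₀ hp, div_le_iff₀ hp]
    rw [pow_succ] at h2
    exact ⟨by linarith, by linarith⟩
  have := hcov hmem
  simp only [Set.mem_iUnion] at this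
  obtain ⟨c, hct, hcx⟩ := this
  refine ⟨c, hct, ?_⟩
  rw [Metric.mem_ball, dist_eq_norm] at hcx ⊢
  have e : x - (2:ℝ) ^ j • c = (2:ℝ) ^ j • (((2:ℝ) ^ j)⁻¹ • x - c) := by
    rw [smul_sub, smul_inv_smul₀ hp.ne']
  rw [e, norm_smul, Real.norm_of_nonneg hp.le]
  gcongr

theorem ball_range {d : ℕ} (c : EuclideanSpace ℝ (Fin d)) (h1 : 1 ≤ ‖c‖) (h2 : ‖c‖ ≤ 2) (j : ℕ)
    (x) (hx : x ∈ Metric.ball ((2:ℝ) ^ j • c) (2 * ((2:ℝ) ^ j * (1 / 8)))) :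
    (2:ℝ) ^ j * (‖c‖ - 1 / 4) < ‖x‖ ∧ ‖x‖ < (2:ℝ) ^ j * (‖c‖ + 1 / 4) := by
  have hp : (0:ℝ) < 2 ^ j := by positivity
  rw [Metric.mem_ball, dist_eq_norm] at hx
  have e : ‖(2:ℝ) ^ j • c‖ = 2 ^ j * ‖c‖ := by rw [norm_smul, Real.norm_of_nonneg hp.le]
  have a1 := norm_sub_norm_le x ((2:ℝ) ^ j • c)
  have a2 := norm_sub_norm_le ((2:ℝ) ^ j • c) x
  rw [norm_sub_rev] at a2
  rw [e] at a1 a2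
  constructor <;> linarith

theorem balls_disjoint {d : ℕ} (c : EuclideanSpace ℝ (Fin d)) (h1 : 1 ≤ ‖c‖) (h2 : ‖c‖ ≤ 2) :
    Pairwise (Function.onFun Disjoint fun j : ℕ =>
      Metric.ball ((2:ℝ) ^ j • c) (2 * ((2:ℝ) ^ j * (1 / 8)))) := by
  have aux : ∀ j l : ℕ, j < l → Disjoint (Metric.ball ((2:ℝ) ^ j • c) (2 * ((2:ℝ) ^ j * (1 / 8))))
      (Metric.ball ((2:ℝ) ^ l • c) (2 * ((2:ℝ) ^ l * (1 / 8)))) := by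
    intro j l hjl
    rw [Set.disjoint_left]
    intro x hx hy
    have a := (ball_range c h1 h2 j x hx).2
    have b := (ball_range c h1 h2 l x hy).1
    have e : (2:ℝ) ^ j * 2 ≤ 2 ^ l := by
      rw [← pow_succ]; exact pow_le_pow_right₀ (by norm_num) hjl
    have hp : (0:ℝ) < 2 ^ j := by positivity
    nlinarith
  intro j l hjl
  rcases lt_or_gt_of_ne hjl with h | h
  · exact aux j l h
  · exact (aux l j h).symm

theorem cover_lintegral {α ι : Type*} [MeasurableSpace α] (μ : Measure α) (F : α → ℝ≥0∞) (B : Set α)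
    (t : Finset ι) (U : ι → ℕ → Set α) (h : ∀ x, x ∈ B ∨ ∃ c ∈ t, ∃ j, x ∈ U c j) :
    ∫⁻ x, F x ∂μ ≤ ∫⁻ x in B, F x ∂μ + ∑ c ∈ t, ∑' j, ∫⁻ x in U c j, F x ∂μ := by
  have hu : Set.univ ⊆ B ∪ ⋃ c : t, ⋃ j, U c j := by
    intro x _
    rcases h x with h | ⟨c, hc, j, hj⟩
    · exact Or.inl h
    · exact Or.inr (Set.mem_iUnion.2 ⟨⟨c, hc⟩, Set.mem_iUnion.2 ⟨j, hj⟩⟩)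
  calc ∫⁻ x, F x ∂μ = ∫⁻ x in Set.univ, F x ∂μ := by simp
    _ ≤ ∫⁻ x in B ∪ ⋃ c : t, ⋃ j, U c j, F x ∂μ := lintegral_mono_set hu
    _ ≤ ∫⁻ x in B, F x ∂μ + ∫⁻ x in ⋃ c : t, ⋃ j, U c j, F x ∂μ := lintegral_union_le _ _ _
    _ ≤ ∫⁻ x in B, F x ∂μ + ∑' c : t, ∑' j, ∫⁻ x in U c j, F x ∂μ := by
        gcongr
        refine (lintegral_iUnion_le _ _).trans (ENNReal.tsum_le_tsum fun c => lintegral_iUnion_le _ _)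
    _ = _ := by
        rw [tsum_fintype, Finset.sum_coe_sort t (fun c => ∑' j, ∫⁻ x in U c j, F x ∂μ)]

theorem geom_fin (L ε r : ℝ) (hL : 0 ≤ L) (hε : 0 < ε) (hr : 0 < r) :
    ∑' j : ℕ, ENNReal.ofReal (L * ((2:ℝ) ^ j) ^ (-ε)) ^ r ≠ ∞ := by
  have e : ∀ j : ℕ, ENNReal.ofReal (L * ((2:ℝ) ^ j) ^ (-ε)) ^ r =
      ENNReal.ofReal L ^ r * ENNReal.ofReal (2 ^ (-ε * r)) ^ j := by
    intro j
    rw [ENNReal.ofReal_mul hL, ENNReal.mul_rpow_of_nonneg _ _ hr.le,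
      ENNReal.ofReal_rpow_of_pos (by positivity : (0:ℝ) < ((2:ℝ) ^ j) ^ (-ε)),
      ← ENNReal.ofReal_pow (by positivity)]
    congr 2
    rw [← Real.rpow_natCast 2 j, ← Real.rpow_natCast (2 ^ (-ε * r)) j,
      ← Real.rpow_mul (by norm_num),
      ← Real.rpow_mul (by norm_num), ← Real.rpow_mul (by norm_num)]
    ring_nf
  simp only [e]
  rw [ENNReal.tsum_mul_left, ENNReal.tsum_geometric]
  refine ENNReal.mul_ne_top (ENNReal.rpow_ne_top_of_nonneg hr.le ENNReal.ofReal_ne_top) ?_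
  rw [ENNReal.inv_ne_top]
  have : ENNReal.ofReal (2 ^ (-ε * r)) < 1 := by
    rw [ENNReal.ofReal_lt_one]
    exact Real.rpow_lt_one_of_one_lt_of_neg (by norm_num) (by nlinarith)
  exact (tsub_pos_of_lt this).ne'

theorem weighted (d i m : ℕ) (hd : 1 ≤ d) (hi : 1 ≤ i) (hm : 1 ≤ m)
    (P Q R θ Cw ε : ℝ) (hP : 0 ≤ P) (hQ : 0 ≤ Q) (hP1 : P ≤ 1) (hQ1 : Q ≤ 1) (hR0 : 0 < R)
    (hR1 : R ≤ 1) (hθl : (i:ℝ) / m ≤ θ) (hθu : θ < 1) (hCw : 1 ≤ Cw) (hε : 0 < ε)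
    (hR : R = (i:ℝ) / d + θ * (Q - (m:ℝ) / d) + (1 - θ) * P) :
    ∃ D : ℝ≥0∞, D ≠ ∞ ∧
      ∀ (f φ ψ : EuclideanSpace ℝ (Fin d) → ℝ) (φv ψv : ℕ → ℝ),
        ContDiff ℝ (⊤ : ℕ∞) f →
        (∀ x, 0 ≤ φ x) → (∀ x, 0 ≤ ψ x) →
        φv 0 = 1 → φv 1 = 1 → ψv 0 = 1 → ψv 1 = 1 →
        (∀ x : EuclideanSpace ℝ (Fin d), ‖x‖ ≤ 1 →
          φ x ∈ Set.Icc (φv 0 / Cw) (Cw * φv 0) ∧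
          ψ x ∈ Set.Icc (ψv 0 / Cw) (Cw * ψv 0)) →
        (∀ (j : ℕ) (x : EuclideanSpace ℝ (Fin d)),
          (2 : ℝ) ^ j ≤ ‖x‖ → ‖x‖ ≤ (2 : ℝ) ^ (j + 1) →
          φ x ∈ Set.Icc (φv (j + 1) / Cw) (Cw * φv (j + 1)) ∧
          ψ x ∈ Set.Icc (ψv (j + 1) / Cw) (Cw * ψv (j + 1))) →
        (∀ x : EuclideanSpace ℝ (Fin d),
          (φ x / (Real.sqrt (1 + ‖x‖ ^ 2) * ψ x)) ^ ((m : ℝ) * θ) *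
              Real.sqrt (1 + ‖x‖ ^ 2) ^ ((d : ℝ) * θ * (Q - P))
            ≤ Cw * Real.sqrt (1 + ‖x‖ ^ 2) ^ (-ε)) →
        eLpNorm (fun x => ψ x ^ ((m : ℝ) * (1 - θ)) * φ x ^ ((m : ℝ) * θ) *
            ‖iteratedFDeriv ℝ i f x‖) (lpx R) volume ≤
          D * ((eLpNorm (fun x => ψ x ^ m * f x) (lpx P) volume) ^ (1 - θ) *
                (eLpNorm (fun x => φ x ^ m * ‖iteratedFDeriv ℝ m f x‖) (lpx Q) volume) ^ θ
              + eLpNorm (fun x => ψ x ^ m * f x) (lpx P) volume) := by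
  have hm0 : (0:ℝ) < m := by exact_mod_cast hm
  have hd0 : (0:ℝ) < d := by exact_mod_cast hd
  have hC0 : 0 < Cw := by linarith
  have hθ0 : 0 < θ := lt_of_lt_of_le (div_pos (by exact_mod_cast hi) hm0) hθl
  have h1θ : 0 < 1 - θ := by linarith
  obtain ⟨C, hC, hloc⟩ := localGN d hd i m hi hm P Q R θ hP hQ hP1 hQ1 hR0 hθl hθu hR
  obtain ⟨t, ht, hcov⟩ := annulus_cover d
  set κ : ℝ := m * θ with hκ
  set τ : ℝ := d * θ * (Q - P) with hτ
  have hκ0 : 0 ≤ κ := by positivity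
  set L : ℝ := (1 / 8) ^ (-(κ - τ)) * ((Cw ^ 2) ^ κ * (Cw * 2 ^ |κ - τ - ε|)) with hL
  have hL0 : 0 ≤ L := by positivity
  set M : ℝ≥0∞ := C * ENNReal.ofReal ((Cw ^ 3) ^ (2 * m)) with hM
  have hMf : M ≠ ∞ := ENNReal.mul_ne_top hC ENNReal.ofReal_ne_top
  set r : ℝ := 1 / R with hr
  have hr0 : 0 < r := by positivity
  have hr1 : 1 ≤ r := by rw [hr, le_div_iff₀ hR0]; linarith
  have hRr : R * r = 1 := by rw [hr]; field_simp
  set S : ℝ≥0∞ := ∑' j : ℕ, ENNReal.ofReal (L * ((2:ℝ) ^ j) ^ (-ε)) ^ r with hS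
  have hSf : S ≠ ∞ := geom_fin L ε r hL0 hε hr0
  set D : ℝ≥0∞ := M ^ r + t.card * (M ^ r * 2 ^ (r - 1) * (1 + S)) with hD
  have hMr : M ^ r ≠ ∞ := ENNReal.rpow_ne_top_of_nonneg hr0.le hMf
  have h2r : (2:ℝ≥0∞) ^ (r - 1) ≠ ∞ := ENNReal.rpow_ne_top_of_nonneg (by linarith) (by simp)
  have hDf : D ≠ ∞ := by
    rw [hD]; finiteness
  refine ⟨D ^ R, ENNReal.rpow_ne_top_of_nonneg hR0.le hDf, ?_⟩
  intro f φ ψ φv ψv hf hφ0 hψ0 a0 a1 b0 b1 hz hann hdec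
  have hadjφ := adj hd Cw hCw φ φv a0 a1 (fun j x h1 h2 => (hann j x h1 h2).1)
  have hadjψ := adj hd Cw hCw ψ ψv b0 b1 (fun j x h1 h2 => (hann j x h1 h2).2)
  have hrφ := range_wt hd Cw hCw φ φv a0 a1 (fun x h => (hz x h).1)
    (fun j x h1 h2 => (hann j x h1 h2).1)
  have hrψ := range_wt hd Cw hCw ψ ψv b0 b1 (fun x h => (hz x h).2)
    (fun j x h1 h2 => (hann j x h1 h2).2)
  set g0 : EuclideanSpace ℝ (Fin d) → ℝ := fun x => ψ x ^ m * f x with hg0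
  set gm : EuclideanSpace ℝ (Fin d) → ℝ := fun x => φ x ^ m * ‖iteratedFDeriv ℝ m f x‖ with hgm
  set gi : EuclideanSpace ℝ (Fin d) → ℝ := fun x => ψ x ^ ((m : ℝ) * (1 - θ)) * φ x ^ κ *
            ‖iteratedFDeriv ℝ i f x‖ with hgi
  set X := eLpNorm g0 (lpx P) volume with hX
  set Y := eLpNorm gm (lpx Q) volume with hY
  set T := X ^ (1 - θ) * Y ^ θ + X with hT
  have hK1 : 1 ≤ Cw ^ 3 := one_le_pow₀ hCw
  have hI : ∀ U : Set (EuclideanSpace ℝ (Fin d)), ∫⁻ x in U, ‖gi x‖ₑ ^ r =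
      eLpNorm gi (lpx R) (volume.restrict U) ^ r := by
    intro U
    rw [nm_pos _ hR0, ← ENNReal.rpow_mul, hRr, ENNReal.rpow_one]
  have hmono0 : ∀ V : Set (EuclideanSpace ℝ (Fin d)),
      eLpNorm g0 (lpx P) (volume.restrict V) ≤ X := fun V =>
    eLpNorm_mono_measure _ Measure.restrict_le_self
  have hmonom : ∀ V : Set (EuclideanSpace ℝ (Fin d)),
      eLpNorm gm (lpx Q) (volume.restrict V) ≤ Y := fun V =>
    eLpNorm_mono_measure _ Measure.restrict_le_self
  -- the central cell
  have hcen : eLpNorm gi (lpx R) (volume.restrict (Metric.ball 0 1)) ≤ M * T := by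
    have h1 := hloc f hf 0 1 one_pos
    rw [mul_one, Real.one_rpow] at h1
    have hw : ∀ (w : EuclideanSpace ℝ (Fin d) → ℝ),
        (∀ x : EuclideanSpace ℝ (Fin d), ‖x‖ ≤ 1 → w x ∈ Set.Icc (1 / Cw) (Cw * 1)) →
        (∀ x : EuclideanSpace ℝ (Fin d), 1 ≤ ‖x‖ → ‖x‖ ≤ 2 → w x ∈ Set.Icc (1 / Cw) (Cw * 1)) →
        ∀ x ∈ Metric.ball (0 : EuclideanSpace ℝ (Fin d)) 2,
          1 / Cw ^ 3 ≤ w x ∧ w x ≤ Cw ^ 3 * 1 := by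
      intro w hw1 hw2 x hx
      have hx' : ‖x‖ ≤ 2 := by simpa using (Metric.mem_ball.1 hx).le
      have hwx : w x ∈ Set.Icc (1 / Cw) (Cw * 1) := by
        rcases le_total ‖x‖ 1 with h | h
        · exact hw1 x h
        · exact hw2 x h hx'
      have hC3 : Cw ≤ Cw ^ 3 := le_self_pow₀ hCw (by norm_num)
      refine ⟨le_trans ?_ hwx.1, hwx.2.trans ?_⟩
      · gcongr
      · gcongr
    have := cell i m P Q R θ (Cw ^ 3) 1 1 1 1 C hθ0 hθu hK1 one_pos one_pos zero_le_one
      (by simp) f φ ψ (Metric.ball 0 1) (Metric.ball 0 2) measurableSet_ball measurableSet_ball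
      (Metric.ball_subset_ball (by norm_num))
      (hw φ (fun x h => by simpa only [a0] using (hz x h).1)
        (fun x h h' => by simpa only [zero_add, a1] using (hann 0 x (by simpa using h) (by simpa using h')).1))
      (hw ψ (fun x h => by simpa only [b0] using (hz x h).2)
        (fun x h h' => by simpa only [zero_add, b1] using (hann 0 x (by simpa using h) (by simpa using h')).2))
      h1
    refine this.trans ?_
    rw [ENNReal.ofReal_one, one_mul]
    refine mul_le_mul_right ?_ _
    rw [hT]
    gcongr
    · exact hmono0 _
    · exact hmonom _
    · exact hmono0 _
  -- the annular cells
  have hcell : ∀ c ∈ t, ∀ j : ℕ, eLpNorm gi (lpx R)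
      (volume.restrict (Metric.ball ((2:ℝ) ^ j • c) ((2:ℝ) ^ j * (1 / 8)))) ≤
      M * (eLpNorm g0 (lpx P) (volume.restrict
          (Metric.ball ((2:ℝ) ^ j • c) (2 * ((2:ℝ) ^ j * (1 / 8))))) ^ (1 - θ) *
        eLpNorm gm (lpx Q) (volume.restrict
          (Metric.ball ((2:ℝ) ^ j • c) (2 * ((2:ℝ) ^ j * (1 / 8))))) ^ θ +
        ENNReal.ofReal (L * ((2:ℝ) ^ j) ^ (-ε)) * X) := by
    intro c hc j
    have hp : (0:ℝ) < 2 ^ j := by positivity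
    have h1 := hloc f hf ((2:ℝ) ^ j • c) ((2:ℝ) ^ j * (1 / 8)) (by positivity)
    have hα := (hadjφ (j + 1)).1
    have hβ := (hadjψ (j + 1)).1
    have hrange : ∀ x ∈ Metric.ball ((2:ℝ) ^ j • c) (2 * ((2:ℝ) ^ j * (1 / 8))),
        (2:ℝ) ^ j * (3/4) ≤ ‖x‖ ∧ ‖x‖ ≤ (2:ℝ) ^ j * (9/4) := by
      intro x hx
      have h := ball_range c (ht c hc).1 (ht c hc).2 j x hx
      have := (ht c hc).1
      have := (ht c hc).2
      constructor
      · nlinarith [h.1]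
      · nlinarith [h.2]
    have hst : ((2:ℝ) ^ j * (1 / 8)) ^ (-(κ - τ)) * (φv (j + 1) / ψv (j + 1)) ^ κ ≤
        L * ((2:ℝ) ^ j) ^ (-ε) := by
      obtain ⟨x, hx⟩ := sphere_pt hd ((2:ℝ) ^ j) hp.le
      have hx2 := hann j x hx.ge (by rw [hx]; gcongr <;> simp)
      have hone : (1:ℝ) ≤ 2 ^ j := one_le_pow₀ (by norm_num)
      refine decay_real κ τ ε Cw ((2:ℝ) ^ j) (Real.sqrt (1 + ‖x‖ ^ 2)) (φ x) (ψ x) _ _ hκ0 hCw hp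
        ?_ ?_ (hφ0 x) (lt_of_lt_of_le (by positivity) hx2.2.1) hα hβ hx2.1.1 hx2.2.2 (hdec x)
      · rw [hx]; exact Real.le_sqrt_of_sq_le (by linarith)
      · rw [hx, Real.sqrt_le_left (by positivity)]; nlinarith
    have := cell i m P Q R θ (Cw ^ 3) (φv (j + 1)) (ψv (j + 1)) _ _ C hθ0 hθu hK1 hα hβ
      (by positivity) hst f φ ψ _ _ measurableSet_ball measurableSet_ball
      (Metric.ball_subset_ball (by linarith))
      (fun x hx => hrφ j x (hrange x hx).1 (hrange x hx).2)
      (fun x hx => hrψ j x (hrange x hx).1 (hrange x hx).2) h1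
    refine this.trans (mul_le_mul_right (add_le_add_right (mul_le_mul_right (hmono0 _) _) _) _)
  have hexp : 1 ≤ P * (1 - θ) * r + Q * θ * r := by
    have : R ≤ P * (1 - θ) + Q * θ := by
      rw [div_le_iff₀ hm0] at hθl
      have h3 : (i:ℝ) / d ≤ θ * (m / d) := by
        rw [← mul_div_assoc]; gcongr
      rw [hR]; linarith
    calc 1 = R * r := hRr.symm
      _ ≤ (P * (1 - θ) + Q * θ) * r := by gcongr
      _ = _ := by ring
  have hXT : X ≤ T := le_add_self
  have hsum : ∀ c ∈ t, ∑' j : ℕ,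
      ∫⁻ x in Metric.ball ((2:ℝ) ^ j • c) ((2:ℝ) ^ j * (1 / 8)), ‖gi x‖ₑ ^ r ≤
      M ^ r * 2 ^ (r - 1) * (1 + S) * T ^ r := by
    intro c hc
    set V : ℕ → Set (EuclideanSpace ℝ (Fin d)) := fun j =>
      Metric.ball ((2:ℝ) ^ j • c) (2 * ((2:ℝ) ^ j * (1 / 8))) with hV
    have hs := sum_cells volume g0 gm V (fun j => measurableSet_ball)
      (balls_disjoint c (ht c hc).1 (ht c hc).2) P Q r θ hP hQ hr0 hθ0 hθu hexp
    calc _ ≤ ∑' j : ℕ, M ^ r * (2 ^ (r - 1) * ((eLpNorm g0 (lpx P) (volume.restrict (V j)) ^ (1 - θ) *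
          eLpNorm gm (lpx Q) (volume.restrict (V j)) ^ θ) ^ r +
          ENNReal.ofReal (L * ((2:ℝ) ^ j) ^ (-ε)) ^ r * X ^ r)) := by
          refine ENNReal.tsum_le_tsum fun j => ?_
          rw [hI]
          refine (ENNReal.rpow_le_rpow (hcell c hc j) hr0.le).trans ?_
          rw [ENNReal.mul_rpow_of_nonneg _ _ hr0.le]
          refine mul_le_mul_right ?_ _
          rw [← ENNReal.mul_rpow_of_nonneg _ X hr0.le]
          exact ENNReal.rpow_add_le_mul_rpow_add_rpow _ _ hr1
      _ = M ^ r * (2 ^ (r - 1) * ((∑' j : ℕ, (eLpNorm g0 (lpx P) (volume.restrict (V j)) ^ (1 - θ) *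
          eLpNorm gm (lpx Q) (volume.restrict (V j)) ^ θ) ^ r) + S * X ^ r)) := by
          rw [ENNReal.tsum_mul_left, ENNReal.tsum_mul_left, ENNReal.tsum_add, ENNReal.tsum_mul_right]
      _ ≤ M ^ r * (2 ^ (r - 1) * (T ^ r + S * T ^ r)) := by
          gcongr
          exact hs.trans (ENNReal.rpow_le_rpow le_self_add hr0.le)
      _ = _ := by ring
  have htot : ∫⁻ x, ‖gi x‖ₑ ^ r ≤ D * T ^ r := by
    refine (cover_lintegral volume (fun x => ‖gi x‖ₑ ^ r) (Metric.ball 0 1) t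
      (fun c j => Metric.ball ((2:ℝ) ^ j • c) ((2:ℝ) ^ j * (1 / 8))) ?_).trans ?_
    · intro x
      rcases lt_or_ge ‖x‖ 1 with h | h
      · left; simpa using h
      · right
        obtain ⟨j, h1, h2⟩ := exists_nat_pow_near h (one_lt_two)
        obtain ⟨c, hc, hcx⟩ := hcov j x h1 h2.le
        exact ⟨c, hc, j, hcx⟩
    · calc _ ≤ M ^ r * T ^ r + ∑ c ∈ t, M ^ r * 2 ^ (r - 1) * (1 + S) * T ^ r := by
            refine add_le_add ?_ (Finset.sum_le_sum hsum)
            rw [hI, ← ENNReal.mul_rpow_of_nonneg _ _ hr0.le]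
            exact ENNReal.rpow_le_rpow hcen hr0.le
        _ = _ := by
            rw [Finset.sum_const, nsmul_eq_mul, hD]; ring
  rw [nm_pos _ hR0]
  refine (ENNReal.rpow_le_rpow htot hR0.le).trans (le_of_eq ?_)
  rw [ENNReal.mul_rpow_of_nonneg _ _ hR0.le, ← ENNReal.rpow_mul, mul_comm r R, hRr, ENNReal.rpow_one]

theorem lpx_toReal (p : ℝ≥0∞) (hp : 1 ≤ p) : p = lpx (1 / p).toReal := by
  have : p⁻¹ ≠ ∞ := by
    rw [ENNReal.inv_ne_top]; exact (zero_lt_one.trans_le hp).ne'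
  rw [lpx, one_div, ENNReal.ofReal_toReal this, inv_inv]

theorem toReal_le_one (p : ℝ≥0∞) (hp : 1 ≤ p) : (1 / p).toReal ≤ 1 := by
  have : 1 / p ≤ 1 := by rw [one_div]; exact ENNReal.inv_le_one.2 hp
  simpa using ENNReal.toReal_mono ENNReal.one_ne_top this


/-- weighted Gagliardo–Nirenberg interpolation inequality on `ℝ^d`, with weights
`φ, ψ` comparable to constants `φ_j, ψ_j` on each dyadic annulus (with the index `j = −1`
corresponding to index `0` of the sequences `φv, ψv`, and `j ≥ 0` to index `j + 1`).
The constant `C′` depends only on `d, p, q, i, m, θ, C, ε` and not on `f, φ, ψ`. -/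
theorem stmt5 (d i m : ℕ) (hd : 1 ≤ d) (hi : 1 ≤ i) (him : i ≤ m)
    (p q : ℝ≥0∞) (hp : 1 ≤ p) (hq : 1 ≤ q)
    (rb θ Cw ε : ℝ) (hrb : 1 ≤ rb) (hθl : (i : ℝ) / m ≤ θ) (hθu : θ < 1)
    (hCw : 1 ≤ Cw) (hε : 0 < ε)
    (hrel : 1 / rb = (i : ℝ) / d + θ * ((1 / q).toReal - (m : ℝ) / d)
      + (1 - θ) * (1 / p).toReal) :
    ∃ C' : ℝ, 0 < C' ∧
      ∀ (f φ ψ : EuclideanSpace ℝ (Fin d) → ℝ) (φv ψv : ℕ → ℝ),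
        ContDiff ℝ (⊤ : ℕ∞) f → HasCompactSupport f →
        (∀ x, 0 ≤ φ x) → (∀ x, 0 ≤ ψ x) →
        φv 0 = 1 → φv 1 = 1 → ψv 0 = 1 → ψv 1 = 1 →
        (∀ x : EuclideanSpace ℝ (Fin d), ‖x‖ ≤ 1 →
          φ x ∈ Set.Icc (φv 0 / Cw) (Cw * φv 0) ∧
          ψ x ∈ Set.Icc (ψv 0 / Cw) (Cw * ψv 0)) →
        (∀ (j : ℕ) (x : EuclideanSpace ℝ (Fin d)),
          (2 : ℝ) ^ j ≤ ‖x‖ → ‖x‖ ≤ (2 : ℝ) ^ (j + 1) →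
          φ x ∈ Set.Icc (φv (j + 1) / Cw) (Cw * φv (j + 1)) ∧
          ψ x ∈ Set.Icc (ψv (j + 1) / Cw) (Cw * ψv (j + 1))) →
        (∀ x : EuclideanSpace ℝ (Fin d),
          (φ x / (Real.sqrt (1 + ‖x‖ ^ 2) * ψ x)) ^ ((m : ℝ) * θ) *
              Real.sqrt (1 + ‖x‖ ^ 2) ^ ((d : ℝ) * θ * ((1 / q).toReal - (1 / p).toReal))
            ≤ Cw * Real.sqrt (1 + ‖x‖ ^ 2) ^ (-ε)) →
        eLpNorm (fun x => ψ x ^ ((m : ℝ) * (1 - θ)) * φ x ^ ((m : ℝ) * θ) *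
            ‖iteratedFDeriv ℝ i f x‖) (ENNReal.ofReal rb) volume ≤
          ENNReal.ofReal C' *
            ((eLpNorm (fun x => ψ x ^ m * f x) p volume) ^ (1 - θ) *
                (eLpNorm (fun x => φ x ^ m * ‖iteratedFDeriv ℝ m f x‖) q volume) ^ θ
              + eLpNorm (fun x => ψ x ^ m * f x) p volume) := by
  have hrb0 : 0 < rb := by linarith
  have hr : ENNReal.ofReal rb = lpx (1 / rb) := by
    rw [lpx, one_div, ENNReal.ofReal_inv_of_pos hrb0, inv_inv]
  obtain ⟨D, hD, h⟩ := weighted d i m hd hi (hi.trans him) (1 / p).toReal (1 / q).toReal (1 / rb) θ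
    Cw ε ENNReal.toReal_nonneg ENNReal.toReal_nonneg (toReal_le_one p hp) (toReal_le_one q hq)
    (by positivity) (by rw [div_le_one hrb0]; exact hrb) hθl hθu hCw hε hrel
  refine ⟨D.toReal + 1, by positivity, ?_⟩
  intro f φ ψ φv ψv hf _ hφ0 hψ0 a0 a1 b0 b1 hz hann hdec
  have := h f φ ψ φv ψv hf hφ0 hψ0 a0 a1 b0 b1 hz hann hdec
  rw [← hr, ← lpx_toReal p hp, ← lpx_toReal q hq] at this
  refine this.trans (mul_le_mul_left ?_ _)
  rw [ENNReal.le_ofReal_iff_toReal_le hD (by positivity)]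
  linarith
end
end
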